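/- arXiv:1706.01645 — 7 statements merged into one kernel-verified Lean document; each statement's English description precedes it below -/
import Mathlib

section
/- Let p be a prime, let X be a set with 2p elements, and let N be the number of orbits of the conjugation action of the symmetric group Sym(X) on the collection of all subsets T ⊆ Sym(X) that contain the identity, are sharply transitive, and are closed under conjugation by their own elements. Then (p−1)·N = (p−1)·(p−2) + (p−1)·I_{p−1} + Σ_{d=1}^{p−1} I_{p−1,d}; equivalently, the number of isomorphism classes of RCC loops of order 2p (including groups) equals p − 2 + I_{p−1} + (1/(p−1))·Σ_{d=1}^{p−1} I_{p−1,d}. -/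
open Pointwise
/-- The standard `n`-cycle `x ↦ x + 1` on `ℤ/nℤ`. -/
def stdCycle (n : ℕ) : Equiv.Perm (ZMod n) := Equiv.addRight (1 : ZMod n)

/-- `I_{n,d}`: the number of `τ ∈ S_n` with `τ² = 1` commuting with `ζ^d`, where `ζ` is the
standard `n`-cycle (one more than the number of involutions in the centralizer of `ζ^d`). -/
noncomputable def Icd (n d : ℕ) : ℕ :=
  Nat.card {τ : Equiv.Perm (ZMod n) // τ ^ 2 = 1 ∧ Commute τ (stdCycle n ^ d)}

open Equiv (Perm)

def RCC {X : Type*} (T : Set (Perm X)) : Prop :=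
  (1 : Perm X) ∈ T ∧ (∀ i j : X, ∃! t, t ∈ T ∧ t i = j) ∧ (∀ s ∈ T, ∀ t ∈ T, t⁻¹ * s * t ∈ T)

section basics
variable {X : Type*} {T : Set (Perm X)}

lemma RCC.eq_of_apply (h : RCC T) {s t : Perm X} (hs : s ∈ T) (ht : t ∈ T) {x : X}
    (e : s x = t x) : s = t :=
  (h.2.1 x (t x)).unique ⟨hs, e⟩ ⟨ht, rfl⟩

lemma RCC.exists_apply (h : RCC T) (x y : X) : ∃ t ∈ T, t x = y := by
  obtain ⟨t, ⟨h1, h2⟩, -⟩ := h.2.1 x y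
  exact ⟨t, h1, h2⟩

lemma RCC.conj [Finite X] (h : RCC T) {g : Perm X} (hg : g ∈ Subgroup.closure T) :
    ∀ s ∈ T, g * s * g⁻¹ ∈ T := by
  have key : ∀ g : Perm X, (∀ s ∈ T, g⁻¹ * s * g ∈ T) → (∀ s ∈ T, g * s * g⁻¹ ∈ T) := by
    intro g hg s hs
    have hi : Function.Injective (fun s : T => (⟨g⁻¹ * s * g, hg s s.2⟩ : T)) := by
      rintro ⟨a, ha⟩ ⟨b, hb⟩ hab
      simpa using hab
    obtain ⟨⟨a, ha⟩, hab⟩ := (Finite.injective_iff_surjective.1 hi) ⟨s, hs⟩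
    have : g⁻¹ * a * g = s := congrArg Subtype.val hab
    have h2 : g * s * g⁻¹ = a := by rw [← this]; group
    rw [h2]; exact ha
  induction hg using Subgroup.closure_induction with
  | mem x hx => exact key x (fun s hs => h.2.2 s hs x hx)
  | one => simp
  | mul x y hx hy ihx ihy =>
    intro s hs
    have := ihx _ (ihy s hs)
    simpa [mul_assoc] using this
  | inv x hx ih =>
    apply key
    simpa using ih

/-- elements of T mapping `x` into `O` are in bijection with `O`. -/
lemma RCC.ncard_mapsto (h : RCC T) (x : X) (O : Set X) :
    {t ∈ T | t x ∈ O}.ncard = O.ncard := by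
  apply Set.ncard_congr (fun t _ => t x)
  · intro t ht; exact ht.2
  · intro s t hs ht e; exact h.eq_of_apply hs.1 ht.1 e
  · intro y hy
    obtain ⟨t, ht, e⟩ := h.exists_apply x y
    exact ⟨t, ⟨ht, by rw [e]; exact hy⟩, e⟩

lemma RCC.ncard [Fintype X] [Nonempty X] (h : RCC T) : T.ncard = Fintype.card X := by
  have := h.ncard_mapsto (Classical.arbitrary X) Set.univ
  simpa [Set.ncard_univ] using this

/-- Key lemma -/
lemma RCC.block_of_card [Finite X] (h : RCC T) {O : Set X}
    (hp : O.ncard ≤ {t ∈ T | ∀ x ∈ O, t x ∈ O}.ncard) :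
    ∀ t ∈ T, (∀ x ∈ O, t x ∈ O) ∨ (∀ x ∈ O, t x ∉ O) := by
  intro t ht
  by_contra hc
  push Not at hc
  obtain ⟨h1, ⟨x, hx, hx'⟩⟩ := hc
  have hsub : {t ∈ T | ∀ x ∈ O, t x ∈ O} ⊆ {t ∈ T | t x ∈ O} := fun s hs => ⟨hs.1, hs.2 x hx⟩
  have := Set.eq_of_subset_of_ncard_le hsub (by rw [h.ncard_mapsto]; exact hp) (Set.toFinite _)
  have h2 : t ∈ {t ∈ T | ∀ x ∈ O, t x ∈ O} := by rw [this]; exact ⟨ht, hx'⟩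
  obtain ⟨y, hy, hy'⟩ := h1
  exact hy' (h2.2 y hy)

lemma fix_modEq {Y : Type*} [Finite Y] (p : ℕ) (hp : p.Prime) (f : Perm Y) (hf : f ^ p = 1) :
    Nat.card Y ≡ Nat.card {y // f y = y} [MOD p] := by
  classical
  have := Fact.mk hp
  have := Fintype.ofFinite Y
  have hc := Equiv.Perm.card_compl_support_modEq (σ := f) (p := p) (n := 1) (by simpa using hf)
  rw [Nat.card_eq_fintype_card, Nat.card_eq_fintype_card]
  refine hc.symm.trans ?_
  rw [Fintype.card_subtype]
  have : f.supportᶜ = Finset.univ.filter (fun y => f y = y) := by ext y; simp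
  rw [this]

lemma comm_modEq [Finite X] (p : ℕ) (hp : p.Prime) (g : Perm X) (hg : g ^ p = 1)
    (hT : ∀ s ∈ T, g * s * g⁻¹ ∈ T) :
    T.ncard ≡ {t ∈ T | g * t = t * g}.ncard [MOD p] := by
  have hT' : ∀ s ∈ T, g⁻¹ * s * g ∈ T := by
    have : ∀ n : ℕ, ∀ s ∈ T, g ^ n * s * (g ^ n)⁻¹ ∈ T := by
      intro n
      induction n with
      | zero => simp
      | succ n ih =>
        intro s hs
        have := ih _ (hT s hs)
        rw [pow_succ, mul_inv_rev]
        simpa only [mul_assoc] using this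
    intro s hs
    have h2 := this (p - 1) s hs
    have h3 : g ^ (p - 1) = g⁻¹ := by
      rw [eq_inv_iff_mul_eq_one, ← pow_succ, Nat.sub_add_cancel hp.one_le, hg]
    simpa [h3] using h2
  let φ : Perm T := 
    { toFun := fun s => ⟨g * s * g⁻¹, hT s s.2⟩
      invFun := fun s => ⟨g⁻¹ * s * g, hT' s s.2⟩
      left_inv := fun s => by ext1; simp [mul_assoc]
      right_inv := fun s => by ext1; simp [mul_assoc] }
  have hφ : ∀ n : ℕ, ∀ s : T, ((φ ^ n) s : Perm X) = g ^ n * s * (g ^ n)⁻¹ := by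
    intro n
    induction n with
    | zero => simp
    | succ n ih => 
      intro s
      rw [pow_succ, Equiv.Perm.mul_apply, ih, pow_succ, mul_inv_rev]
      simp [φ, mul_assoc]
  have := fix_modEq p hp φ (by ext1 s; ext1; rw [hφ, hg]; simp)
  rw [Nat.card_coe_set_eq] at this
  convert this using 1
  rw [← Nat.card_coe_set_eq]
  apply Nat.card_congr
  refine ⟨fun t => ⟨⟨t, t.2.1⟩, ?_⟩, fun t => ⟨t.1, t.1.2, ?_⟩, fun t => rfl, fun t => rfl⟩
  · ext1; simp only [φ, Equiv.coe_fn_mk]; rw [t.2.2]; simp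
  · have := congrArg Subtype.val t.2
    simp only [φ, Equiv.coe_fn_mk] at this
    exact mul_inv_eq_iff_eq_mul.1 this

end basics

lemma exists_zpow_root {G : Type*} [Group G] {p : ℕ} (hp : p.Prime) {g : G} (hg : g ^ p = 1)
    {n : ℤ} (hn : ¬ (p : ℤ) ∣ n) : ∃ a : ℤ, g = (g ^ n) ^ a := by
  have hc : IsCoprime (p : ℤ) n := (Nat.prime_iff_prime_int.1 hp).coprime_iff_not_dvd.2 hn
  obtain ⟨a, b, hab⟩ := hc
  refine ⟨b, ?_⟩
  rw [← zpow_mul]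
  have : n * b = 1 - p * a := by linarith
  rw [this, zpow_sub, zpow_mul]
  simp [hg]

lemma zpow_eq_one_of_dvd {G : Type*} [Group G] {p : ℕ} {g : G} (hg : g ^ p = 1)
    {n : ℤ} (hn : (p : ℤ) ∣ n) : g ^ n = 1 := by
  obtain ⟨c, rfl⟩ := hn
  rw [zpow_mul]; simp [hg]

def gorb {X : Type*} (g : Perm X) (y : X) : Set X := {x | ∃ j : ℤ, x = (g ^ j) y}

section
variable {X : Type*}

lemma zpow_apply_comm (g h : Perm X) (hc : g * h = h * g) (j : ℤ) (x : X) :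
    h ((g ^ j) x) = (g ^ j) (h x) := by
  have : Commute g h := hc
  have h2 := (this.zpow_left j).eq
  rw [← Equiv.Perm.mul_apply, ← Equiv.Perm.mul_apply, h2]

lemma dvd_of_zpow_fix {p : ℕ} (hp : p.Prime) {g : Perm X} (hg : g ^ p = 1) {x : X} (hx : g x ≠ x)
    {n : ℤ} (h : (g ^ n) x = x) : (p : ℤ) ∣ n := by
  by_contra hn
  obtain ⟨a, ha⟩ := exists_zpow_root hp hg hn
  apply hx
  rw [ha]
  exact Function.IsFixedPt.perm_zpow h a

lemma gorb_self (g : Perm X) (y : X) : y ∈ gorb g y := ⟨0, by simp⟩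

lemma gorb_zpow {g : Perm X} {y x : X} (hx : x ∈ gorb g y) (j : ℤ) : (g ^ j) x ∈ gorb g y := by
  obtain ⟨i, rfl⟩ := hx
  exact ⟨j + i, by rw [zpow_add]; rfl⟩

lemma gorb_zpow_iff {g : Perm X} {y x : X} (j : ℤ) : (g ^ j) x ∈ gorb g y ↔ x ∈ gorb g y := by
  refine ⟨fun h => ?_, fun h => gorb_zpow h j⟩
  have := gorb_zpow h (-j)
  simpa using this

lemma gorb_ncard {p : ℕ} (hp : p.Prime) {g : Perm X} (hg : g ^ p = 1) {y : X} (hy : g y ≠ y) :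
    (gorb g y).ncard = p := by
  have hr : gorb g y = Set.range (fun i : Fin p => (g ^ (i : ℕ)) y) := by
    ext x
    constructor
    · rintro ⟨j, rfl⟩
      have hp0 : (0 : ℤ) < p := by exact_mod_cast hp.pos
      have h1 := Int.emod_nonneg j hp0.ne'
      have h2 := Int.emod_lt_of_pos j hp0
      refine ⟨⟨(j % p).toNat, by omega⟩, ?_⟩
      simp only
      rw [← zpow_natCast, Int.toNat_of_nonneg h1]
      conv_rhs => rw [← Int.emod_add_mul_ediv j p, zpow_add, zpow_mul]
      simp [hg]
    · rintro ⟨i, rfl⟩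
      exact ⟨i, by simp⟩
  rw [hr, ← Set.image_univ, Set.ncard_image_of_injective]
  · simp [Set.ncard_univ]
  · intro i j hij
    simp only at hij
    have : (g ^ ((i : ℤ) - j)) y = y := by
      have h2 : (g ^ (i:ℤ)) y = (g ^ (j:ℤ)) y := by simpa using hij
      rw [sub_eq_neg_add, zpow_add, Equiv.Perm.mul_apply, h2]; simp
    have h3 := dvd_of_zpow_fix hp hg hy this
    have hi := i.2
    have hj := j.2
    ext
    have h4 := Int.eq_zero_of_abs_lt_dvd h3 (by rw [abs_lt]; constructor <;> omega)
    omega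

variable {T : Set (Perm X)}

lemma RCC.exists_order_p [Fintype X] (h : RCC T) {p : ℕ} (hp : p.Prime) (hX : p ∣ Fintype.card X)
    [Nonempty X] :
    ∃ g ∈ Subgroup.closure T, g ≠ 1 ∧ g ^ p = 1 := by
  classical
  have := Fact.mk hp
  let G := Subgroup.closure T
  have htr : MulAction.IsPretransitive G X := ⟨fun x y => by
    obtain ⟨t, ht, e⟩ := h.exists_apply x y
    exact ⟨⟨t, Subgroup.subset_closure ht⟩, e⟩⟩
  have hd : p ∣ Nat.card G := by
    have h1 := MulAction.card_orbit_mul_card_stabilizer_eq_card_group G (Classical.arbitrary X)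
    rw [Nat.card_eq_fintype_card, ← h1]
    apply Dvd.dvd.mul_right
    have : Fintype.card (MulAction.orbit G (Classical.arbitrary X)) = Fintype.card X := by
      rw [← Nat.card_eq_fintype_card, MulAction.orbit_eq_univ]
      simp
    rwa [this]
  obtain ⟨g, hg⟩ := exists_prime_orderOf_dvd_card' p hd
  refine ⟨g, g.2, ?_, ?_⟩
  · intro h1
    have : g = 1 := by ext1; exact h1
    rw [this, orderOf_one] at hg
    exact hp.one_lt.ne hg
  · rw [← hg, ← Subgroup.coe_pow, pow_orderOf_eq_one]; rfl

/-- loops of prime order -/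
lemma RCC.prime [Fintype X] (h : RCC T) {p : ℕ} (hp : p.Prime) (hX : Fintype.card X = p) :
    ∃ e : X ≃ ZMod p, ∀ t ∈ T, ∃ a, ∀ y, e (t y) = e y + a := by
  have := Fact.mk hp
  have hne : Nonempty X := Fintype.card_pos_iff.1 (by rw [hX]; exact hp.pos)
  obtain ⟨g, hgG, hg1, hgp⟩ := h.exists_order_p hp (by rw [hX])
  have hc := comm_modEq p hp g hgp (h.conj hgG)
  have hT : T.ncard = p := by rw [h.ncard, hX]
  have hall : ∀ t ∈ T, g * t = t * g := by
    have hsub : {t ∈ T | g * t = t * g} ⊆ T := fun t ht => ht.1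
    have hle := Set.ncard_le_ncard hsub
    have hpos : 0 < {t ∈ T | g * t = t * g}.ncard := by
      rw [Set.ncard_pos]; exact ⟨1, h.1, by simp⟩
    rw [hT] at hc hle
    have h0 : p ∣ {t ∈ T | g * t = t * g}.ncard :=
      (Nat.modEq_zero_iff_dvd.1 (hc.symm.trans (by simp [Nat.ModEq])))
    have h1 := Nat.le_of_dvd hpos h0
    have h2 := Set.eq_of_subset_of_ncard_le hsub (by rw [hT]; exact h1)
    intro t ht
    rw [← h2] at ht
    exact ht.2
  obtain ⟨y, hy⟩ : ∃ y, g y ≠ y := by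
    by_contra hcon
    push Not at hcon
    exact hg1 (by ext x; simp [hcon])
  have hO : gorb g y = Set.univ := by
    apply Set.eq_of_subset_of_ncard_le (Set.subset_univ _)
    rw [gorb_ncard hp hgp hy, Set.ncard_univ, Nat.card_eq_fintype_card, hX]
  let E : ZMod p → X := fun i => (g ^ (i.val : ℤ)) y
  have hE : ∀ j : ℤ, E (j : ZMod p) = (g ^ j) y := by
    intro j
    have : (p : ℤ) ∣ ((j : ZMod p).val : ℤ) - j := by
      rw [← ZMod.intCast_eq_intCast_iff_dvd_sub]
      simp
    have h2 := zpow_eq_one_of_dvd hgp this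
    have h3 : g ^ (((j : ZMod p).val : ℤ)) = g ^ j := by
      rw [zpow_sub] at h2
      exact mul_inv_eq_one.1 h2
    simp only [E, h3]
  have hEs : Function.Surjective E := by
    intro x
    have hx : x ∈ gorb g y := by rw [hO]; trivial
    obtain ⟨j, rfl⟩ := hx
    exact ⟨j, hE j⟩
  have hEb : Function.Bijective E := by
    rw [Fintype.bijective_iff_surjective_and_card]
    exact ⟨hEs, by rw [hX, ZMod.card]⟩
  refine ⟨(Equiv.ofBijective E hEb).symm, fun t ht => ?_⟩
  obtain ⟨a, ha⟩ := hEs (t y)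
  refine ⟨a, fun x => ?_⟩
  obtain ⟨i, rfl⟩ := hEs x
  rw [Equiv.symm_apply_eq]
  have h1 : (Equiv.ofBijective E hEb).symm (E i) = i := by
    rw [Equiv.symm_apply_eq]; rfl
  rw [h1]
  change t (E i) = E (i + a)
  have h2 := hE (i.val)
  have h3 := hE (i.val + a.val)
  have h4 := hE (a.val)
  push_cast at h2 h3 h4
  simp only [ZMod.natCast_val, ZMod.cast_id', id] at h2 h3 h4
  rw [h2, h3, zpow_apply_comm g t (hall t ht), zpow_add, Equiv.Perm.mul_apply, ← h4, ha]

/-- Case A -/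
lemma RCC.block_of_fixed [Fintype X] (h : RCC T) {p : ℕ} (hp : p.Prime)
    (hX : Fintype.card X = 2 * p) {g : Perm X} (hgG : g ∈ Subgroup.closure T) (hg1 : g ≠ 1)
    (hgp : g ^ p = 1) {x : X} (hx : g x = x) :
    ∃ O : Set X, O.ncard = p ∧ ∀ t ∈ T, (∀ x ∈ O, t x ∈ O) ∨ (∀ x ∈ O, t x ∉ O) := by
  have hne : Nonempty X := ⟨x⟩
  have hc := comm_modEq p hp g hgp (h.conj hgG)
  rw [h.ncard, hX] at hc
  have hf := fix_modEq p hp g hgp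
  rw [Nat.card_eq_fintype_card, hX] at hf
  have hS : p ≤ {t ∈ T | g * t = t * g}.ncard := by
    have hpos : 0 < {t ∈ T | g * t = t * g}.ncard := by
      rw [Set.ncard_pos]; exact ⟨1, h.1, by simp⟩
    apply Nat.le_of_dvd hpos
    exact (Nat.modEq_zero_iff_dvd.1 (hc.symm.trans (by simp [Nat.ModEq])))
  have hO : {y | g y ≠ y}.ncard = p := by
    have h1 : Nat.card {y // g y = y} = {y | g y = y}.ncard := Nat.card_coe_set_eq _
    rw [h1] at hf
    have hd : p ∣ {y | g y = y}.ncard :=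
      (Nat.modEq_zero_iff_dvd.1 (hf.symm.trans (by simp [Nat.ModEq])))
    have h2 : {y | g y = y}.ncard + {y | g y ≠ y}.ncard = 2 * p := by
      have := Set.ncard_add_ncard_compl {y | g y = y}
      rw [Nat.card_eq_fintype_card, hX] at this
      exact this
    have h3 : 0 < {y | g y = y}.ncard := by rw [Set.ncard_pos]; exact ⟨x, hx⟩
    have h4 : 0 < {y | g y ≠ y}.ncard := by
      rw [Set.ncard_pos]
      by_contra hcon
      rw [Set.not_nonempty_iff_eq_empty] at hcon
      apply hg1
      ext y
      by_contra hy
      have : y ∈ {y | g y ≠ y} := hy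
      rw [hcon] at this
      exact this
    obtain ⟨c, hcc⟩ := hd
    have : c = 1 := by
      have hc0 : c ≠ 0 := by rintro rfl; simp at hcc; omega
      have : c < 2 := by
        by_contra h5
        push Not at h5
        have := Nat.mul_le_mul_left p h5
        omega
      omega
    subst this
    omega
  refine ⟨{y | g y ≠ y}, hO, h.block_of_card ?_⟩
  rw [hO]
  refine hS.trans (Set.ncard_le_ncard ?_)
  rintro t ⟨ht, hcomm⟩
  refine ⟨ht, fun y hy hy' => hy ?_⟩
  have h1 : g (t y) = t (g y) := by
    rw [← Equiv.Perm.mul_apply, hcomm]; rfl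
  exact t.injective (h1.symm.trans hy')
end

section
variable {X : Type*} {T : Set (Perm X)}

lemma gorb_cover [Fintype X] {p : ℕ} (hp : p.Prime) (hX : Fintype.card X = 2 * p)
    {g : Perm X} (hgp : g ^ p = 1) (hfix : ∀ x, g x ≠ x) {x z : X} (hz : z ∉ gorb g x) (v : X) :
    v ∈ gorb g x ∨ v ∈ gorb g z := by
  have hd : Disjoint (gorb g x) (gorb g z) := by
    rw [Set.disjoint_left]
    rintro a ha ⟨j, rfl⟩
    exact hz ((gorb_zpow_iff j).1 ha)
  have hu : gorb g x ∪ gorb g z = Set.univ := by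
    apply Set.eq_of_subset_of_ncard_le (Set.subset_univ _)
    rw [Set.ncard_union_eq hd, gorb_ncard hp hgp (hfix _), gorb_ncard hp hgp (hfix _),
      Set.ncard_univ, Nat.card_eq_fintype_card, hX, two_mul]
  have : v ∈ gorb g x ∪ gorb g z := by rw [hu]; trivial
  exact this

lemma cent_eq_zpow [Fintype X] {p : ℕ} (hp : p.Prime) (hX : Fintype.card X = 2 * p)
    {G : Subgroup (Perm X)} (hB : ∀ h ∈ G, h ≠ 1 → h ^ p = 1 → ∀ x, h x ≠ x)
    {g : Perm X} (hgG : g ∈ G) (hg1 : g ≠ 1) (hgp : g ^ p = 1)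
    {k : Perm X} (hk : k ∈ G) (hkc : g * k = k * g) {x : X} {j : ℤ} (hx : k x = (g ^ j) x) :
    k = g ^ j := by
  have hfix := hB g hgG hg1 hgp
  by_contra hne
  set h := g ^ (-j) * k with hh
  have hhG : h ∈ G := G.mul_mem (G.zpow_mem hgG _) hk
  have hhc : g * h = h * g := by
    have h1 : Commute g k := hkc
    have h2 : Commute g (g ^ (-j)) := (Commute.refl g).zpow_right _
    exact (h2.mul_right h1).eq
  have hh1 : h ≠ 1 := by
    intro h1
    apply hne
    rw [hh, zpow_neg, inv_mul_eq_one] at h1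
    exact h1.symm
  have hhx : h x = x := by
    rw [hh, Equiv.Perm.mul_apply, hx]; simp
  have hO : ∀ z ∈ gorb g x, h z = z := by
    rintro z ⟨i, rfl⟩
    rw [zpow_apply_comm g h hhc, hhx]
  refine hB h hhG hh1 ?_ x hhx
  ext z
  by_cases hz : z ∈ gorb g x
  · exact Function.IsFixedPt.perm_pow (hO z hz) p
  · rcases gorb_cover hp hX hgp hfix hz (h z) with h1 | ⟨l, hl⟩
    · have := h.injective (hO _ h1)
      exact Function.IsFixedPt.perm_pow this p
    · have : ∀ n : ℕ, (h ^ n) z = (g ^ (l * n)) z := by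
        intro n
        induction n with
        | zero => simp
        | succ n ih =>
          rw [pow_succ', Equiv.Perm.mul_apply, ih, zpow_apply_comm g h hhc, hl,
            ← Equiv.Perm.mul_apply, ← zpow_add]
          push_cast; ring_nf
      rw [this, zpow_eq_one_of_dvd hgp (dvd_mul_left _ _)]

lemma exists_w [Fintype X] {p : ℕ} (hp : p.Prime) (hp2 : p ≠ 2) (hX : Fintype.card X = 2 * p)
    {G : Subgroup (Perm X)} (hB : ∀ h ∈ G, h ≠ 1 → h ^ p = 1 → ∀ x, h x ≠ x)
    {g : Perm X} (hgG : g ∈ G) (hg1 : g ≠ 1) (hgp : g ^ p = 1)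
    {u : Perm X} (hu : u ∈ G) (huc : g * u = u * g) {y : X} (huy : u y ∉ gorb g y) :
    ∃ w ∈ G, g * w = w * g ∧ w * w = 1 ∧ w y ∉ gorb g y ∧ ∃ i : ℤ, u = w * g ^ i := by
  have hfix := hB g hgG hg1 hgp
  have huu : (u * u) y ∈ gorb g y := by
    rcases gorb_cover hp hX hgp hfix huy (u (u y)) with h1 | ⟨j, hj⟩
    · exact h1
    · exfalso
      rw [← zpow_apply_comm g u huc] at hj
      exact huy ⟨j, u.injective hj⟩
  obtain ⟨c, hc⟩ := huu
  have hcu : Commute g u := huc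
  have hu2 : u * u = g ^ c :=
    cent_eq_zpow hp hX hB hgG hg1 hgp (G.mul_mem hu hu) (hcu.mul_right hcu).eq hc
  obtain ⟨k, hk⟩ := hp.odd_of_ne_two hp2
  have hgi : Commute g (g ^ (k * c : ℤ)) := (Commute.refl g).zpow_right _
  have hui : Commute u (g ^ (k * c : ℤ)) := hcu.symm.zpow_right _
  refine ⟨u * g ^ (k * c : ℤ), G.mul_mem hu (G.zpow_mem hgG _), (hcu.mul_right hgi).eq, ?_, ?_,
    -(k * c), by simp [mul_assoc]⟩
  · have : u * g ^ (k * c : ℤ) * (u * g ^ (k * c : ℤ)) = u * u * (g ^ (k * c : ℤ) * g ^ (k * c : ℤ)) := by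
      rw [mul_assoc, ← mul_assoc _ u, ← hui.eq]; simp only [mul_assoc]
    rw [this, hu2, ← zpow_add, ← zpow_add]
    apply zpow_eq_one_of_dvd hgp
    exact ⟨c, by rw [hk]; push_cast; ring⟩
  · rw [hui.eq, Equiv.Perm.mul_apply, gorb_zpow_iff]
    exact huy

lemma cent_cases [Fintype X] {p : ℕ} (hp : p.Prime) (hX : Fintype.card X = 2 * p)
    {G : Subgroup (Perm X)} (hB : ∀ h ∈ G, h ≠ 1 → h ^ p = 1 → ∀ x, h x ≠ x)
    {g : Perm X} (hgG : g ∈ G) (hg1 : g ≠ 1) (hgp : g ^ p = 1)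
    {w : Perm X} (hw : w ∈ G) (hwc : g * w = w * g) (hww : w * w = 1) {y : X}
    (hwy : w y ∉ gorb g y) {h : Perm X} (hh : h ∈ G) (hhc : g * h = h * g) :
    (∃ j : ℤ, h = g ^ j ∧ h y = (g ^ j) y) ∨ ∃ j : ℤ, h = w * g ^ j := by
  have hfix := hB g hgG hg1 hgp
  rcases gorb_cover hp hX hgp hfix hwy (h y) with ⟨j, hj⟩ | ⟨j, hj⟩
  · exact Or.inl ⟨j, cent_eq_zpow hp hX hB hgG hg1 hgp hh hhc hj, hj⟩
  · right
    refine ⟨j, ?_⟩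
    have h1 : (w * h) y = (g ^ j) y := by
      rw [Equiv.Perm.mul_apply, hj, zpow_apply_comm g w hwc, ← Equiv.Perm.mul_apply w w, hww]; rfl
    have h2 : Commute g w := hwc
    have h3 : Commute g h := hhc
    have := cent_eq_zpow hp hX hB hgG hg1 hgp (G.mul_mem hw hh) (h2.mul_right h3).eq h1
    rw [← this, ← mul_assoc, hww, one_mul]

lemma zpow_val {p : ℕ} [Fact p.Prime] {g : Perm X} (hgp : g ^ p = 1) (j : ℤ) :
    g ^ ((j : ZMod p).val : ℤ) = g ^ j := by
  have : (p : ℤ) ∣ ((j : ZMod p).val : ℤ) - j := by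
    rw [← ZMod.intCast_eq_intCast_iff_dvd_sub]
    simp
  have h2 := zpow_eq_one_of_dvd hgp this
  rw [zpow_sub] at h2
  exact mul_inv_eq_one.1 h2

lemma exists_coord [Fintype X] {p : ℕ} (hp : p.Prime) (hX : Fintype.card X = 2 * p)
    {g : Perm X} (hgp : g ^ p = 1) (hfix : ∀ x, g x ≠ x)
    {w : Perm X} (hwc : g * w = w * g) {y : X} (hwy : w y ∉ gorb g y) :
    ∃ E : ZMod p × Bool ≃ X, (∀ j : ℤ, E (j, false) = (g ^ j) y) ∧
      (∀ j : ℤ, E (j, true) = w ((g ^ j) y)) := by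
  have := Fact.mk hp
  let E : ZMod p × Bool → X := fun i =>
    if i.2 then w ((g ^ (i.1.val : ℤ)) y) else (g ^ (i.1.val : ℤ)) y
  have hz := zpow_val hgp
  have h1 : ∀ j : ℤ, E (j, false) = (g ^ j) y := by
    intro j; change (g ^ ((j : ZMod p).val : ℤ)) y = _; rw [hz]
  have h2 : ∀ j : ℤ, E (j, true) = w ((g ^ j) y) := by
    intro j; change w ((g ^ ((j : ZMod p).val : ℤ)) y) = _; rw [hz]
  have hs : Function.Surjective E := by
    intro x
    rcases gorb_cover hp hX hgp hfix hwy x with ⟨j, rfl⟩ | ⟨j, rfl⟩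
    · exact ⟨_, h1 j⟩
    · exact ⟨(j, true), by rw [h2, zpow_apply_comm g w hwc]⟩
  have hb : Function.Bijective E := by
    rw [Fintype.bijective_iff_surjective_and_card]
    exact ⟨hs, by simp [hX, ZMod.card, mul_comm]⟩
  exact ⟨Equiv.ofBijective E hb, h1, h2⟩

lemma sum_zmod {p : ℕ} (hp : p.Prime) (hp2 : p ≠ 2) [Fact p.Prime] : ∑ i : ZMod p, i = 0 := by
  have h1 : ∑ i : ZMod p, i = ∑ i : ZMod p, -i := by
    rw [← Equiv.sum_comp (Equiv.neg (ZMod p))]; simp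
  rw [Finset.sum_neg_distrib] at h1
  have h2 : (2 : ZMod p) * ∑ i : ZMod p, i = 0 := by rw [two_mul]; nth_rw 1 [h1]; simp
  have h3 : (2 : ZMod p) ≠ 0 := by
    intro h
    have : ((2 : ℕ) : ZMod p) = 0 := by exact_mod_cast h
    rw [ZMod.natCast_eq_zero_iff] at this
    exact hp2 ((Nat.prime_dvd_prime_iff_eq hp Nat.prime_two).1 this)
  exact (mul_eq_zero.1 h2).resolve_left h3

lemma two_ne_zero_zmod {p : ℕ} (hp : p.Prime) (hp2 : p ≠ 2) : (2 : ZMod p) ≠ 0 := by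
  intro h
  have : ((2 : ℕ) : ZMod p) = 0 := by exact_mod_cast h
  rw [ZMod.natCast_eq_zero_iff] at this
  exact hp2 ((Nat.prime_dvd_prime_iff_eq hp Nat.prime_two).1 this)

/-- a set of `p-1` residues with zero sum omits `0`. -/
lemma zero_notMem_of_sum {p : ℕ} (hp : p.Prime) (hp2 : p ≠ 2) (A : Finset (ZMod p))
    (hA : A.card = p - 1) (hs : ∑ a ∈ A, a = 0) : (0 : ZMod p) ∉ A := by
  have := Fact.mk hp
  have hc : (Aᶜ).card = 1 := by
    rw [Finset.card_compl, hA, ZMod.card]; have := hp.one_lt; omega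
  obtain ⟨a, ha⟩ := Finset.card_eq_one.1 hc
  have h1 := Finset.sum_compl_add_sum A (fun a => a)
  rw [hs, ha, sum_zmod hp hp2] at h1
  simp at h1
  subst h1
  have : (0 : ZMod p) ∈ Aᶜ := by rw [ha]; simp
  simpa using this
end

section
variable {X : Type*} {T : Set (Perm X)}

lemma norm_block {g t : Perm X} {j : ℤ} (h : t * g = g ^ j * t) (y : X) :
    (∀ x ∈ gorb g y, t x ∈ gorb g y) ∨ (∀ x ∈ gorb g y, t x ∉ gorb g y) := by
  have hk : ∀ i : ℤ, t * g ^ i = (g ^ j) ^ i * t := by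
    intro i
    have h1 : t * g * t⁻¹ = g ^ j := by rw [h]; simp
    rw [← h1, conj_zpow]; simp
  have hk' : ∀ i : ℤ, t ((g ^ i) y) = (g ^ (j * i)) (t y) := by
    intro i
    rw [← Equiv.Perm.mul_apply, hk, ← zpow_mul]; rfl
  by_cases hy : t y ∈ gorb g y
  · left
    rintro x ⟨i, rfl⟩
    rw [hk', gorb_zpow_iff]; exact hy
  · right
    rintro x ⟨i, rfl⟩
    rw [hk', gorb_zpow_iff]; exact hy

lemma conj_orbit [Finite X] {p : ℕ} (hp : p.Prime) {g : Perm X} (hgp : g ^ p = 1)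
    {D : Set (Perm X)} (hD : D.ncard = p) (hDc : ∀ s ∈ D, ∀ i : ℤ, g ^ i * s * (g ^ i)⁻¹ ∈ D)
    {t : Perm X} (ht : t ∈ D) (htg : g * t ≠ t * g) :
    ∀ s ∈ D, ∃ i : ℤ, s = g ^ i * t * (g ^ i)⁻¹ := by
  let φ : Perm (Perm X) := MulAut.toPerm _ (MulAut.conj g)
  have hφ : ∀ i : ℤ, ∀ s, (φ ^ i) s = g ^ i * s * (g ^ i)⁻¹ := by
    intro i s
    simp only [φ]
    rw [← map_zpow, ← map_zpow]
    rfl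
  have hφp : φ ^ p = 1 := by
    simp only [φ]
    rw [← map_pow, ← map_pow, hgp]; simp
  have hφt : φ t ≠ t := by
    intro h
    apply htg
    have h1 := hφ 1 t
    rw [zpow_one, zpow_one, h] at h1
    rw [eq_mul_inv_iff_mul_eq] at h1
    exact h1.symm
  have hc := gorb_ncard hp hφp hφt
  have hsub : gorb φ t ⊆ D := by
    rintro s ⟨j, rfl⟩
    rw [hφ]; exact hDc t ht j
  have := Set.eq_of_subset_of_ncard_le hsub (by rw [hc, hD])
  intro s hs
  rw [← this] at hs
  obtain ⟨j, rfl⟩ := hs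
  exact ⟨j, hφ j t⟩

/-- the sum identity -/
lemma sum_identity [Fintype X] (h : RCC T) {p : ℕ} (hp : p.Prime) (hp2 : p ≠ 2)
    {g : Perm X} (hgp : g ^ p = 1) {w : Perm X} {y : X}
    (E : ZMod p × Bool ≃ X) (hE0 : ∀ j : ℤ, E (j, false) = (g ^ j) y)
    (hE1 : ∀ j : ℤ, E (j, true) = w ((g ^ j) y))
    (hq1 : ∀ (j : ℤ) x, (E.symm ((g ^ j) x)).1 = (E.symm x).1 + j)
    (hq2 : ∀ x, (E.symm (w x)).1 = (E.symm x).1)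
    {S : Set (Perm X)} (hS : S ⊆ T) {t : Perm X} (htg : g * t ≠ t * g) (hwt : w * t = t * w)
    (hD : ∀ s, s ∈ T \ S ↔ ∃ i : ℤ, s = g ^ i * t * (g ^ i)⁻¹) :
    ∑ s ∈ (Set.toFinite S).toFinset, (E.symm (s y)).1 = 0 := by
  classical
  have := Fact.mk hp
  have h2 := two_ne_zero_zmod hp hp2
  set q : X → ZMod p := fun x => (E.symm x).1 with hq
  have hv : ∀ i : ZMod p, ((i.val : ℤ) : ZMod p) = i := by intro i; simp
  have hX0 : ∑ x, q x = 0 := by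
    rw [← Equiv.sum_comp E, Fintype.sum_prod_type]
    simp [hq]
    rw [← Finset.mul_sum, sum_zmod hp hp2, mul_zero]
  have hT0 : ∑ s ∈ (Set.toFinite T).toFinset, q (s y) = 0 := by
    rw [← hX0]
    apply Finset.sum_nbij (fun s => s y)
    · simp
    · intro a ha b hb hab
      simp at ha hb
      exact h.eq_of_apply ha hb hab
    · intro x _
      obtain ⟨s, hs, e⟩ := h.exists_apply y x
      exact ⟨s, by simpa using hs, e⟩
    · simp
  have hD0 : ∑ s ∈ (Set.toFinite (T \ S)).toFinset, q (s y) = 0 := by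
    have e1 : ∑ i : ZMod p, q ((g ^ (i.val : ℤ) * t * (g ^ (i.val : ℤ))⁻¹) y)
        = ∑ s ∈ (Set.toFinite (T \ S)).toFinset, q (s y) := by
      apply Finset.sum_nbij (fun i : ZMod p => g ^ (i.val : ℤ) * t * (g ^ (i.val : ℤ))⁻¹)
      · intro i _
        rw [Set.Finite.mem_toFinset, hD]
        exact ⟨_, rfl⟩
      · intro a _ b _ hab
        by_contra hne
        simp only at hab
        have hnd : ¬ (p : ℤ) ∣ (a.val : ℤ) - b.val := by
          intro hd
          apply hne
          rw [← ZMod.intCast_eq_intCast_iff_dvd_sub] at hd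
          simpa using hd.symm
        obtain ⟨c, hc⟩ := exists_zpow_root hp hgp hnd
        apply htg
        have hcom : Commute (g ^ ((a.val : ℤ) - b.val)) t := by
          have e2 : (g ^ (b.val : ℤ))⁻¹ * (g ^ (a.val : ℤ) * t * (g ^ (a.val : ℤ))⁻¹) * (g ^ (b.val : ℤ)) = t := by
            rw [hab]; group
          have e3 : g ^ ((a.val : ℤ) - b.val) = (g ^ (b.val : ℤ))⁻¹ * g ^ (a.val : ℤ) := by
            rw [← zpow_neg, ← zpow_add]; ring_nf
          rw [e3]
          change _ = _
          nth_rw 2 [← e2]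
          group
        have := hcom.zpow_left c
        rw [← hc] at this
        exact this.eq
      · intro s hs
        rw [Finset.mem_coe, Set.Finite.mem_toFinset, hD] at hs
        obtain ⟨i, rfl⟩ := hs
        exact ⟨i, by simp, by simp only [zpow_val hgp]⟩
      · intro i _; rfl
    rw [← e1]
    have e2 : ∀ i : ZMod p, q ((g ^ (i.val : ℤ) * t * (g ^ (i.val : ℤ))⁻¹) y)
        = q (t (E (-i, false))) + i := by
      intro i
      rw [Equiv.Perm.mul_apply, Equiv.Perm.mul_apply]
      simp only [hq]
      rw [hq1]
      have := hE0 (-(i.val : ℤ))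
      rw [Int.cast_neg, hv] at this
      rw [this, hv, zpow_neg]
    have e3 : ∀ i : ZMod p, q (t (E (i, true))) = q (t (E (i, false))) := by
      intro i
      have a0 := hE0 (i.val : ℤ)
      have a1 := hE1 (i.val : ℤ)
      rw [hv] at a0 a1
      rw [a1, ← a0, ← Equiv.Perm.mul_apply, ← hwt, Equiv.Perm.mul_apply]
      simp only [hq]; rw [hq2]
    have e4 : ∑ x, q (t x) = 0 := by
      rw [← hX0]; exact Equiv.sum_comp t q
    rw [← Equiv.sum_comp E, Fintype.sum_prod_type] at e4
    simp only [Fintype.sum_bool, e3] at e4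
    rw [Finset.sum_add_distrib, ← two_mul] at e4
    have e5 := (mul_eq_zero.1 e4).resolve_left h2
    simp only [e2]
    rw [Finset.sum_add_distrib, sum_zmod hp hp2, add_zero, ← e5]
    exact Equiv.sum_comp (Equiv.neg (ZMod p)) (fun i => q (t (E (i, false))))
  have hsplit : (Set.toFinite T).toFinset
      = (Set.toFinite S).toFinset ∪ (Set.toFinite (T \ S)).toFinset := by
    ext s
    simp only [Set.Finite.mem_toFinset, Finset.mem_union]
    exact ⟨fun hs => by by_cases h' : s ∈ S <;> simp [hs, h'],
      fun hs => hs.elim (fun h' => hS h') (fun h' => h'.1)⟩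
  rw [hsplit, Finset.sum_union, hD0, add_zero] at hT0
  · exact hT0
  · rw [Finset.disjoint_left]; intro s hs; simp at hs; simp [hs]
end

section
variable {X : Type*} {T : Set (Perm X)}

/-- The structure forced by the absence of a block. -/
lemma RCC.block_caseB [Fintype X] (h : RCC T) {p : ℕ} (hp : p.Prime) (hp2 : p ≠ 2)
    (hX : Fintype.card X = 2 * p)
    (hB : ∀ h ∈ Subgroup.closure T, h ≠ 1 → h ^ p = 1 → ∀ x, h x ≠ x)
    {g : Perm X} (hgG : g ∈ Subgroup.closure T) (hg1 : g ≠ 1) (hgp : g ^ p = 1) :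
    ∃ O : Set X, O.ncard = p ∧ ∀ t ∈ T, (∀ x ∈ O, t x ∈ O) ∨ (∀ x ∈ O, t x ∉ O) := by
  classical
  by_contra hno
  have hF := Fact.mk hp
  have hne : Nonempty X := Fintype.card_pos_iff.1 (by rw [hX]; have := hp.pos; omega)
  have hfix := hB g hgG hg1 hgp
  obtain ⟨y⟩ := hne
  have hne : Nonempty X := ⟨y⟩
  have hOc := gorb_ncard hp hgp (hfix y)
  have hTG : ∀ s ∈ T, s ∈ Subgroup.closure T := fun s hs => Subgroup.subset_closure hs
  set G := Subgroup.closure T with hG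
  set S : Set (Perm X) := {t ∈ T | g * t = t * g} with hS
  have hST : S ⊆ T := fun s hs => hs.1
  have hTc : T.ncard = 2 * p := by rw [h.ncard, hX]
  have hSpos : 0 < S.ncard := by
    rw [Set.ncard_pos]; exact ⟨1, h.1, by simp⟩
  have hSd : p ∣ S.ncard := by
    have hc := comm_modEq p hp g hgp (h.conj hgG)
    rw [hTc] at hc
    exact (Nat.modEq_zero_iff_dvd.1 (hc.symm.trans (by simp [Nat.ModEq])))
  have hSp : p ≤ S.ncard := Nat.le_of_dvd hSpos hSd
  obtain ⟨u, huS, huy⟩ : ∃ u ∈ S, u y ∉ gorb g y := by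
    by_contra hcon
    push Not at hcon
    refine hno ⟨gorb g y, hOc, h.block_of_card ?_⟩
    rw [hOc]
    refine hSp.trans (Set.ncard_le_ncard ?_)
    intro s hs
    refine ⟨hs.1, ?_⟩
    obtain ⟨j, hj⟩ := hcon s hs
    have := cent_eq_zpow hp hX hB hgG hg1 hgp (hTG s hs.1) hs.2 hj
    rintro x hx
    rw [this]; exact gorb_zpow hx j
  obtain ⟨w, hwG, hwc, hww, hwy, i0, hui⟩ :=
    exists_w hp hp2 hX hB hgG hg1 hgp (hTG u huS.1) huS.2 huy
  have hcw : Commute g w := hwc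
  have hcases := fun (k : Perm X) (hk : k ∈ G) (hkc : g * k = k * g) =>
    cent_cases hp hX hB hgG hg1 hgp hwG hwc hww hwy hk hkc
  obtain ⟨t, ht, htS⟩ : ∃ t ∈ T, t ∉ S := by
    by_contra hcon
    push Not at hcon
    refine hno ⟨gorb g y, hOc, fun t ht => norm_block (j := 1) ?_ y⟩
    rw [zpow_one]; exact (hcon t ht).2.symm
  have htg : g * t ≠ t * g := fun e => htS ⟨ht, e⟩
  have hSc : S.ncard = p := by
    have hlt : S.ncard < T.ncard := Set.ncard_lt_ncard ⟨hST, fun hh => htS (hh ht)⟩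
    rw [hTc] at hlt
    obtain ⟨c, hc⟩ := hSd
    have : c = 1 := by
      have hc0 : c ≠ 0 := by rintro rfl; simp at hc; omega
      have : c < 2 := by
        by_contra h5
        push Not at h5
        have := Nat.mul_le_mul_left p h5
        omega
      omega
    rw [hc, this, mul_one]
  have hgz : ∀ i : ℤ, g ^ i ∈ G := fun i => G.zpow_mem hgG i
  have hDc : ∀ s ∈ T \ S, ∀ i : ℤ, g ^ i * s * (g ^ i)⁻¹ ∈ T \ S := by
    rintro s ⟨hs, hsS⟩ i
    refine ⟨h.conj (hgz i) s hs, fun hh => hsS ⟨hs, ?_⟩⟩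
    have h1 := hh.2
    have h2 : g * g ^ i = g ^ i * g := ((Commute.refl g).zpow_right i).eq
    have h2' : (g ^ i)⁻¹ * g = g * (g ^ i)⁻¹ := ((Commute.refl g).zpow_right i).inv_right.eq.symm
    have h3 : g ^ i * (g * s) * (g ^ i)⁻¹ = g ^ i * (s * g) * (g ^ i)⁻¹ := by
      calc g ^ i * (g * s) * (g ^ i)⁻¹ = g * (g ^ i * s * (g ^ i)⁻¹) := by
            rw [← mul_assoc (g ^ i), ← h2]; simp only [mul_assoc]
        _ = (g ^ i * s * (g ^ i)⁻¹) * g := h1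
        _ = _ := by rw [mul_assoc _ _ g, h2']; simp only [mul_assoc]
    exact mul_left_cancel (mul_right_cancel h3)
  have horb : ∀ s ∈ T \ S, ∃ i : ℤ, s = g ^ i * t * (g ^ i)⁻¹ := by
    apply conj_orbit hp hgp _ hDc ⟨ht, htS⟩ htg
    have := Set.ncard_sdiff_add_ncard_of_subset hST
    omega
  have hDiff : ∀ s, s ∈ T \ S ↔ ∃ i : ℤ, s = g ^ i * t * (g ^ i)⁻¹ := by
    refine fun s => ⟨horb s, ?_⟩
    rintro ⟨i, rfl⟩
    exact hDc t ⟨ht, htS⟩ i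
  -- powers commuting with t
  have hpow : ∀ n : ℤ, Commute (g ^ n) t → (p : ℤ) ∣ n := by
    intro n hn
    by_contra hnd
    obtain ⟨a, ha⟩ := exists_zpow_root hp hgp hnd
    apply htg
    have := hn.zpow_left a
    rw [← ha] at this
    exact this.eq
  have hp2' : ∀ n : ℤ, (p : ℤ) ∣ 2 * n → (p : ℤ) ∣ n := by
    intro n hn
    rcases (Nat.prime_iff_prime_int.1 hp).dvd_or_dvd hn with h1 | h1
    · exfalso
      have : p ∣ 2 := by exact_mod_cast h1
      exact hp2 ((Nat.prime_dvd_prime_iff_eq hp Nat.prime_two).1 this)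
    · exact h1
  have hsq : ∀ j : ℤ, (w * g ^ j) * (w * g ^ j) = g ^ (2 * j) := by
    intro j
    have : Commute w (g ^ j) := hcw.symm.zpow_right j
    rw [mul_assoc, ← mul_assoc _ w, ← this.eq, two_mul, zpow_add, ← mul_assoc, ← mul_assoc, hww,
      one_mul]
  have hwt : Commute w t := by
    have hut : u * t * u⁻¹ ∈ T \ S := by
      refine ⟨h.conj (hTG u huS.1) t ht, fun hh => htS ⟨ht, ?_⟩⟩
      have h1 : Commute g (u * t * u⁻¹) := hh.2
      have h2 : Commute g u := huS.2
      have h3 := (h2.inv_right.mul_right h1).mul_right h2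
      have h4 : u⁻¹ * (u * t * u⁻¹) * u = t := by group
      rw [h4] at h3
      exact h3.eq
    obtain ⟨i, hi⟩ := horb _ hut
    have hv : Commute (w * g ^ (i0 - i)) t := by
      have e1 : w * g ^ (i0 - i) = (g ^ i)⁻¹ * u := by
        have : Commute w (g ^ i) := hcw.symm.zpow_right i
        rw [hui, ← mul_assoc, ← this.inv_right.eq, mul_assoc, ← zpow_neg, ← zpow_add,
          sub_eq_neg_add]
      rw [e1]
      change _ = _
      have e2 : u * t = g ^ i * t * (g ^ i)⁻¹ * u := by rw [← hi]; group
      rw [mul_assoc, e2]; group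
    have hv2 : Commute (g ^ (2 * (i0 - i))) t := by
      rw [← hsq]; exact hv.mul_left hv
    have h0 := zpow_eq_one_of_dvd hgp (hp2' _ (hpow _ hv2))
    rw [h0, mul_one] at hv
    exact hv
  have hwg : ∀ i : ℤ, Commute w (g ^ i) := fun i => hcw.symm.zpow_right i
  have hnorm : ∀ j : ℤ, t * g ≠ g ^ j * t := by
    intro j hj
    refine hno ⟨gorb g y, hOc, fun s hs => ?_⟩
    by_cases hsS : s ∈ S
    · exact norm_block (j := 1) (by rw [zpow_one]; exact hsS.2.symm) y
    · obtain ⟨i, rfl⟩ := horb s ⟨hs, hsS⟩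
      refine norm_block (j := j) ?_ y
      have h2' : (g ^ i)⁻¹ * g = g * (g ^ i)⁻¹ := ((Commute.refl g).zpow_right i).inv_right.eq.symm
      have h3 : g ^ i * g ^ j = g ^ j * g ^ i := by rw [← zpow_add, ← zpow_add, add_comm]
      rw [mul_assoc _ _ g, h2', ← mul_assoc, mul_assoc _ t g, hj, ← mul_assoc, h3]
      simp only [mul_assoc]
  have hnorm2 : ∀ j l : ℤ, ¬ (p : ℤ) ∣ 2 * j → t * g ^ (2 * j) * t⁻¹ ≠ g ^ (2 * l) := by
    intro j l hj hjl
    obtain ⟨a, ha⟩ := exists_zpow_root hp hgp hj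
    apply hnorm (2 * l * a)
    rw [zpow_mul, ← hjl, conj_zpow, ← ha]; group
  -- elements of S
  have hSform : ∀ s ∈ S, (∃ j : ℤ, s = g ^ j ∧ s y = (g ^ j) y) ∨ ∃ j : ℤ, s = w * g ^ j :=
    fun s hs => hcases s (hTG s hs.1) hs.2
  have hwne : ∀ j : ℤ, w ≠ g ^ j := by
    intro j hj
    exact hwy ⟨j, by rw [hj]⟩
  have hSsq : ∀ k ∈ G, g * k = k * g → ∃ l : ℤ, k * k = g ^ (2 * l) ∧
      (k ≠ 1 → k ≠ w → ¬ (p : ℤ) ∣ 2 * l) := by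
    intro k hk hkc
    rcases hcases k hk hkc with ⟨j, rfl, -⟩ | ⟨j, rfl⟩
    · refine ⟨j, by rw [two_mul, zpow_add], fun h1 _ hd => h1 ?_⟩
      exact zpow_eq_one_of_dvd hgp (hp2' _ hd)
    · refine ⟨j, hsq j, fun _ h1 hd => h1 ?_⟩
      rw [zpow_eq_one_of_dvd hgp (hp2' _ hd), mul_one]
  have hconj : ∀ s ∈ S, s ≠ 1 → s ≠ w → ∀ t' ∈ T \ S, ∃ r ∈ G, Commute w r ∧ t' = r * s * r⁻¹ := by
    intro s hs hs1 hsw t' ht'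
    have h1 : t * s * t⁻¹ ∈ T \ S := by
      refine ⟨h.conj (hTG t ht) s hs.1, fun hh => ?_⟩
      obtain ⟨l, hl, -⟩ := hSsq _ (hTG _ hh.1) hh.2
      obtain ⟨j, hj, hj'⟩ := hSsq _ (hTG _ hs.1) hs.2
      apply hnorm2 j l (hj' hs1 hsw)
      rw [← hl, ← hj]; group
    obtain ⟨i, hi⟩ := horb _ h1
    obtain ⟨i', hi'⟩ := horb _ ht'
    refine ⟨g ^ i' * ((g ^ i)⁻¹ * t), G.mul_mem (hgz _) (G.mul_mem (G.inv_mem (hgz _)) (hTG t ht)),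
      (hwg _).mul_right ((hwg _).inv_right.mul_right hwt), ?_⟩
    have : t = (g ^ i)⁻¹ * (t * s * t⁻¹) * g ^ i := by rw [hi]; group
    rw [hi']
    nth_rw 1 [this]
    group
  obtain ⟨E, hE0, hE1⟩ := exists_coord hp hX hgp hfix hwc hwy
  have hq1 : ∀ (j : ℤ) x, (E.symm ((g ^ j) x)).1 = (E.symm x).1 + j := by
    intro j x
    rcases gorb_cover hp hX hgp hfix hwy x with ⟨i, rfl⟩ | ⟨i, rfl⟩
    · rw [← Equiv.Perm.mul_apply, ← zpow_add, ← hE0, ← hE0]; simp [add_comm]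
    · rw [← zpow_apply_comm g w hwc, ← zpow_apply_comm g w hwc, ← Equiv.Perm.mul_apply (g ^ j),
        ← zpow_add, ← hE1, ← hE1]; simp [add_comm]
  have hq2 : ∀ x, (E.symm (w x)).1 = (E.symm x).1 := by
    intro x
    rcases gorb_cover hp hX hgp hfix hwy x with ⟨i, rfl⟩ | ⟨i, rfl⟩
    · rw [← hE1, ← hE0]; simp
    · have hwv : ∀ v, w (w v) = v := fun v => by rw [← Equiv.Perm.mul_apply, hww]; rfl
      rw [← zpow_apply_comm g w hwc, hwv, ← hE1, ← hE0]; simp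
  have hsum := sum_identity h hp hp2 hgp E hE0 hE1 hq1 hq2 hST htg hwt.eq hDiff
  have hy0 : (E.symm y).1 = 0 := by
    have := hE0 0
    simp only [zpow_zero, Equiv.Perm.one_apply] at this
    nth_rw 1 [← this]; simp
  -- a generic element
  have hp3 : 3 ≤ p := by have := hp.two_le; omega
  set SF := (Set.toFinite S).toFinset with hSF
  have hSFc : SF.card = p := by rw [hSF, ← Set.ncard_eq_toFinset_card]; exact hSc
  obtain ⟨s, hs, hs1, hsw⟩ : ∃ s ∈ S, s ≠ 1 ∧ s ≠ w := by
    by_contra hcon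
    push Not at hcon
    have hsub : S ⊆ {1, w} := by
      intro s hs
      by_cases h1 : s = 1
      · simp [h1]
      · simp [hcon s hs h1]
    have := (Set.ncard_le_ncard hsub).trans (Set.ncard_insert_le 1 {w})
    simp at this
    omega
  have hgjp : ∀ j : ℤ, (g ^ j) ^ p = 1 := by
    intro j
    rw [← zpow_natCast, ← zpow_mul]; exact zpow_eq_one_of_dvd hgp (dvd_mul_left _ _)
  have hwjp : ∀ j : ℤ, (w * g ^ j) ^ p ≠ 1 := by
    intro j
    rw [(hwg j).mul_pow, hgjp, mul_one]
    obtain ⟨k, hk⟩ := hp.odd_of_ne_two hp2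
    have hw2 : w ^ 2 = 1 := by rw [pow_two, hww]
    rw [hk, pow_succ, pow_mul, hw2, one_pow, one_mul]
    exact fun h1 => hwne 0 (by simpa using h1)
  have htp : ∀ s ∈ S, s ≠ 1 → s ≠ w → (t ^ p = 1 ↔ s ^ p = 1) := by
    intro s hs hs1 hsw
    obtain ⟨r, -, -, hr⟩ := hconj s hs hs1 hsw t ⟨ht, htS⟩
    rw [hr, conj_pow]
    simp
  by_cases htp1 : t ^ p = 1
  · have hall : ∀ s ∈ S, s ≠ w → ∃ j : ℤ, s = g ^ j := by
      intro s hs hsw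
      rcases hSform s hs with ⟨j, hj, -⟩ | ⟨j, hj⟩
      · exact ⟨j, hj⟩
      · exfalso
        by_cases hs1 : s = 1
        · exact hwne (-j) (by rw [zpow_neg, eq_inv_iff_mul_eq_one, ← hj, hs1])
        · have := (htp s hs hs1 hsw).1 htp1
          rw [hj] at this
          exact hwjp j this
    have huw : u = w := by
      by_contra hne
      obtain ⟨j, hj⟩ := hall u huS hne
      exact huy ⟨j, by rw [hj]⟩
    have hwS : w ∈ SF := by rw [hSF, Set.Finite.mem_toFinset, ← huw]; exact huS
    have hinj : Set.InjOn (fun s : Perm X => (E.symm (s y)).1) (SF.erase w : Finset (Perm X)) := by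
      intro a ha b hb hab
      simp only [Finset.coe_erase, Set.mem_sdiff, Finset.mem_coe, hSF, Set.Finite.mem_toFinset,
        Set.mem_singleton_iff] at ha hb
      obtain ⟨j, hj⟩ := hall a ha.1 ha.2
      obtain ⟨k, hk⟩ := hall b hb.1 hb.2
      apply h.eq_of_apply ha.1.1 hb.1.1 (x := y)
      rw [hj, hk, ← hE0, ← hE0]
      simp only [hj, hk, ← hE0] at hab
      simp only [Equiv.symm_apply_apply] at hab
      rw [hab]
    have := zero_notMem_of_sum hp hp2 ((SF.erase w).image (fun s => (E.symm (s y)).1))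
      (by rw [Finset.card_image_of_injOn hinj, Finset.card_erase_of_mem hwS, hSFc])
      (by
        rw [Finset.sum_image hinj]
        have h1 := Finset.sum_erase_add SF (fun s => (E.symm (s y)).1) hwS
        rw [hsum, hq2, hy0, add_zero] at h1
        exact h1)
    apply this
    rw [Finset.mem_image]
    refine ⟨1, ?_, by simpa using hy0⟩
    rw [Finset.mem_erase]
    refine ⟨fun h1 => hwne 0 (by simpa using h1.symm), ?_⟩
    rw [hSF, Set.Finite.mem_toFinset]
    exact ⟨h.1, by simp⟩
  · have hall : ∀ s ∈ S, s ≠ 1 → ∃ j : ℤ, s = w * g ^ j := by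
      intro s hs hs1
      rcases hSform s hs with ⟨j, hj, -⟩ | ⟨j, hj⟩
      · exfalso
        refine htp1 ((htp s hs hs1 (fun h1 => hwne j (by rw [← hj, h1]))).2 ?_)
        rw [hj, hgjp]
      · exact ⟨j, hj⟩
    have h1S : (1 : Perm X) ∈ SF := by
      rw [hSF, Set.Finite.mem_toFinset]; exact ⟨h.1, by simp⟩
    have hinj : Set.InjOn (fun s : Perm X => (E.symm (s y)).1) (SF.erase 1 : Finset (Perm X)) := by
      intro a ha b hb hab
      simp only [Finset.coe_erase, Set.mem_sdiff, Finset.mem_coe, hSF, Set.Finite.mem_toFinset,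
        Set.mem_singleton_iff] at ha hb
      obtain ⟨j, hj⟩ := hall a ha.1 ha.2
      obtain ⟨k, hk⟩ := hall b hb.1 hb.2
      apply h.eq_of_apply ha.1.1 hb.1.1 (x := y)
      simp only [hj, hk, Equiv.Perm.mul_apply, ← hE1] at hab ⊢
      simp only [Equiv.symm_apply_apply] at hab
      rw [hab]
    have := zero_notMem_of_sum hp hp2 ((SF.erase 1).image (fun s => (E.symm (s y)).1))
      (by rw [Finset.card_image_of_injOn hinj, Finset.card_erase_of_mem h1S, hSFc])
      (by
        rw [Finset.sum_image hinj]
        have h1 := Finset.sum_erase_add SF (fun s => (E.symm (s y)).1) h1S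
        rw [hsum, Equiv.Perm.one_apply, hy0, add_zero] at h1
        exact h1)
    obtain ⟨t', ht', hty⟩ := h.exists_apply y (w y)
    by_cases htS' : t' ∈ S
    · apply this
      rw [Finset.mem_image]
      refine ⟨t', ?_, by rw [hty, hq2, hy0]⟩
      rw [Finset.mem_erase]
      refine ⟨?_, by rw [hSF, Set.Finite.mem_toFinset]; exact htS'⟩
      rintro rfl
      exact hwy ⟨0, by simpa using hty.symm⟩
    · obtain ⟨r, hrG, hrw, hr⟩ := hconj s hs hs1 hsw t' ⟨ht', htS'⟩
      obtain ⟨j, hj⟩ := hall s hs hs1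
      have e1 : w * t' = r * g ^ j * r⁻¹ := by
        rw [hr, hj, ← mul_assoc, ← mul_assoc, hrw.eq, mul_assoc r w, ← mul_assoc w w, hww, one_mul]
      refine hB (w * t') (G.mul_mem hwG (hTG _ ht')) ?_ ?_ y ?_
      · rw [e1]
        intro h1
        apply hsw
        have : g ^ j = 1 := by simpa using h1
        rw [hj, this, mul_one]
      · rw [e1, conj_pow, hgjp]; simp
      · rw [Equiv.Perm.mul_apply, hty, ← Equiv.Perm.mul_apply, hww]; rfl
end

section blk
variable {X : Type*} {T : Set (Perm X)}

lemma four_cover [Fintype X] (hX : Fintype.card X = 4) {a b c : X} (hab : a ≠ b) (hac : a ≠ c)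
    (hbc : b ≠ c) : ∃ d, d ≠ a ∧ d ≠ b ∧ d ≠ c ∧ ∀ x, x = a ∨ x = b ∨ x = c ∨ x = d := by
  classical
  have h3 : ({a, b, c} : Finset X).card = 3 := Finset.card_eq_three.2 ⟨a, b, c, hab, hac, hbc, rfl⟩
  have h1 : (({a, b, c} : Finset X)ᶜ).card = 1 := by
    rw [Finset.card_compl, h3, hX]
  obtain ⟨d, hd⟩ := Finset.card_eq_one.1 h1
  have hm : d ∈ (({a, b, c} : Finset X)ᶜ) := by rw [hd]; simp
  have hm2 : d ≠ a ∧ d ≠ b ∧ d ≠ c := by simpa using hm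
  refine ⟨d, hm2.1, hm2.2.1, hm2.2.2, fun x => ?_⟩
  by_contra hx
  push Not at hx
  have : x ∈ (({a, b, c} : Finset X)ᶜ) := by simp [hx]
  rw [hd] at this
  exact hx.2.2.2 (by simpa using this)

lemma RCC.exists_two [Fintype X] (h : RCC T) (hX : Fintype.card X = 4) :
    ∃ s ∈ T, ∃ y, s y ≠ y ∧ s (s y) = y := by
  by_contra hc
  push Not at hc
  have hne : Nonempty X := Fintype.card_pos_iff.1 (by omega)
  obtain ⟨y⟩ := hne
  have : Nontrivial X := Fintype.one_lt_card_iff_nontrivial.1 (by omega)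
  obtain ⟨z, hz⟩ := exists_ne y
  have nf : ∀ s ∈ T, s ≠ 1 → ∀ x, s x ≠ x := fun s hs h1 x hx =>
    h1 (h.eq_of_apply hs h.1 (x := x) hx)
  obtain ⟨s, hs, hsy⟩ := h.exists_apply y z
  have hs1 : s ≠ 1 := by rintro rfl; exact hz hsy.symm
  subst hsy
  have hs2 : s (s y) ≠ y := hc s hs y hz
  have hs2' : s (s y) ≠ s y := fun e => hz (s.injective e)
  obtain ⟨d, hd1, hd2, hd3, hd⟩ := four_cover hX hz.symm hs2.symm hs2'.symm
  have inj := s.injective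
  have hs3 : s (s (s y)) = d := by
    have := nf s hs hs1 d
    have h1 := hd (s d)
    have h2 := hd (s (s (s y)))
    grind
  have hs4 : s d = y := by
    have h2 := hd (s d)
    grind
  obtain ⟨t, ht, hty⟩ := h.exists_apply y (s (s y))
  have ht1 : t ≠ 1 := by rintro rfl; exact hs2 hty.symm
  have hts : ∀ x, t x ≠ s x := by
    intro x e
    have := h.eq_of_apply ht hs e
    subst this
    exact hs2' hty.symm
  have injt := t.injective
  have nt := nf t ht ht1
  have nt2 : ∀ x, t (t x) ≠ x := fun x => hc t ht x (nt x)
  have ht2 : t (s (s y)) = s y := by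
    have := hd (t (s (s y)))
    have := nt2 y
    have := nt (s (s y))
    have := hts (s (s y))
    grind
  have ht3 : t (s y) = d := by
    have := hd (t (s y))
    have := nt2 y
    have := nt (s y)
    have := nt d
    have := hd (t d)
    grind
  have ht4 : t d = y := by
    have := hd (t d)
    have := nt d
    grind
  have hst := h.conj (Subgroup.subset_closure hs) t ht
  have : s * t * s⁻¹ = s := by
    apply h.eq_of_apply hst hs (x := y)
    have : s⁻¹ y = d := by rw [Equiv.Perm.inv_eq_iff_eq]; exact hs4.symm
    simp only [Equiv.Perm.mul_apply, this, ht4]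
  have h5 : t = s := by
    have : s * t = s * s := by rw [← mul_inv_eq_iff_eq_mul]; exact this
    exact mul_left_cancel this
  exact hts y (by rw [h5])

lemma RCC.block_two [Fintype X] (h : RCC T) (hX : Fintype.card X = 4) :
    ∃ O : Set X, O.ncard = 2 ∧ ∀ t ∈ T, (∀ x ∈ O, t x ∈ O) ∨ (∀ x ∈ O, t x ∉ O) := by
  obtain ⟨s, hs, y, h1, h2⟩ := h.exists_two hX
  refine ⟨{y, s y}, Set.ncard_pair h1.symm, ?_⟩
  apply h.block_of_card
  rw [Set.ncard_pair h1.symm]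
  have hne : (1 : Perm X) ≠ s := by rintro rfl; exact h1 rfl
  rw [← Set.ncard_pair hne]
  apply Set.ncard_le_ncard _ (Set.toFinite _)
  rintro t (rfl | rfl)
  · exact ⟨h.1, by simp⟩
  · exact ⟨hs, by simp [h2]⟩

lemma RCC.block [Fintype X] (h : RCC T) {p : ℕ} (hp : p.Prime)
    (hX : Fintype.card X = 2 * p) :
    ∃ O : Set X, O.ncard = p ∧ ∀ t ∈ T, (∀ x ∈ O, t x ∈ O) ∨ (∀ x ∈ O, t x ∉ O) := by
  by_cases hp2 : p = 2
  · subst hp2; exact h.block_two hX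
  have hne : Nonempty X := Fintype.card_pos_iff.1 (by rw [hX]; have := hp.pos; omega)
  by_cases hB : ∃ g ∈ Subgroup.closure T, g ≠ 1 ∧ g ^ p = 1 ∧ ∃ x, g x = x
  · obtain ⟨g, a, b, c, x, d⟩ := hB
    exact h.block_of_fixed hp hX a b c d
  · push Not at hB
    obtain ⟨g, a, b, c⟩ := h.exists_order_p hp (by rw [hX]; exact dvd_mul_left _ _)
    exact h.block_caseB hp hp2 hX hB a b c

end blk

section coords
variable {X : Type*} {T : Set (Perm X)}

lemma RCC.restrict [Fintype X] (h : RCC T) {p : ℕ} (hp : p.Prime) {O : Set X} (hO : O.ncard = p)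
    (hb : ∀ t ∈ T, ∀ x ∈ O, t x ∈ O → ∀ y, y ∈ O ↔ t y ∈ O) :
    ∃ e : O ≃ ZMod p, ∀ t ∈ T, ∀ x ∈ O, t x ∈ O →
      ∃ a, ∀ y (hy : y ∈ O) (hty : t y ∈ O), e ⟨t y, hty⟩ = e ⟨y, hy⟩ + a := by
  classical
  have hc : Fintype.card O = p := by
    rw [← hO, ← Nat.card_coe_set_eq, Nat.card_eq_fintype_card]
  let S : Set (Perm O) := {u | ∃ t ∈ T, ∀ x : O, t x = u x}
  have hS : RCC S := by
    refine ⟨⟨1, h.1, by simp⟩, ?_, ?_⟩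
    · intro i j
      obtain ⟨t, ht, e⟩ := h.exists_apply (i : X) j
      have hti := hb t ht i i.2 (by rw [e]; exact j.2)
      refine ⟨t.subtypePerm (fun y => (hti y).symm), ⟨⟨t, ht, fun x => rfl⟩, Subtype.ext e⟩, ?_⟩
      rintro u ⟨⟨t', ht', hu⟩, hui⟩
      have : t' = t := h.eq_of_apply ht' ht (x := (i : X)) (by rw [hu, hui, e])
      subst this
      ext x
      simp [hu]
    · rintro s ⟨s', hs', hs⟩ t ⟨t', ht', ht⟩
      refine ⟨t'⁻¹ * s' * t', h.2.2 _ hs' _ ht', fun x => ?_⟩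
      simp only [Equiv.Perm.mul_apply, ht, hs]
      rw [Equiv.Perm.inv_eq_iff_eq, ht]
      simp
  obtain ⟨e, he⟩ := hS.prime hp hc
  refine ⟨e, fun t ht x hx htx => ?_⟩
  have hti := hb t ht x hx htx
  obtain ⟨a, ha⟩ := he (t.subtypePerm (fun y => (hti y).symm)) ⟨t, ht, fun x => rfl⟩
  exact ⟨a, fun y hy hty => ha ⟨y, hy⟩⟩

lemma RCC.coords [Fintype X] (h : RCC T) {p : ℕ} (hp : p.Prime)
    (hX : Fintype.card X = 2 * p) :
    ∃ i : ZMod p × Bool ≃ X, ∀ t ∈ T,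
      (∃ a a', ∀ x, t (i (x, false)) = i (x + a, false) ∧ t (i (x, true)) = i (x + a', true)) ∨
      ((∀ x, ∃ y, t (i (x, false)) = i (y, true)) ∧ (∀ x, ∃ y, t (i (x, true)) = i (y, false))) := by
  classical
  obtain ⟨O, hO, hb⟩ := h.block hp hX
  have hOc : (Oᶜ).ncard = p := by
    have := Set.ncard_add_ncard_compl O
    rw [Nat.card_eq_fintype_card, hX, hO] at this; omega
  have fin : ∀ (t : Perm X) (A B : Set X), A.ncard = p → B.ncard = p → (∀ x ∈ A, t x ∈ B) →
      ∀ x, x ∈ A ↔ t x ∈ B := by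
    intro t A B hA hB hAB x
    refine ⟨hAB x, fun hx => ?_⟩
    have : t '' A = B := Set.eq_of_subset_of_ncard_le (by rintro _ ⟨x, hx, rfl⟩; exact hAB x hx)
      (by rw [Set.ncard_image_of_injective _ t.injective, hA, hB]) (Set.toFinite _)
    rw [← this] at hx
    obtain ⟨y, hy, e⟩ := hx
    rwa [← t.injective e]
  have hb0 : ∀ t ∈ T, (∀ x, x ∈ O ↔ t x ∈ O) ∨ (∀ x, x ∈ O ↔ t x ∈ Oᶜ) := fun t ht =>
    (hb t ht).imp (fin t O O hO hO) (fin t O Oᶜ hO hOc)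
  have h1 : ∀ t ∈ T, ∀ x ∈ O, t x ∈ O → ∀ y, y ∈ O ↔ t y ∈ O := by
    intro t ht x hx htx
    rcases hb0 t ht with h' | h'
    · exact h'
    · exact absurd htx ((h' x).1 hx)
  have h2 : ∀ t ∈ T, ∀ x ∈ Oᶜ, t x ∈ Oᶜ → ∀ y, y ∈ Oᶜ ↔ t y ∈ Oᶜ := by
    intro t ht x hx htx
    rcases hb0 t ht with h' | h'
    · intro y; simpa using not_congr (h' y)
    · exact absurd ((h' x).2 htx) hx
  obtain ⟨e0, he0⟩ := h.restrict hp hO h1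
  obtain ⟨e1, he1⟩ := h.restrict hp hOc h2
  have := Fact.mk hp
  have hne : O.Nonempty := by
    rw [← Set.ncard_pos, hO]; exact hp.pos
  have hne1 : (Oᶜ).Nonempty := by
    rw [← Set.ncard_pos, hOc]; exact hp.pos
  let i : ZMod p × Bool → X := fun q => if q.2 then e1.symm q.1 else e0.symm q.1
  have i0 : ∀ x, i (x, false) = e0.symm x := fun x => rfl
  have i1 : ∀ x, i (x, true) = e1.symm x := fun x => rfl
  have hi : Function.Bijective i := by
    constructor
    · rintro ⟨x, a⟩ ⟨y, b⟩ hxy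
      cases a <;> cases b
      · rw [i0, i0] at hxy; simpa using e0.symm.injective (Subtype.ext hxy)
      · rw [i0, i1] at hxy; exact absurd (hxy ▸ (e0.symm x).2) (e1.symm y).2
      · rw [i0, i1] at hxy; exact absurd (hxy ▸ (e0.symm y).2) (e1.symm x).2
      · rw [i1, i1] at hxy; simpa using e1.symm.injective (Subtype.ext hxy)
    · intro x
      by_cases hx : x ∈ O
      · exact ⟨(e0 ⟨x, hx⟩, false), by simp [i0]⟩
      · exact ⟨(e1 ⟨x, hx⟩, true), by simp [i1]⟩
  have s0 : ∀ x, x ∈ O → ∃ y, x = i (y, false) := fun x hx => ⟨e0 ⟨x, hx⟩, by simp [i0]⟩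
  have s1 : ∀ x, x ∈ Oᶜ → ∃ y, x = i (y, true) := fun x hx => ⟨e1 ⟨x, hx⟩, by simp [i1]⟩
  refine ⟨Equiv.ofBijective i hi, fun t ht => ?_⟩
  simp only [Equiv.ofBijective_apply]
  rcases hb0 t ht with h' | h'
  · left
    have h'' : ∀ y, y ∈ Oᶜ ↔ t y ∈ Oᶜ := by
      intro y; simpa using not_congr (h' y)
    obtain ⟨x, hx⟩ := hne
    obtain ⟨x', hx'⟩ := hne1
    obtain ⟨a, ha⟩ := he0 t ht x hx ((h' x).1 hx)
    obtain ⟨b, hb⟩ := he1 t ht x' hx' ((h'' x').1 hx')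
    refine ⟨a, b, fun z => ⟨?_, ?_⟩⟩
    · have := ha (e0.symm z) (e0.symm z).2 ((h' _).1 (e0.symm z).2)
      rw [i0, i0]
      simp at this
      rw [← this]; simp
    · have := hb (e1.symm z) (e1.symm z).2 ((h'' _).1 (e1.symm z).2)
      rw [i1, i1]
      simp at this
      rw [← this]; simp
  · right
    refine ⟨fun x => s1 _ ((h' _).1 (e0.symm x).2), fun x => s0 _ ?_⟩
    have : i (x, true) ∉ O := (e1.symm x).2
    have := (not_congr (h' _)).1 this
    simpa using this

end coords

/-- conjugacy of sets of permutations, across types -/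
def PIso {A B : Type*} (S : Set (Perm A)) (T : Set (Perm B)) : Prop :=
  ∃ i : A ≃ B, ∀ t : Perm A, t ∈ S ↔ i.permCongr t ∈ T

section piso
variable {A B C : Type*} {S : Set (Perm A)} {T : Set (Perm B)} {U : Set (Perm C)}

lemma PIso.refl (S : Set (Perm A)) : PIso S S := ⟨Equiv.refl A, fun t => by
  have : (Equiv.refl A).permCongr t = t := by ext; simp
  rw [this]⟩

lemma PIso.symm (h : PIso S T) : PIso T S := by
  obtain ⟨i, hi⟩ := h
  refine ⟨i.symm, fun t => ?_⟩
  rw [hi]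
  have : i.permCongr (i.symm.permCongr t) = t := by ext; simp
  rw [this]

lemma PIso.trans (h : PIso S T) (h' : PIso T U) : PIso S U := by
  obtain ⟨i, hi⟩ := h
  obtain ⟨j, hj⟩ := h'
  refine ⟨i.trans j, fun t => ?_⟩
  rw [hi, hj]
  have : j.permCongr (i.permCongr t) = (i.trans j).permCongr t := by ext; simp
  rw [this]

lemma RCC.of_piso (hT : RCC T) (h : PIso S T) : RCC S := by
  obtain ⟨i, hi⟩ := h
  refine ⟨?_, ?_, ?_⟩
  · rw [hi]
    have : i.permCongr 1 = 1 := by ext; simp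
    rw [this]; exact hT.1
  · intro a b
    obtain ⟨t, ht, e⟩ := hT.exists_apply (i a) (i b)
    refine ⟨i.symm.permCongr t, ⟨?_, ?_⟩, ?_⟩
    · rw [hi]
      have : i.permCongr (i.symm.permCongr t) = t := by ext; simp
      rw [this]; exact ht
    · simp [e]
    · rintro u ⟨hu, e'⟩
      rw [hi] at hu
      have := hT.eq_of_apply hu ht (x := i a) (by simp [e, e'])
      rw [← this]; ext; simp
  · intro s hs t ht
    rw [hi] at *
    have : i.permCongr (t⁻¹ * s * t) = (i.permCongr t)⁻¹ * i.permCongr s * i.permCongr t := by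
      rw [eq_comm, mul_assoc, inv_mul_eq_iff_eq_mul]; ext; simp
    rw [this]
    exact hT.2.2 _ hs _ ht

lemma PIso.of_sub (hS : RCC S) (hT : RCC T) (i : A ≃ B) (h : ∀ t ∈ S, i.permCongr t ∈ T) :
    PIso S T := by
  refine ⟨i, fun t => ⟨h t, fun ht => ?_⟩⟩
  rcases isEmpty_or_nonempty A with hA | ⟨⟨x⟩⟩
  · have : t = 1 := by ext x; exact hA.elim x
    rw [this]; exact hS.1
  · obtain ⟨u, hu, e⟩ := hS.exists_apply x (t x)
    have := hT.eq_of_apply ht (h u hu) (x := i x) (by simp [e])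
    have := i.permCongr.injective this
    rw [this]; exact hu

lemma orbitRel_iff_piso {S T : Set (Perm A)} :
    MulAction.orbitRel (ConjAct (Perm A)) (Set (Perm A)) S T ↔ PIso S T := by
  rw [MulAction.orbitRel_apply, MulAction.mem_orbit_iff]
  have key : ∀ (g : Perm A) (t : Perm A), Equiv.permCongr g t = ConjAct.toConjAct g • t := by
    intro g t
    rw [ConjAct.smul_def]; ext; simp
  constructor
  · rintro ⟨g, rfl⟩
    apply PIso.symm
    refine ⟨ConjAct.ofConjAct g, fun t => ?_⟩
    rw [key]
    simp
  · intro h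
    obtain ⟨i, hi⟩ := h.symm
    refine ⟨ConjAct.toConjAct i, ?_⟩
    ext t
    rw [Set.mem_smul_set_iff_inv_smul_mem, hi, key]
    change ConjAct.toConjAct i • (ConjAct.toConjAct i)⁻¹ • t ∈ S ↔ _
    rw [smul_inv_smul]
end piso

section F
variable {p : ℕ}

def isT (t : Perm (ZMod p × Bool)) (a a' : ZMod p) : Prop :=
  ∀ x, t (x, false) = (x + a, false) ∧ t (x, true) = (x + a', true)

def isS (t : Perm (ZMod p × Bool)) (m b n c : ZMod p) : Prop :=
  ∀ x, t (x, false) = (m * x + b, true) ∧ t (x, true) = (n * x + c, false)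

lemma exists_isT (a a' : ZMod p) : ∃ t, isT t a a' :=
  ⟨⟨fun q => if q.2 then (q.1 + a', true) else (q.1 + a, false),
    fun q => if q.2 then (q.1 - a', true) else (q.1 - a, false),
    by rintro ⟨x, _ | _⟩ <;> simp, by rintro ⟨x, _ | _⟩ <;> simp⟩, fun x => ⟨rfl, rfl⟩⟩

lemma exists_isS [Fact p.Prime] {m n : ZMod p} (hm : m ≠ 0) (hn : n ≠ 0) (b c : ZMod p) :
    ∃ t, isS t m b n c :=
  ⟨⟨fun q => if q.2 then (n * q.1 + c, false) else (m * q.1 + b, true),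
    fun q => if q.2 then ((q.1 - b) / m, false) else ((q.1 - c) / n, true),
    by rintro ⟨x, _ | _⟩ <;> simp <;> field_simp,
    by rintro ⟨x, _ | _⟩ <;> simp <;> field_simp <;> simp⟩, fun x => ⟨rfl, rfl⟩⟩

lemma isT.ext {t u : Perm (ZMod p × Bool)} {a a' : ZMod p} (h : isT t a a') (h' : isT u a a') :
    t = u := by
  ext1 ⟨x, _ | _⟩
  · rw [(h x).1, (h' x).1]
  · rw [(h x).2, (h' x).2]

lemma isS.ext {t u : Perm (ZMod p × Bool)} {m b n c : ZMod p} (h : isS t m b n c)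
    (h' : isS u m b n c) : t = u := by
  ext1 ⟨x, _ | _⟩
  · rw [(h x).1, (h' x).1]
  · rw [(h x).2, (h' x).2]

def Fset (f : ZMod p → ZMod p) (m n : ZMod p) (c : ZMod p → ZMod p) : Set (Perm (ZMod p × Bool)) :=
  {t | (∃ a, isT t a (f a)) ∨ ∃ b, isS t m b n (c b)}

lemma RCC_F [Fact p.Prime] {f c : ZMod p → ZMod p} {m n : ZMod p} (hm : m ≠ 0) (hn : n ≠ 0)
    (f0 : f 0 = 0) (fi : Function.Injective f) (ci : Function.Injective c)
    (h1 : ∀ a, f (n * f a) = m * a)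
    (h2 : ∀ b a, c (b + m * a - f a) = c b + n * f a - a)
    (h3 : ∀ b d, c (b + (c d - c b) / n) = c b + (d - b) / m) : RCC (Fset f m n c) := by
  have fs := Finite.surjective_of_injective fi
  have cs := Finite.surjective_of_injective ci
  refine ⟨Or.inl ⟨0, fun x => by simp [f0]⟩, ?_, ?_⟩
  · rintro ⟨x, _ | _⟩ ⟨y, _ | _⟩
    · obtain ⟨t, ht⟩ := exists_isT (y - x) (f (y - x))
      refine ⟨t, ⟨Or.inl ⟨_, ht⟩, by rw [(ht x).1]; simp⟩, ?_⟩
      rintro u ⟨⟨a, hu⟩ | ⟨b, hu⟩, e⟩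
      · rw [(hu x).1] at e
        obtain rfl : a = y - x := by simp at e; rw [← e]; ring
        exact hu.ext ht
      · rw [(hu x).1] at e; simp at e
    · obtain ⟨t, ht⟩ := exists_isS hm hn (y - m * x) (c (y - m * x))
      refine ⟨t, ⟨Or.inr ⟨_, ht⟩, by rw [(ht x).1]; simp⟩, ?_⟩
      rintro u ⟨⟨a, hu⟩ | ⟨b, hu⟩, e⟩
      · rw [(hu x).1] at e; simp at e
      · rw [(hu x).1] at e
        obtain rfl : b = y - m * x := by simp at e; rw [← e]; ring
        exact hu.ext ht
    · obtain ⟨b, hb⟩ := cs (y - n * x)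
      obtain ⟨t, ht⟩ := exists_isS hm hn b (c b)
      refine ⟨t, ⟨Or.inr ⟨_, ht⟩, by rw [(ht x).2]; simp [hb]⟩, ?_⟩
      rintro u ⟨⟨a, hu⟩ | ⟨b', hu⟩, e⟩
      · rw [(hu x).2] at e; simp at e
      · rw [(hu x).2] at e
        obtain rfl : b' = b := by apply ci; rw [hb]; simp at e; rw [← e]; ring
        exact hu.ext ht
    · obtain ⟨a, ha⟩ := fs (y - x)
      obtain ⟨t, ht⟩ := exists_isT a (f a)
      refine ⟨t, ⟨Or.inl ⟨_, ht⟩, by rw [(ht x).2]; simp [ha]⟩, ?_⟩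
      rintro u ⟨⟨a', hu⟩ | ⟨b, hu⟩, e⟩
      · rw [(hu x).2] at e
        obtain rfl : a' = a := by apply fi; rw [ha]; simp at e; rw [← e]; ring
        exact hu.ext ht
      · rw [(hu x).2] at e; simp at e
  · intro s hs t ht
    suffices h : ∃ u ∈ Fset f m n c, s * t = t * u by
      obtain ⟨u, hu, e⟩ := h
      rw [mul_assoc, e, inv_mul_cancel_left]; exact hu
    rcases hs with ⟨a, hs⟩ | ⟨b, hs⟩ <;> rcases ht with ⟨a', ht⟩ | ⟨b', ht⟩
    · refine ⟨s, Or.inl ⟨a, hs⟩, ?_⟩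
      ext1 ⟨x, _ | _⟩
      · simp only [Equiv.Perm.mul_apply, (hs _).1, (ht _).1]; ring_nf
      · simp only [Equiv.Perm.mul_apply, (hs _).2, (ht _).2]; ring_nf
    · obtain ⟨u, hu⟩ := exists_isT (f a / m) (f (f a / m))
      refine ⟨u, Or.inl ⟨_, hu⟩, ?_⟩
      have e : n * f (f a / m) = a := fi (by rw [h1]; field_simp)
      ext1 ⟨x, _ | _⟩
      · simp only [Equiv.Perm.mul_apply, (hs _).2, (ht _).1, (hu _).1]
        congr 1; field_simp; ring
      · simp only [Equiv.Perm.mul_apply, (hs _).1, (ht _).2, (hu _).2]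
        congr 1; linear_combination - e
    · obtain ⟨u, hu⟩ := exists_isS hm hn (b + m * a' - f a') (c (b + m * a' - f a'))
      refine ⟨u, Or.inr ⟨_, hu⟩, ?_⟩
      ext1 ⟨x, _ | _⟩
      · simp only [Equiv.Perm.mul_apply, (hs _).1, (ht _).1, (ht _).2, (hu _).1]
        congr 1; ring
      · simp only [Equiv.Perm.mul_apply, (hs _).2, (ht _).1, (ht _).2, (hu _).2, h2]
        congr 1; ring
    · obtain ⟨u, hu⟩ := exists_isS hm hn (b' + (c b - c b') / n) (c (b' + (c b - c b') / n))
      refine ⟨u, Or.inr ⟨_, hu⟩, ?_⟩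
      ext1 ⟨x, _ | _⟩
      · simp only [Equiv.Perm.mul_apply, (hs _).2, (ht _).1, (ht _).2, (hu _).1]
        congr 1; field_simp; ring
      · simp only [Equiv.Perm.mul_apply, (hs _).1, (ht _).1, (ht _).2, (hu _).2, h3]
        congr 1; field_simp; ring

def Cset (m : ZMod p) : Set (Perm (ZMod p × Bool)) := Fset id m m id
def Dset (f : ZMod p → ZMod p) (k : ZMod p) : Set (Perm (ZMod p × Bool)) :=
  Fset f 1 1 (fun b => k - b)

lemma RCC_C [Fact p.Prime] {m : ZMod p} (hm : m ≠ 0) : RCC (Cset m) :=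
  RCC_F hm hm rfl Function.injective_id Function.injective_id (fun a => rfl)
    (fun b a => by simp) (fun b a => rfl)

lemma RCC_D [Fact p.Prime] {f : ZMod p → ZMod p} (f0 : f 0 = 0) (ff : ∀ a, f (f a) = a)
    (k : ZMod p) : RCC (Dset f k) :=
  RCC_F one_ne_zero one_ne_zero f0 (fun a b h => by rw [← ff a, h, ff])
    (fun a b h => by simpa using h) (fun a => by simp [ff])
    (fun b a => by simp; ring) (fun b a => by simp; ring)

end F

lemma RCC.coords2 {X : Type*} [Fintype X] {T : Set (Perm X)} (h : RCC T) {p : ℕ} (hp : p.Prime)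
    (hX : Fintype.card X = 2 * p) : ∃ S : Set (Perm (ZMod p × Bool)), PIso S T ∧
    ∀ t ∈ S, (∃ a a', isT t a a') ∨
      ((∀ x, ∃ y, t (x, false) = (y, true)) ∧ (∀ x, ∃ y, t (x, true) = (y, false))) := by
  obtain ⟨i, hi⟩ := h.coords hp hX
  refine ⟨{t | i.permCongr t ∈ T}, ⟨i, fun t => Iff.rfl⟩, fun t ht => ?_⟩
  rcases hi _ ht with ⟨a, a', h⟩ | ⟨h, h'⟩
  · left; refine ⟨a, a', fun x => ?_⟩
    simpa using h x
  · right
    simp only [Equiv.permCongr_apply, Equiv.symm_apply_apply, EmbeddingLike.apply_eq_iff_eq] at h h'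
    exact ⟨h, h'⟩

structure Dat {p : ℕ} (T : Set (Perm (ZMod p × Bool))) (f M N c : ZMod p → ZMod p) : Prop where
  f0 : f 0 = 0
  fi : Function.Injective f
  mem : ∀ t ∈ T, (∃ a, isT t a (f a)) ∨ ∃ b, isS t (M b) b (N b) (c b)
  Mne : ∀ b, M b ≠ 0
  Nne : ∀ b, N b ≠ 0
  rel : ∀ a b, f (N b * f a) = M b * a
  shM : ∀ a b, M (b + f a - M b * a) = M b
  shN : ∀ a b, N (b + f a - M b * a) = N b
  shc : ∀ a b, c (b + f a - M b * a) = c b + a - N b * f a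
  ci : Function.Injective c
  cc : ∀ m n, (∀ b, M b = m) → (∀ b, N b = n) → ∀ b d, c (m * (c d - c b) + b) = n * (d - b) + c b

lemma perm_inv_self {Y : Type*} (t : Perm Y) (x : Y) : t⁻¹ (t x) = x := by simp

lemma affine_of_step {p : ℕ} [Fact p.Prime] (u : ZMod p → ZMod p) (k : ZMod p)
    (h : ∀ x, u (x + 1) = u x + k) (x : ZMod p) : u x = k * x + u 0 := by
  have : ∀ n : ℕ, u n = k * n + u 0 := by
    intro n
    induction n with
    | zero => simp
    | succ n ih => push_cast; rw [h, ih]; ring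
  have h2 := this x.val
  simpa using h2

lemma RCC.dat {p : ℕ} (hp : p.Prime) {T : Set (Perm (ZMod p × Bool))} (h : RCC T)
    (hT : ∀ t ∈ T, (∃ a a', isT t a a') ∨
      ((∀ x, ∃ y, t (x, false) = (y, true)) ∧ (∀ x, ∃ y, t (x, true) = (y, false)))) :
    ∃ f M N c, Dat T f M N c := by
  have := Fact.mk hp
  have hconj : ∀ s ∈ T, ∀ t ∈ T, t * s * t⁻¹ ∈ T := fun s hs t ht =>
    h.conj (Subgroup.subset_closure ht) s hs
  have hf : ∀ a, ∃ t ∈ T, ∃ a', isT t a a' := by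
    intro a
    obtain ⟨t, ht, e⟩ := h.exists_apply ((0 : ZMod p), false) (a, false)
    rcases hT t ht with ⟨b, b', h1⟩ | h1
    · rw [(h1 0).1] at e
      obtain rfl : b = a := by simpa using e
      exact ⟨t, ht, b', h1⟩
    · obtain ⟨y, hy⟩ := h1.1 0
      rw [hy] at e; simp at e
  choose tau htau f htf using hf
  have tau_eq : ∀ t ∈ T, ∀ a a', isT t a a' → a' = f a := by
    intro t ht a a' h1
    have : t = tau a := h.eq_of_apply ht (htau a) (x := (0, false)) (by rw [(h1 0).1, (htf a 0).1])
    subst this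
    have := (h1 0).2
    rw [(htf a 0).2] at this
    simpa using this.symm
  have fi : Function.Injective f := by
    intro a b hab
    have : tau a = tau b := h.eq_of_apply (htau a) (htau b) (x := (0, true))
      (by rw [(htf a 0).2, (htf b 0).2, hab])
    have h1 := (htf a 0).1
    rw [this, (htf b 0).1] at h1
    simpa using h1.symm
  have fs := Finite.surjective_of_injective fi
  have f0 : f 0 = 0 := (tau_eq 1 h.1 0 0 (fun x => by simp)).symm
  have haff : ∀ t ∈ T, ((∀ x, ∃ y, t (x, false) = (y, true)) ∧
      (∀ x, ∃ y, t (x, true) = (y, false))) → ∃ m b n c, isS t m b n c ∧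
      ∀ a, f (n * f a) = m * a := by
    rintro t ht ⟨h1, h2⟩
    choose u hu using h1
    choose v hv using h2
    have hui : ∀ x, t⁻¹ (u x, true) = (x, false) := fun x => by rw [← hu, perm_inv_self]
    have hvi : ∀ x, t⁻¹ (v x, false) = (x, true) := fun x => by rw [← hv, perm_inv_self]
    have key : ∀ a, ∃ a'', ∀ x, u (x + a) = u x + f a'' ∧ v (x + f a) = v x + a'' := by
      intro a
      have hm := hconj _ (htau a) _ ht
      rcases hT _ hm with ⟨b, b', hb⟩ | hb
      · have hb' := tau_eq _ hm _ _ hb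
        refine ⟨b, fun x => ⟨?_, ?_⟩⟩
        · have := (hb (u x)).2
          simp only [Equiv.Perm.mul_apply, hui, hvi, (htf a _).1, hu] at this
          rw [← hb']
          simpa using this
        · have := (hb (v x)).1
          simp only [Equiv.Perm.mul_apply, hui, hvi, (htf a _).2, hv] at this
          simpa using this
      · obtain ⟨y, hy⟩ := hb.1 (v 0)
        simp only [Equiv.Perm.mul_apply, hui, hvi, (htf a _).2, hv] at hy
        simp at hy
    obtain ⟨a1, h1⟩ := key 1
    have hua := affine_of_step u (f a1) (fun x => (h1 x).1)
    obtain ⟨a2, h2⟩ := fs 1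
    obtain ⟨a3, h3⟩ := key a2
    have hva := affine_of_step v a3 (fun x => by rw [← h2]; exact (h3 x).2)
    refine ⟨f a1, u 0, a3, v 0, fun x => ⟨by rw [hu, hua], by rw [hv, hva]⟩, fun a => ?_⟩
    obtain ⟨a4, h4⟩ := key a
    have e1 := (h4 0).1
    have e2 := (h4 0).2
    rw [hua] at e1
    rw [hva] at e2
    have : a3 * f a = a4 := by linear_combination e2
    rw [this]
    have : f a4 = f a1 * a := by linear_combination -e1
    rw [this]
  have hs : ∀ b, ∃ t ∈ T, ∃ m n c, isS t m b n c ∧ ∀ a, f (n * f a) = m * a := by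
    intro b
    obtain ⟨t, ht, e⟩ := h.exists_apply ((0 : ZMod p), false) (b, true)
    rcases hT t ht with ⟨a, b', h1⟩ | h1
    · rw [(h1 0).1] at e; simp at e
    · obtain ⟨m, b', n, c, h2, h3⟩ := haff t ht h1
      rw [(h2 0).1] at e
      obtain rfl : b' = b := by simpa using e
      exact ⟨t, ht, m, n, c, h2, h3⟩
  choose sg hsg M N c hS hrel using hs
  have hmem : ∀ t ∈ T, (∃ a, t = tau a) ∨ ∃ b, t = sg b := by
    intro t ht
    rcases hT t ht with ⟨a, a', h1⟩ | h1
    · left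
      exact ⟨a, h.eq_of_apply ht (htau a) (x := (0, false)) (by rw [(h1 0).1, (htf a 0).1])⟩
    · right
      obtain ⟨y, hy⟩ := h1.1 0
      exact ⟨y, h.eq_of_apply ht (hsg y) (x := (0, false)) (by rw [hy, (hS y 0).1]; simp)⟩
  have isS_eq : ∀ t ∈ T, ∀ m b n d, isS t m b n d → m = M b ∧ n = N b ∧ d = c b := by
    intro t ht m b n d h1
    have : t = sg b := h.eq_of_apply ht (hsg b) (x := (0, false))
      (by rw [(h1 0).1, (hS b 0).1]; simp)
    subst this
    have e1 := (h1 0).1; have e2 := (h1 1).1; have e3 := (h1 0).2; have e4 := (h1 1).2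
    rw [(hS b _).1] at e1 e2
    rw [(hS b _).2] at e3 e4
    simp at e1 e2 e3 e4
    subst e3
    simp at e4
    exact ⟨e2.symm, e4.symm, rfl⟩
  have Mne : ∀ b, M b ≠ 0 := by
    intro b e
    have h1 := (hS b 0).1
    have h2 := (hS b 1).1
    rw [e] at h1 h2
    have := (sg b).injective (h1.trans (by rw [h2]; simp) : sg b (0, false) = sg b (1, false))
    simp at this
  have Nne : ∀ b, N b ≠ 0 := by
    intro b e
    have h1 := (hS b 0).2
    have h2 := (hS b 1).2
    rw [e] at h1 h2
    have := (sg b).injective (h1.trans (by rw [h2]; simp) : sg b (0, true) = sg b (1, true))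
    simp at this
  have inv0 : ∀ a x, (tau a)⁻¹ (x, false) = (x - a, false) := by
    intro a x; rw [Equiv.Perm.inv_eq_iff_eq, (htf a _).1]; simp
  have inv1 : ∀ a x, (tau a)⁻¹ (x, true) = (x - f a, true) := by
    intro a x; rw [Equiv.Perm.inv_eq_iff_eq, (htf a _).2]; simp
  have sh : ∀ a b, M b = M (b + f a - M b * a) ∧ N b = N (b + f a - M b * a) ∧
      c b + a - N b * f a = c (b + f a - M b * a) := by
    intro a b
    refine isS_eq _ (hconj _ (hsg b) _ (htau a)) _ _ _ _ (fun x => ?_)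
    simp only [Equiv.Perm.mul_apply, inv0, inv1, (hS b _).1, (hS b _).2, (htf a _).1, (htf a _).2]
    constructor <;> congr 1 <;> ring
  refine ⟨f, M, N, c, f0, fi, ?_, Mne, Nne, fun a b => hrel b a, fun a b => (sh a b).1.symm,
    fun a b => (sh a b).2.1.symm, fun a b => (sh a b).2.2.symm, ?_, ?_⟩
  · intro t ht
    rcases hmem t ht with ⟨a, rfl⟩ | ⟨b, rfl⟩
    · exact Or.inl ⟨a, htf a⟩
    · exact Or.inr ⟨b, hS b⟩
  · intro a b hab
    have : sg a = sg b := h.eq_of_apply (hsg a) (hsg b) (x := (0, true))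
      (by rw [(hS a 0).2, (hS b 0).2, hab]; simp)
    have h1 := (hS a 0).1
    rw [this, (hS b 0).1] at h1
    simpa using h1.symm
  · intro m n hM hN b d
    have hm : m ≠ 0 := by rw [← hM 0]; exact Mne 0
    have hn : n ≠ 0 := by rw [← hN 0]; exact Nne 0
    have i1 : ∀ x, (sg b)⁻¹ (x, true) = ((x - b) / m, false) := by
      intro x; rw [Equiv.Perm.inv_eq_iff_eq, (hS b _).1, hM]; field_simp; simp
    have i0 : ∀ x, (sg b)⁻¹ (x, false) = ((x - c b) / n, true) := by
      intro x; rw [Equiv.Perm.inv_eq_iff_eq, (hS b _).2, hN]; field_simp; simp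
    have := isS_eq _ (hconj _ (hsg d) _ (hsg b)) m (m * (c d - c b) + b) n (n * (d - b) + c b)
      (fun x => by
      simp only [Equiv.Perm.mul_apply, i0, i1, (hS _ _).1, (hS _ _).2, hM, hN]
      constructor <;> congr 1 <;> field_simp <;> ring)
    exact this.2.2.symm

section cls
variable {p : ℕ} [Fact p.Prime] {T : Set (Perm (ZMod p × Bool))} {f M N c : ZMod p → ZMod p}

lemma affine_of_step2 (u : ZMod p → ZMod p) {d e : ZMod p} (hd : d ≠ 0)
    (h : ∀ x, u (x + d) = u x + e) (x : ZMod p) : u x = e / d * x + u 0 := by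
  have := affine_of_step (fun x => u (d * x)) e (fun x => by
    rw [← h]; congr 1; ring) (x / d)
  simp only [mul_zero] at this
  rw [mul_div_cancel₀ _ hd] at this
  rw [this]; ring

def affB (r s : ZMod p) (hr : r ≠ 0) : ZMod p × Bool ≃ ZMod p × Bool where
  toFun q := if q.2 then (r * q.1 + s, true) else (q.1, false)
  invFun q := if q.2 then ((q.1 - s) / r, true) else (q.1, false)
  left_inv := by rintro ⟨x, _ | _⟩ <;> simp; field_simp
  right_inv := by rintro ⟨x, _ | _⟩ <;> simp; field_simp; simp

lemma affB_T {r s : ZMod p} (hr : r ≠ 0) {t : Perm (ZMod p × Bool)} {a a' : ZMod p}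
    (h : isT t a a') : isT ((affB r s hr).permCongr t) a (r * a') := by
  intro x
  have e1 : (affB r s hr).symm (x, false) = (x, false) := rfl
  have e2 : (affB r s hr).symm (x, true) = ((x - s) / r, true) := rfl
  rw [Equiv.permCongr_apply, Equiv.permCongr_apply, e1, e2, (h _).1, (h _).2]
  refine ⟨rfl, ?_⟩
  change (_, true) = _
  congr 1; field_simp; ring

lemma affB_S {r s : ZMod p} (hr : r ≠ 0) {t : Perm (ZMod p × Bool)} {m b n d : ZMod p}
    (h : isS t m b n d) :
    isS ((affB r s hr).permCongr t) (r * m) (r * b + s) (n / r) (d - n * s / r) := by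
  intro x
  have e1 : (affB r s hr).symm (x, false) = (x, false) := rfl
  have e2 : (affB r s hr).symm (x, true) = ((x - s) / r, true) := rfl
  rw [Equiv.permCongr_apply, Equiv.permCongr_apply, e1, e2, (h _).1, (h _).2]
  constructor
  · change (_, true) = _
    congr 1; ring
  · change (_, false) = _
    congr 1; field_simp; ring

lemma Dat.to_F (hD : Dat T f M N c) (h : RCC T) {f' c' : ZMod p → ZMod p} {m' n' : ZMod p}
    (hF : RCC (Fset f' m' n' c')) (r s : ZMod p) (hr : r ≠ 0)
    (h1 : ∀ a, r * f a = f' a) (h2 : ∀ b, r * M b = m') (h3 : ∀ b, N b / r = n')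
    (h4 : ∀ b, c b - N b * s / r = c' (r * b + s)) : PIso T (Fset f' m' n' c') := by
  apply PIso.of_sub h hF (affB r s hr)
  intro t ht
  rcases hD.mem t ht with ⟨a, ha⟩ | ⟨b, hb⟩
  · left
    refine ⟨a, ?_⟩
    rw [← h1]; exact affB_T hr ha
  · right
    refine ⟨r * b + s, ?_⟩
    rw [← h4, ← h2 b, ← h3 b]; exact affB_S hr hb

lemma Dat.classify (hD : Dat T f M N c) (h : RCC T) :
    (∃ m : ZMod p, m ≠ 0 ∧ m ≠ -1 ∧ PIso T (Cset m)) ∨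
    (∃ g : ZMod p → ZMod p, g 0 = 0 ∧ (∀ a, g (g a) = a) ∧ ∃ k, PIso T (Dset g k)) := by
  by_cases hl : ∃ l, ∀ a, f a = l * a
  · obtain ⟨l, hl⟩ := hl
    have hl0 : l ≠ 0 := by
      rintro rfl
      have := @hD.fi 0 1 (by rw [hl, hl]; simp)
      simp at this
    have hNM : ∀ b, M b = l * l * N b := by
      intro b
      have := hD.rel 1 b
      rw [hl, hl] at this
      linear_combination -this
    by_cases hM : ∃ b, M b ≠ l
    · obtain ⟨b0, hb0⟩ := hM
      have hd : l - M b0 ≠ 0 := fun e => hb0 (by linear_combination -e)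
      have eqv : ∀ b, b0 + f ((b - b0) / (l - M b0)) - M b0 * ((b - b0) / (l - M b0)) = b := by
        intro b
        rw [hl]; field_simp; ring
      have hMc : ∀ b, M b = M b0 := by
        intro b
        have := hD.shM ((b - b0) / (l - M b0)) b0
        rwa [eqv] at this
      have hNc : ∀ b, N b = N b0 := by
        intro b
        have := hD.shN ((b - b0) / (l - M b0)) b0
        rwa [eqv] at this
      set m := M b0
      have hn : N b0 = m / (l * l) := by
        rw [eq_div_iff (mul_ne_zero hl0 hl0), ← hMc b0, hNM b0]; ring
      have hc : ∀ b, c b = b / l + c 0 := by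
        intro b
        have := affine_of_step2 c hd (e := (l - m) / l) (fun x => by
          have := hD.shc 1 x
          rw [hMc, hNc, hl, hn] at this
          rw [show x + (l - m) = x + l * 1 - m * 1 by ring, this]
          field_simp; ring) b
        rw [this]; field_simp
      have hm0 : m ≠ 0 := hD.Mne b0
      by_cases hm : m = -l
      · right
        refine ⟨fun a => -a, by simp, by simp, c 0, ?_⟩
        refine hD.to_F h (RCC_D (by simp) (by simp) _) (m⁻¹) 0 (inv_ne_zero hm0) ?_ ?_ ?_ ?_
        · intro a; rw [hl, hm]; field_simp
        · intro b; rw [hMc]; field_simp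
        · intro b; rw [hNc, hn, hm]; field_simp
        · intro b; rw [hc, hm]; field_simp; ring
      · left
        have hm1 : m / l ≠ -1 := fun e => hm (by rw [div_eq_iff hl0] at e; rw [e]; ring)
        have hm2 : m + l ≠ 0 := fun e => hm (by linear_combination e)
        have hm3 : 1 + m / l ≠ 0 := fun e => hm1 (by linear_combination e)
        have hne : m / l ≠ 0 := div_ne_zero hm0 hl0
        refine ⟨m / l, hne, hm1, ?_⟩
        refine hD.to_F h (RCC_C hne) (l⁻¹) (c 0 / (1 + m / l)) (inv_ne_zero hl0) ?_ ?_ ?_ ?_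
        · intro a; rw [hl]; field_simp; simp
        · intro b; rw [hMc]; field_simp
        · intro b; rw [hNc, hn]; field_simp
        · intro b; rw [hc, hNc, hn]; simp only [id]
          have : c 0 = c 0 / (1 + m / l) * (1 + m / l) := by rw [div_mul_cancel₀ _ hm3]
          set s := c 0 / (1 + m / l)
          rw [this]; field_simp; ring
    · push Not at hM
      have hN : ∀ b, N b = l⁻¹ := by
        intro b
        have := hNM b
        rw [hM] at this
        field_simp
        have h2 : l * (l * N b) = l * 1 := by linear_combination -this
        have := mul_left_cancel₀ hl0 h2
        linear_combination this
      have hcc := hD.cc l l⁻¹ hM hN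
      by_cases he : ∃ b b', b - l * c b ≠ b' - l * c b'
      · right
        obtain ⟨b, b', hbb⟩ := he
        have cs := Finite.surjective_of_injective hD.ci
        have key : ∀ y, c (y + ((b' - l * c b') - (b - l * c b))) =
            c y + -(((b' - l * c b') - (b - l * c b)) / l) := by
          intro y
          obtain ⟨d, hd⟩ := cs ((y - (b - l * c b)) / l)
          have hd' : l * c d = y - (b - l * c b) := by rw [hd]; field_simp
          have e1 := hcc b d
          have e2 := hcc b' d
          rw [show l * (c d - c b) + b = y by linear_combination hd'] at e1
          rw [show l * (c d - c b') + b' = y + ((b' - l * c b') - (b - l * c b)) by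
            linear_combination hd'] at e2
          rw [e1, e2]; field_simp; ring
        have hd : (b' - l * c b') - (b - l * c b) ≠ 0 := fun e => hbb (by linear_combination -e)
        have hc : ∀ y, c y = c 0 - y / l := by
          intro y
          rw [affine_of_step2 c hd key y]
          field_simp; ring
        refine ⟨id, rfl, fun a => rfl, c 0, ?_⟩
        refine hD.to_F h (RCC_D (by simp) (by simp) _) (l⁻¹) 0 (inv_ne_zero hl0) ?_ ?_ ?_ ?_
        · intro a; rw [hl]; field_simp; simp
        · intro b; rw [hM]; field_simp
        · intro b; rw [hN]; field_simp
        · intro b; rw [hc]; field_simp; ring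
      · push Not at he
        have hc : ∀ b, c b = b / l + c 0 := by
          intro b
          have := he b 0
          field_simp
          linear_combination -this
        by_cases h2 : (2 : ZMod p) = 0
        · right
          refine ⟨id, rfl, fun a => rfl, c 0, ?_⟩
          refine hD.to_F h (RCC_D (by simp) (by simp) _) (l⁻¹) 0 (inv_ne_zero hl0) ?_ ?_ ?_ ?_
          · intro a; rw [hl]; field_simp; simp
          · intro b; rw [hM]; field_simp
          · intro b; rw [hN]; field_simp
          · intro b; rw [hc]; field_simp; linear_combination b * h2
        · left
          refine ⟨1, one_ne_zero, fun e => h2 (by linear_combination e), ?_⟩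
          refine hD.to_F h (RCC_C one_ne_zero) (l⁻¹) (c 0 / 2) (inv_ne_zero hl0) ?_ ?_ ?_ ?_
          · intro a; rw [hl]; field_simp; simp
          · intro b; rw [hM]; field_simp
          · intro b; rw [hN]; field_simp
          · intro b; rw [hc, hN]; simp only [id]; field_simp; ring
  · right
    push Not at hl
    obtain ⟨a0, ha0⟩ := hl (M 0)
    have hd : f a0 - M 0 * a0 ≠ 0 := sub_ne_zero.2 ha0
    have aux : ∀ n : ℕ, M (n * (f a0 - M 0 * a0)) = M 0 ∧ N (n * (f a0 - M 0 * a0)) = N 0 := by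
      intro n
      induction n with
      | zero => simp
      | succ n ih =>
        have e1 := hD.shM a0 (n * (f a0 - M 0 * a0))
        have e2 := hD.shN a0 (n * (f a0 - M 0 * a0))
        rw [ih.1] at e1 e2
        rw [show (((n + 1 : ℕ) : ZMod p)) * (f a0 - M 0 * a0) =
          n * (f a0 - M 0 * a0) + f a0 - M 0 * a0 by push_cast; ring]
        exact ⟨e1, e2.trans ih.2⟩
    have aux2 : ∀ b, M b = M 0 ∧ N b = N 0 := by
      intro b
      have := aux (b / (f a0 - M 0 * a0)).val
      rw [ZMod.natCast_zmod_val, div_mul_cancel₀ _ hd] at this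
      exact this
    have hMc : ∀ b, M b = M 0 := fun b => (aux2 b).1
    have hNc : ∀ b, N b = N 0 := fun b => (aux2 b).2
    have hshc : ∀ a b, c (b + (f a - M 0 * a)) = c b + (a - N 0 * f a) := by
      intro a b
      have := hD.shc a b
      rw [hMc, hNc] at this
      rw [← add_sub_assoc, this]; ring
    obtain ⟨κ, hκ⟩ : ∃ κ, ∀ b, c b = κ * b + c 0 :=
      ⟨_, affine_of_step2 c hd (hshc a0)⟩
    have e1 : ∀ a, κ * (f a - M 0 * a) = a - N 0 * f a := by
      intro a
      have := hshc a 0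
      rw [zero_add, hκ] at this
      linear_combination this
    have hk : κ = - N 0 := by
      by_contra hne
      have hne' : κ + N 0 ≠ 0 := fun e => hne (by linear_combination e)
      obtain ⟨a, ha⟩ := hl ((1 + κ * M 0) / (κ + N 0))
      apply ha
      field_simp
      linear_combination e1 a
    have hmn : N 0 * M 0 = 1 := by
      have := e1 1
      rw [hk] at this
      linear_combination this
    have hN0 := hD.Nne 0
    have hM0 : M 0 = (N 0)⁻¹ := eq_inv_of_mul_eq_one_right hmn
    have g1 : N 0 * f 0 = 0 := by rw [hD.f0, mul_zero]
    have g2 : ∀ a, N 0 * f (N 0 * f a) = a := by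
      intro a
      rw [hD.rel, ← mul_assoc, hmn, one_mul]
    refine ⟨fun a => N 0 * f a, g1, g2, c 0, ?_⟩
    refine hD.to_F h (RCC_D g1 g2 _) (N 0) 0 hN0 ?_ ?_ ?_ ?_
    · intro a; rfl
    · intro b; rw [hMc]; exact hmn
    · intro b; rw [hNc]; field_simp
    · intro b; rw [hκ, hk]; ring

end cls

section uniq
variable {p : ℕ} [Fact p.Prime]

lemma isT.pow {t : Perm (ZMod p × Bool)} {a a' : ZMod p} (h : isT t a a') (n : ℕ) :
    isT (t ^ n) (n * a) (n * a') := by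
  induction n with
  | zero => intro x; simp
  | succ n ih =>
    intro x
    rw [pow_succ', Equiv.Perm.mul_apply, Equiv.Perm.mul_apply, (ih x).1, (ih x).2, (h _).1, (h _).2]
    constructor <;> congr 1 <;> push_cast <;> ring

lemma isS.odd_pow {t : Perm (ZMod p × Bool)} {m b n c : ZMod p} (h : isS t m b n c) (j : ℕ) :
    t ^ (2 * j + 1) ≠ 1 := by
  have h1 : ∀ q, (t q).2 = !q.2 := by
    rintro ⟨x, _ | _⟩
    · rw [(h x).1]; rfl
    · rw [(h x).2]; rfl
  have h2 : ∀ j q, ((t ^ (2 * j)) q).2 = q.2 := by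
    intro j
    induction j with
    | zero => simp
    | succ j ih =>
      intro q
      rw [show 2 * (j + 1) = 1 + (1 + 2 * j) by ring, pow_add, pow_add, pow_one]
      simp [h1, ih]
  intro e
  have := h1 ((t ^ (2 * j)) (0, false))
  rw [← Equiv.Perm.mul_apply, ← pow_succ', e, h2] at this
  simp at this

def swB : ZMod p × Bool ≃ ZMod p × Bool where
  toFun q := (q.1, !q.2)
  invFun q := (q.1, !q.2)
  left_inv := by rintro ⟨x, _ | _⟩ <;> simp
  right_inv := by rintro ⟨x, _ | _⟩ <;> simp

lemma swB_F {f c : ZMod p → ZMod p} {m : ZMod p} (ff : ∀ a, f (f a) = a) (cc : ∀ a, c (c a) = a)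
    {t : Perm (ZMod p × Bool)} (ht : t ∈ Fset f m m c) : swB.permCongr t ∈ Fset f m m c := by
  have e1 : ∀ x : ZMod p, swB.symm (x, false) = (x, true) := fun x => rfl
  have e2 : ∀ x : ZMod p, swB.symm (x, true) = (x, false) := fun x => rfl
  rcases ht with ⟨a, ha⟩ | ⟨b, hb⟩
  · refine Or.inl ⟨f a, fun x => ?_⟩
    rw [Equiv.permCongr_apply, Equiv.permCongr_apply, e1, e2, (ha _).1, (ha _).2, ff]
    exact ⟨rfl, rfl⟩
  · refine Or.inr ⟨c b, fun x => ?_⟩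
    rw [Equiv.permCongr_apply, Equiv.permCongr_apply, e1, e2, (hb _).1, (hb _).2, cc]
    exact ⟨rfl, rfl⟩

lemma uniq_aux (hp2 : p ≠ 2) {f c f' c' : ZMod p → ZMod p} {m m' : ZMod p} (hm : m ≠ 0)
    (ff : ∀ a, f (f a) = a)
    (j : ZMod p × Bool ≃ ZMod p × Bool) (hj : ∀ t ∈ Fset f m m c, j.permCongr t ∈ Fset f' m' m' c')
    (u0 : ZMod p) (hj0 : j (0, false) = (u0, false)) :
    ∃ r q u v, r ≠ 0 ∧ (∀ a, q * f a = f' (r * a)) ∧ q * m = m' * r ∧ r * m = m' * q ∧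
      ∀ b, c' (q * b + v - m' * u) = r * c b + u - m' * v := by
  have hT : ∀ a, ∃ a', ∃ t t', isT t a (f a) ∧ isT t' a' (f' a') ∧ ∀ q, j (t q) = t' (j q) := by
    intro a
    obtain ⟨t, ht⟩ := exists_isT a (f a)
    have key : ∀ q, j (t q) = (j.permCongr t) (j q) := by intro q; simp
    rcases hj t (Or.inl ⟨a, ht⟩) with ⟨a', h⟩ | ⟨b, h⟩
    · exact ⟨a', t, _, ht, h, key⟩
    · exfalso
      obtain ⟨k, hk⟩ := (Fact.out : p.Prime).odd_of_ne_two hp2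
      apply h.odd_pow k
      rw [← hk]
      have h1 : t ^ p = 1 := by
        have := ht.pow p
        simp at this
        exact this.ext (fun x => by simp)
      ext1 q
      have hpow : ∀ n : ℕ, ∀ q, (j.permCongr t ^ n) (j q) = j ((t ^ n) q) := by
        intro n
        induction n with
        | zero => simp
        | succ n ih => intro q; rw [pow_succ', pow_succ', Equiv.Perm.mul_apply, ih,
            Equiv.Perm.mul_apply, key]
      have := hpow p (j.symm q)
      rw [h1] at this
      simpa using this
  choose st t t' ht ht' hcomm using hT
  have hal : ∀ x, j (x, false) = (u0 + st x, false) := by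
    intro x
    have := hcomm x (0, false)
    rw [hj0, (ht x 0).1, (ht' x _).1] at this
    simpa using this
  have hga : ∀ x, ∃ y, j (x, true) = (y, true) := by
    intro x
    have hsur : Function.Surjective (fun x => u0 + st x) := by
      apply Finite.surjective_of_injective
      intro x y hxy
      have := j.injective ((hal x).trans ((congrArg (fun z => (z, false)) hxy).trans (hal y).symm))
      simpa using this
    rcases hjx : j (x, true) with ⟨y, _ | _⟩
    · obtain ⟨z, hz⟩ := hsur y
      have : j (z, false) = j (x, true) := by rw [hal, hjx]; simpa using hz
      simpa using j.injective this
    · exact ⟨y, rfl⟩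
  choose ga hga using hga
  have h1 : ∀ a x, u0 + st (x + a) = u0 + st x + st a := by
    intro a x
    have := hcomm a (x, false)
    rw [(ht a _).1, hal, hal, (ht' a _).1] at this
    simpa using this
  have h2 : ∀ a x, ga (x + f a) = ga x + f' (st a) := by
    intro a x
    have := hcomm a (x, true)
    rw [(ht a _).2, hga, hga, (ht' a _).2] at this
    simpa using this
  have hst0 : st 0 = 0 := by have := h1 0 0; simp at this; exact this
  have hst := affine_of_step st (st 1) (fun x => by have := h1 1 x; linear_combination this)
  simp only [hst0, add_zero] at hst
  have hgaf := affine_of_step ga (f' (st (f 1))) (fun x => by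
    have := h2 (f 1) x; rw [ff] at this; exact this)
  set r := st 1 with hr
  set q := f' (st (f 1)) with hq
  set v := ga 0 with hv
  have hal' : ∀ x, j (x, false) = (r * x + u0, false) := by
    intro x; rw [hal, hst]; congr 1; ring
  have hga' : ∀ x, j (x, true) = (q * x + v, true) := by
    intro x; rw [hga, hgaf]
  have hS : ∀ b, ∃ b', ∀ x, q * (m * x + b) + v = m' * (r * x + u0) + b' ∧
      r * (m * x + c b) + u0 = m' * (q * x + v) + c' b' := by
    intro b
    obtain ⟨t, ht⟩ := exists_isS hm hm b (c b)
    have key : ∀ q, j (t q) = (j.permCongr t) (j q) := by intro q; simp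
    rcases hj t (Or.inr ⟨b, ht⟩) with ⟨a', h⟩ | ⟨b', h⟩
    · have := key (0, false)
      rw [(ht _).1, hga', hal', (h _).1] at this
      simp at this
    · refine ⟨b', fun x => ⟨?_, ?_⟩⟩
      · have := key (x, false)
        rw [(ht _).1, hga', hal', (h _).1] at this
        simpa using this
      · have := key (x, true)
        rw [(ht _).2, hga', hal', (h _).2] at this
        simpa using this
  choose b' hb' using hS
  refine ⟨r, q, u0, v, ?_, ?_, ?_, ?_, ?_⟩
  · intro e
    have : j (0, false) = j (1, false) := by rw [hal', hal', e]; simp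
    simpa using j.injective this
  · intro a
    have e := h2 a 0
    rw [zero_add, hgaf, hst a] at e
    linear_combination e
  · have e1 := (hb' 0 0).1
    have e2 := (hb' 0 1).1
    linear_combination e2 - e1
  · have e1 := (hb' 0 0).2
    have e2 := (hb' 0 1).2
    linear_combination e2 - e1
  · intro b
    have e1 := (hb' b 0).1
    have e2 := (hb' b 0).2
    rw [show q * b + v - m' * u0 = b' b by linear_combination e1]
    linear_combination -e2

lemma uniq_F (hp2 : p ≠ 2) {f c f' c' : ZMod p → ZMod p} {m m' : ZMod p} (hm : m ≠ 0)
    (ff : ∀ a, f (f a) = a) (ff' : ∀ a, f' (f' a) = a) (cc' : ∀ a, c' (c' a) = a)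
    (h : PIso (Fset f m m c) (Fset f' m' m' c')) :
    ∃ r q u v, r ≠ 0 ∧ (∀ a, q * f a = f' (r * a)) ∧ q * m = m' * r ∧ r * m = m' * q ∧
      ∀ b, c' (q * b + v - m' * u) = r * c b + u - m' * v := by
  obtain ⟨i, hi⟩ := h
  rcases h0 : i (0, false) with ⟨u, _ | _⟩
  · exact uniq_aux hp2 hm ff i (fun t => (hi t).1) u h0
  · refine uniq_aux hp2 hm ff (i.trans swB) (fun t ht => ?_) u ?_
    · have : (i.trans swB).permCongr t = swB.permCongr (i.permCongr t) := by ext1; simp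
      rw [this]
      exact swB_F ff' cc' ((hi t).1 ht)
    · rw [Equiv.trans_apply, h0]; rfl

lemma two_ne (hp2 : p ≠ 2) : (2 : ZMod p) ≠ 0 := two_ne_zero_zmod Fact.out hp2

lemma uniq_CC {m m' : ZMod p} (hp2 : p ≠ 2) (hm : m ≠ 0) (h : PIso (Cset m) (Cset m')) :
    m = m' := by
  obtain ⟨r, q, u, v, hr, h1, h2, h3, h4⟩ := uniq_F hp2 hm (f := id) (f' := id) (c' := id)
    (fun a => rfl) (fun a => rfl) (fun a => rfl) h
  have := h1 1
  simp at this
  subst this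
  apply mul_left_cancel₀ hr
  linear_combination h2

lemma uniq_CD {m : ZMod p} {f : ZMod p → ZMod p} {k : ZMod p} (hp2 : p ≠ 2) (hm : m ≠ 0)
    (hm1 : m ≠ -1) (ff : ∀ a, f (f a) = a) (h : PIso (Cset m) (Dset f k)) : False := by
  obtain ⟨r, q, u, v, hr, h1, h2, h3, h4⟩ := uniq_F hp2 hm (f := id) 
    (fun a => rfl) ff (fun a => by simp) h
  have h5 : (m - 1) * (m + 1) * r = 0 := by linear_combination h2 + m * h3
  have h6 : m + 1 ≠ 0 := fun e => hm1 (by linear_combination e)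
  have h7 : m = 1 := by
    rcases mul_eq_zero.1 h5 with h | h
    · rcases mul_eq_zero.1 h with h | h
      · linear_combination h
      · exact absurd h h6
    · exact absurd h hr
  subst h7
  have e0 := h4 0
  have e1 := h4 1
  simp only [id] at e0 e1
  have : 2 * r = 0 := by linear_combination - e1 + e0 - h2
  exact (mul_ne_zero (two_ne hp2) hr) this

lemma uniq_DD {f f' : ZMod p → ZMod p} {k k' : ZMod p} (hp2 : p ≠ 2) 
    (ff : ∀ a, f (f a) = a) (ff' : ∀ a, f' (f' a) = a) (h : PIso (Dset f k) (Dset f' k')) :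
    ∃ r, r ≠ 0 ∧ (∀ a, f' (r * a) = r * f a) ∧ k' = r * k := by
  obtain ⟨r, q, u, v, hr, h1, h2, h3, h4⟩ := uniq_F hp2 one_ne_zero 
    ff ff' (fun a => by simp) h
  have hq : q = r := by linear_combination h2
  subst hq
  refine ⟨q, hr, fun a => (h1 a).symm, ?_⟩
  have := h4 0
  linear_combination this

lemma iso_DD {f f' : ZMod p → ZMod p} {k k' : ZMod p} (f0 : f 0 = 0) (f0' : f' 0 = 0)
    (ff : ∀ a, f (f a) = a) (ff' : ∀ a, f' (f' a) = a) {r : ZMod p} (hr : r ≠ 0)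
    (h1 : ∀ a, f' (r * a) = r * f a) (hk : k' = r * k) : PIso (Dset f k) (Dset f' k') := by
  let j : ZMod p × Bool ≃ ZMod p × Bool :=
    ⟨fun q => (r * q.1, q.2), fun q => (q.1 / r, q.2),
      by rintro ⟨x, b⟩; simp; field_simp, by rintro ⟨x, b⟩; simp; field_simp⟩
  have e1 : ∀ q, j q = (r * q.1, q.2) := fun q => rfl
  have e2 : ∀ q, j.symm q = (q.1 / r, q.2) := fun q => rfl
  apply PIso.of_sub (RCC_D f0 ff k) (RCC_D f0' ff' k') j
  rintro t (⟨a, ha⟩ | ⟨b, hb⟩)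
  · refine Or.inl ⟨r * a, fun x => ?_⟩
    rw [Equiv.permCongr_apply, Equiv.permCongr_apply, e2, e2, (ha _).1, (ha _).2, e1, e1, h1]
    constructor <;> congr 1 <;> field_simp
  · refine Or.inr ⟨r * b, fun x => ?_⟩
    rw [Equiv.permCongr_apply, Equiv.permCongr_apply, e2, e2, (hb _).1, (hb _).2, e1, e1]
    constructor <;> congr 1 <;> field_simp
    simp only [hk]; ring

end uniq

lemma zmod2_f {f : ZMod 2 → ZMod 2} (f0 : f 0 = 0) (ff : ∀ a, f (f a) = a) : f = id := by
  funext a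
  have h1 : f 1 = 1 := by
    by_contra h
    have h2 : ∀ x : ZMod 2, x ≠ 1 → x = 0 := by decide
    have := ff 1
    rw [h2 _ h, f0] at this
    simp at this
  fin_cases a
  · exact f0
  · exact h1

lemma D2_sq (k : ZMod 2) : k = 0 ↔ ∀ t ∈ Dset (p := 2) id k, t * t = 1 := by
  constructor
  · rintro rfl t (⟨a, h⟩ | ⟨b, h⟩)
    · ext1 ⟨x, _ | _⟩
      · simp only [Equiv.Perm.mul_apply, (h _).1, add_assoc, CharTwo.add_self_eq_zero, add_zero]; rfl
      · simp only [Equiv.Perm.mul_apply, (h _).2, add_assoc, CharTwo.add_self_eq_zero, add_zero]; rfl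
    · ext1 ⟨x, _ | _⟩
      · simp only [Equiv.Perm.mul_apply, (h _).1, (h _).2]
        simp [add_assoc, CharTwo.add_self_eq_zero]
      · simp only [Equiv.Perm.mul_apply, (h _).1, (h _).2]
        simp [add_assoc, CharTwo.add_self_eq_zero]
  · intro h
    obtain ⟨t, ht⟩ := exists_isS (p := 2) one_ne_zero one_ne_zero 0 (k - 0)
    have := h t (Or.inr ⟨0, ht⟩)
    have := congrArg (fun u => u (0, false)) this
    simp only [Equiv.Perm.mul_apply, (ht _).1, (ht _).2] at this
    simpa using this

lemma uniq_DD2 {f f' : ZMod 2 → ZMod 2} {k k' : ZMod 2} (f0 : f 0 = 0) (f0' : f' 0 = 0)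
    (ff : ∀ a, f (f a) = a) (ff' : ∀ a, f' (f' a) = a) (h : PIso (Dset f k) (Dset f' k')) :
    ∃ r, r ≠ 0 ∧ (∀ a, f' (r * a) = r * f a) ∧ k' = r * k := by
  rw [zmod2_f f0 ff, zmod2_f f0' ff'] at *
  refine ⟨1, one_ne_zero, by simp, ?_⟩
  have mono : ∀ k k' : ZMod 2, PIso (Dset id k) (Dset id k') → k' = 0 → k = 0 := by
    rintro k k' ⟨i, hi⟩ hk
    rw [D2_sq] at hk ⊢
    intro t ht
    have := hk _ ((hi t).1 ht)
    apply i.permCongr.injective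
    have e : i.permCongr (t * t) = i.permCongr t * i.permCongr t := by ext1; simp
    rw [e, this]; ext1; simp
  have a := mono _ _ h
  have b := mono _ _ h.symm
  revert a b
  generalize k = x
  generalize k' = y
  revert x y
  decide

section count
variable {p : ℕ}

/-- number of square roots of one in `Perm U` commuting with multiplication by `c` -/
noncomputable def Jn (p : ℕ) (c : (ZMod p)ˣ) : ℕ :=
  Nat.card {f : Perm (ZMod p)ˣ // f ^ 2 = 1 ∧ Commute f (Equiv.mulLeft c)}

def Om (p : ℕ) := {f : Perm (ZMod p)ˣ // f ^ 2 = 1} × ZMod p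

lemma conj_sq {G : Type*} [Group G] (c f : G) (h : f ^ 2 = 1) : (c * f * c⁻¹) ^ 2 = 1 := by
  rw [conj_pow, h]; simp

lemma mulLeft_mul' {G : Type*} [Group G] (c d : G) :
    (Equiv.mulLeft (c * d) : Perm G) = Equiv.mulLeft c * Equiv.mulLeft d := by
  ext; simp [mul_assoc]

instance : MulAction (ZMod p)ˣ (Om p) where
  smul c x := (⟨Equiv.mulLeft c * x.1.1 * (Equiv.mulLeft c)⁻¹, conj_sq _ _ x.1.2⟩, c * x.2)
  one_smul x := by
    refine Prod.ext (Subtype.ext ?_) ?_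
    · change Equiv.mulLeft 1 * x.1.1 * (Equiv.mulLeft 1)⁻¹ = x.1.1
      have : (Equiv.mulLeft (1 : (ZMod p)ˣ)) = 1 := by ext; simp
      rw [this]; simp
    · change ((1 : (ZMod p)ˣ) : ZMod p) * x.2 = x.2
      simp
  mul_smul c d x := by
    refine Prod.ext (Subtype.ext ?_) ?_
    · change Equiv.mulLeft (c * d) * x.1.1 * (Equiv.mulLeft (c * d))⁻¹ =
        Equiv.mulLeft c * (Equiv.mulLeft d * x.1.1 * (Equiv.mulLeft d)⁻¹) * (Equiv.mulLeft c)⁻¹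
      rw [mulLeft_mul']; group
    · change ((c * d : (ZMod p)ˣ) : ZMod p) * x.2 = c * (d * x.2)
      push_cast; ring

lemma Om.smul_eq_iff (c : (ZMod p)ˣ) (x y : Om p) :
    c • x = y ↔ (Equiv.mulLeft c * x.1.1 = y.1.1 * Equiv.mulLeft c ∧ y.2 = c * x.2) := by
  constructor
  · rintro rfl
    refine ⟨?_, rfl⟩
    change _ = Equiv.mulLeft c * x.1.1 * (Equiv.mulLeft c)⁻¹ * _
    group
  · rintro ⟨h1, h2⟩
    refine Prod.ext (Subtype.ext ?_) h2.symm
    change Equiv.mulLeft c * x.1.1 * (Equiv.mulLeft c)⁻¹ = _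
    rw [h1]; group

instance [Fact p.Prime] : Finite (Om p) := by unfold Om; infer_instance

lemma fixed_card [Fact p.Prime] (c : (ZMod p)ˣ) :
    Nat.card (MulAction.fixedBy (Om p) c) = Jn p c * (if c = 1 then p else 1) := by
  have e : MulAction.fixedBy (Om p) c ≃
      {f : Perm (ZMod p)ˣ // f ^ 2 = 1 ∧ Commute f (Equiv.mulLeft c)} × {k : ZMod p // k = c * k} :=
    { toFun := fun x => (⟨x.1.1.1, x.1.1.2, ((Om.smul_eq_iff c x.1 x.1).1 x.2).1.symm⟩,
        ⟨x.1.2, ((Om.smul_eq_iff c x.1 x.1).1 x.2).2⟩)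
      invFun := fun y => ⟨(⟨y.1.1, y.1.2.1⟩, y.2.1), (Om.smul_eq_iff c _ _).2
        ⟨y.1.2.2.symm, y.2.2⟩⟩
      left_inv := fun x => rfl
      right_inv := fun x => rfl }
  rw [Nat.card_congr e, Nat.card_prod]
  congr 1
  split_ifs with h
  · subst h
    have : Nat.card {k : ZMod p // k = ((1 : (ZMod p)ˣ) : ZMod p) * k} = Nat.card (ZMod p) :=
      Nat.card_congr (Equiv.subtypeUnivEquiv (fun k => by simp))
    rw [this]; simp
  · rw [Nat.card_eq_one_iff_unique]
    have hc : (c : ZMod p) - 1 ≠ 0 := by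
      rw [sub_ne_zero]; intro e; exact h (Units.ext (by simpa using e))
    have hz : ∀ k : ZMod p, k = c * k → k = 0 := by
      intro k hk
      have : ((c : ZMod p) - 1) * k = 0 := by linear_combination -hk
      exact (mul_eq_zero.1 this).resolve_left hc
    refine ⟨⟨fun a b => Subtype.ext ?_⟩, ⟨⟨0, by simp⟩⟩⟩
    rw [hz _ a.2, hz _ b.2]

lemma Jn_eq [Fact p.Prime] : ∃ g : (ZMod p)ˣ, orderOf g = p - 1 ∧ ∀ d, Jn p (g ^ d) = Icd (p - 1) d := by
  have hcard : Nat.card (ZMod p)ˣ = p - 1 := by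
    rw [Nat.card_eq_fintype_card, ZMod.card_units]
  obtain ⟨n, hn⟩ : ∃ n, n = p - 1 := ⟨_, rfl⟩
  rw [← hn] at hcard ⊢
  obtain ⟨ps⟩ : Nonempty (Multiplicative (ZMod n) ≃* (ZMod p)ˣ) := by
    have := zmodCyclicMulEquiv (inferInstance : IsCyclic (ZMod p)ˣ)
    rw [hcard] at this
    exact ⟨this⟩
  refine ⟨ps (Multiplicative.ofAdd 1), ?_, fun d => ?_⟩
  · rw [MulEquiv.orderOf_eq, orderOf_ofAdd_eq_addOrderOf, ZMod.addOrderOf_one]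
  · symm
    let e : ZMod n ≃ (ZMod p)ˣ := Multiplicative.ofAdd.trans ps.toEquiv
    have he : ∀ x, e x = ps (Multiplicative.ofAdd x) := fun x => rfl
    have h1 : e.permCongrHom (stdCycle n) = Equiv.mulLeft (ps (Multiplicative.ofAdd 1)) := by
      ext1 x
      obtain ⟨y, rfl⟩ := e.surjective x
      rw [Equiv.permCongrHom_coe, Equiv.permCongr_apply, Equiv.symm_apply_apply]
      simp only [stdCycle, Equiv.coe_addRight, Equiv.coe_mulLeft, he, ofAdd_add, map_mul]
      rw [mul_comm]
    have h2 : ∀ d : ℕ, (Equiv.mulLeft (ps (Multiplicative.ofAdd 1) ^ d) : Perm (ZMod p)ˣ) =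
        (Equiv.mulLeft (ps (Multiplicative.ofAdd 1))) ^ d := by
      intro d
      induction d with
      | zero => ext; simp
      | succ d ih => rw [pow_succ, pow_succ, mulLeft_mul', ih]
    refine Nat.card_congr (e.permCongrHom.toEquiv.subtypeEquiv (fun f => ?_))
    rw [h2, ← h1, ← map_pow e.permCongrHom (stdCycle n) d]
    refine and_congr ?_ ?_
    · change _ ↔ (e.permCongrHom f) ^ 2 = 1
      rw [← map_pow, map_eq_one_iff _ e.permCongrHom.injective]
    · change Commute _ _ ↔ Commute (e.permCongrHom f) _
      rw [commute_iff_eq, commute_iff_eq, ← map_mul, ← map_mul, e.permCongrHom.injective.eq_iff]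

lemma orbits_count [Fact p.Prime] :
    (p - 1) * Nat.card (Quotient (MulAction.orbitRel (ZMod p)ˣ (Om p))) =
      (p - 1) * Icd (p - 1) (p - 1) + ∑ d ∈ Finset.Icc 1 (p - 1), Icd (p - 1) d := by
  classical
  obtain ⟨g, hg, hJ⟩ := Jn_eq (p := p)
  have hpp := (Fact.out : p.Prime).one_lt
  have : Fintype (Om p) := Fintype.ofFinite _
  have hB := MulAction.sum_card_fixedBy_eq_card_orbits_mul_card_group (ZMod p)ˣ (Om p)
  rw [ZMod.card_units, mul_comm] at hB
  rw [Nat.card_eq_fintype_card, ← hB]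
  have h1 : ∀ c : (ZMod p)ˣ, Fintype.card (MulAction.fixedBy (Om p) c) =
      (if c = 1 then (p - 1) * Jn p c else 0) + Jn p c := by
    intro c
    rw [← Nat.card_eq_fintype_card, fixed_card]
    split_ifs
    · obtain ⟨k, rfl⟩ : ∃ k, p = k + 1 := ⟨p - 1, by omega⟩
      simp; ring
    · simp
  rw [Finset.sum_congr rfl (fun c _ => h1 c), Finset.sum_add_distrib]
  congr 1
  · rw [Finset.sum_ite_eq' Finset.univ (1 : (ZMod p)ˣ) (fun c => (p - 1) * Jn p c)]
    simp only [Finset.mem_univ, if_true]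
    rw [← hJ, ← hg, pow_orderOf_eq_one]
  · have hinj : Set.InjOn (fun d : ℕ => g ^ d) (Finset.Icc 1 (p - 1) : Finset ℕ) := by
      intro a ha b hb hab
      simp only [Finset.coe_Icc, Set.mem_Icc] at ha hb
      have h3 : g ^ (a - 1) = g ^ (b - 1) := by
        apply mul_right_cancel (b := g)
        rw [← pow_succ, ← pow_succ, Nat.sub_add_cancel ha.1, Nat.sub_add_cancel hb.1]
        exact hab
      have := pow_injOn_Iio_orderOf (x := g) (by simp; omega) (by simp; omega) h3
      omega
    have himg : (Finset.Icc 1 (p - 1)).image (fun d : ℕ => g ^ d) = Finset.univ := by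
      apply Finset.eq_univ_of_card
      rw [Finset.card_image_of_injOn hinj, ZMod.card_units]; simp
    rw [← himg, Finset.sum_image hinj]
    exact Finset.sum_congr rfl (fun d _ => hJ d)

end count

section fin
variable {p : ℕ} [Fact p.Prime]

noncomputable def extf (f : Perm (ZMod p)ˣ) (a : ZMod p) : ZMod p :=
  open Classical in if h : a = 0 then 0 else f (Units.mk0 a h)

lemma extf_zero (f : Perm (ZMod p)ˣ) : extf f 0 = 0 := by simp [extf]

lemma extf_unit (f : Perm (ZMod p)ˣ) (a : (ZMod p)ˣ) : extf f a = f a := by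
  simp [extf]

lemma zmod_cases (a : ZMod p) : a = 0 ∨ ∃ u : (ZMod p)ˣ, a = u := by
  by_cases h : a = 0
  · exact Or.inl h
  · exact Or.inr ⟨Units.mk0 a h, rfl⟩

lemma extf_invol (f : Perm (ZMod p)ˣ) (hf : f ^ 2 = 1) (a : ZMod p) : extf f (extf f a) = a := by
  rcases zmod_cases a with rfl | ⟨u, rfl⟩
  · simp [extf_zero]
  · rw [extf_unit, extf_unit]
    rw [sq] at hf
    rw [← Equiv.Perm.mul_apply, hf]; rfl

lemma exists_extf {g : ZMod p → ZMod p} (g0 : g 0 = 0) (gg : ∀ a, g (g a) = a) :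
    ∃ f : Perm (ZMod p)ˣ, f ^ 2 = 1 ∧ extf f = g := by
  have hne : ∀ u : (ZMod p)ˣ, g u ≠ 0 := by
    intro u e
    have := gg u
    rw [e, g0] at this
    exact u.ne_zero this.symm
  have hi : Function.Involutive (fun u : (ZMod p)ˣ => Units.mk0 (g u) (hne u)) := by
    intro u
    apply Units.ext
    simp [gg]
  refine ⟨hi.toPerm _, ?_, ?_⟩
  · rw [sq]; ext1 u; exact hi u
  · funext a
    rcases zmod_cases a with rfl | ⟨u, rfl⟩
    · rw [extf_zero, g0]
    · rw [extf_unit]; rfl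

lemma extf_comm (f f' : Perm (ZMod p)ˣ) (c : (ZMod p)ˣ) :
    (∀ a, extf f' (c * a) = c * extf f a) ↔ Equiv.mulLeft c * f = f' * Equiv.mulLeft c := by
  constructor
  · intro h
    ext1 u
    apply Units.ext
    have := h u
    rw [← Units.val_mul, extf_unit, extf_unit, ← Units.val_mul] at this
    exact this.symm
  · intro h a
    rcases zmod_cases a with rfl | ⟨u, rfl⟩
    · simp [extf_zero]
    · rw [← Units.val_mul, extf_unit, extf_unit, ← Units.val_mul]
      have := congrArg (fun t => t u) h
      exact congrArg Units.val this.symm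

noncomputable def DOm (x : Om p) : Set (Perm (ZMod p × Bool)) := Dset (extf x.1.1) x.2

lemma DOm_RCC (x : Om p) : RCC (DOm x) := RCC_D (extf_zero _) (extf_invol _ x.1.2) _

lemma DOm_iff (x y : Om p) : PIso (DOm x) (DOm y) ↔ MulAction.orbitRel (ZMod p)ˣ (Om p) x y := by
  have h1 : PIso (DOm x) (DOm y) ↔
      ∃ r, r ≠ 0 ∧ (∀ a, extf y.1.1 (r * a) = r * extf x.1.1 a) ∧ y.2 = r * x.2 := by
    constructor
    · intro h
      by_cases hp2 : p = 2
      · subst hp2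
        exact uniq_DD2 (extf_zero _) (extf_zero _) (extf_invol _ x.1.2) (extf_invol _ y.1.2) h
      · exact uniq_DD hp2 (extf_invol _ x.1.2) (extf_invol _ y.1.2) h
    · rintro ⟨r, hr, h1, h2⟩
      exact iso_DD (extf_zero _) (extf_zero _) (extf_invol _ x.1.2) (extf_invol _ y.1.2) hr h1 h2
  rw [h1, Setoid.comm', MulAction.orbitRel_apply, MulAction.mem_orbit_iff]
  constructor
  · rintro ⟨r, hr, h1, h2⟩
    refine ⟨Units.mk0 r hr, (Om.smul_eq_iff _ _ _).2 ⟨(extf_comm _ _ _).1 h1, h2⟩⟩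
  · rintro ⟨c, hc⟩
    have := (Om.smul_eq_iff _ _ _).1 hc
    exact ⟨c, c.ne_zero, (extf_comm _ _ _).2 this.1, this.2⟩

lemma ncard_range_eq {α β : Type*} (s : Setoid α) (B : α → β) (h : ∀ x y, B x = B y ↔ s x y) :
    (Set.range B).ncard = Nat.card (Quotient s) := by
  let L : Quotient s → β := Quotient.lift B (fun x y e => (h x y).2 e)
  have hL : Set.range B = Set.range L := by
    ext b
    constructor
    · rintro ⟨x, rfl⟩; exact ⟨Quotient.mk s x, rfl⟩
    · rintro ⟨q, rfl⟩
      obtain ⟨x, rfl⟩ := Quotient.exists_rep q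
      exact ⟨x, rfl⟩
  have hi : Function.Injective L := by
    intro a b
    obtain ⟨x, rfl⟩ := Quotient.exists_rep a
    obtain ⟨y, rfl⟩ := Quotient.exists_rep b
    intro e
    exact Quotient.sound ((h x y).1 e)
  rw [hL, ← Nat.card_coe_set_eq, Nat.card_range_of_injective hi]

lemma card_m : Nat.card {m : ZMod p // m ≠ 0 ∧ m ≠ -1} = p - 2 := by
  classical
  rw [Nat.card_eq_fintype_card, Fintype.card_subtype]
  have : (Finset.univ.filter (fun m : ZMod p => m ≠ 0 ∧ m ≠ -1)) = ({0, -1} : Finset (ZMod p))ᶜ := by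
    ext m; simp
  rw [this, Finset.card_compl, Finset.card_pair (by simp), ZMod.card]

end fin

lemma zmod2_no : ∀ m : ZMod 2, m ≠ 0 → m ≠ -1 → False := by decide

theorem stmt_4 (p : ℕ) (hp : p.Prime) (X : Type*) [Fintype X]
    (hX : Fintype.card X = 2 * p) :
    (p - 1) *
      (Set.image (Quotient.mk (MulAction.orbitRel (ConjAct (Equiv.Perm X)) (Set (Equiv.Perm X))))
        {T : Set (Equiv.Perm X) | (1 : Equiv.Perm X) ∈ T ∧
          (∀ i j : X, ∃! t, t ∈ T ∧ t i = j) ∧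
          (∀ s ∈ T, ∀ t ∈ T, t⁻¹ * s * t ∈ T)}).ncard =
    (p - 1) * (p - 2) + (p - 1) * Icd (p - 1) (p - 1) +
      ∑ d ∈ Finset.Icc 1 (p - 1), Icd (p - 1) d := by
  have := Fact.mk hp
  obtain ⟨j⟩ : Nonempty (ZMod p × Bool ≃ X) := by
    rw [← Fintype.card_eq, hX]; simp [mul_comm]
  let tr : Set (Perm (ZMod p × Bool)) → Set (Perm X) := fun S => {t | j.symm.permCongr t ∈ S}
  have htr : ∀ S, PIso (tr S) S := fun S => ⟨j.symm, fun t => Iff.rfl⟩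
  let Φ : Set (Perm (ZMod p × Bool)) →
      Quotient (MulAction.orbitRel (ConjAct (Equiv.Perm X)) (Set (Equiv.Perm X))) :=
    fun S => Quotient.mk _ (tr S)
  have hΦ : ∀ S S', Φ S = Φ S' ↔ PIso S S' := by
    intro S S'
    refine Quotient.eq.trans (orbitRel_iff_piso.trans ?_)
    exact ⟨fun h => (htr S).symm.trans (h.trans (htr S')),
      fun h => (htr S).trans (h.trans (htr S').symm)⟩
  let A : {m : ZMod p // m ≠ 0 ∧ m ≠ -1} → _ := fun m => Φ (Cset m.1)
  let B : Om p → _ := fun x => Φ (DOm x)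
  have no2 : ∀ m : ZMod p, m ≠ 0 → m ≠ -1 → p ≠ 2 := by
    rintro m h0 h1 rfl
    exact zmod2_no m h0 h1
  have himg : (Set.image (Quotient.mk (MulAction.orbitRel (ConjAct (Perm X)) (Set (Perm X))))
        {T : Set (Perm X) | (1 : Perm X) ∈ T ∧
          (∀ i j : X, ∃! t, t ∈ T ∧ t i = j) ∧
          (∀ s ∈ T, ∀ t ∈ T, t⁻¹ * s * t ∈ T)}) = Set.range A ∪ Set.range B := by
    apply Set.Subset.antisymm
    · rintro _ ⟨T, hT, rfl⟩
      have hT : RCC T := hT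
      obtain ⟨S, hS, h1⟩ := hT.coords2 hp hX
      have hSR := hT.of_piso hS
      obtain ⟨f, M, N, c, hD⟩ := RCC.dat hp hSR h1
      rcases hD.classify hSR with ⟨m, h0, h1, h2⟩ | ⟨g, g0, gg, k, h2⟩
      · left
        refine ⟨⟨m, h0, h1⟩, Quotient.sound ?_⟩
        exact orbitRel_iff_piso.2 ((htr _).trans (h2.symm.trans hS))
      · right
        obtain ⟨f, hf, rfl⟩ := exists_extf g0 gg
        refine ⟨(⟨f, hf⟩, k), Quotient.sound ?_⟩
        exact orbitRel_iff_piso.2 ((htr _).trans (h2.symm.trans hS))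
    · rintro _ (⟨m, rfl⟩ | ⟨x, rfl⟩)
      · exact ⟨_, (RCC_C m.2.1).of_piso (htr _), rfl⟩
      · exact ⟨_, (DOm_RCC x).of_piso (htr _), rfl⟩
  have hdis : Disjoint (Set.range A) (Set.range B) := by
    rw [Set.disjoint_left]
    rintro _ ⟨m, rfl⟩ ⟨x, e⟩
    exact uniq_CD (no2 m m.2.1 m.2.2) m.2.1 m.2.2 (extf_invol _ x.1.2) ((hΦ _ _).1 e.symm)
  have hA : Function.Injective A := by
    intro m m' e
    exact Subtype.ext (uniq_CC (no2 m m.2.1 m.2.2) m.2.1 ((hΦ _ _).1 e))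
  rw [himg, Set.ncard_union_eq hdis (Set.finite_range _) (Set.finite_range _),
    ncard_range_eq (MulAction.orbitRel (ZMod p)ˣ (Om p)) B
      (fun x y => (hΦ _ _).trans (DOm_iff x y)),
    ← Nat.card_coe_set_eq, Nat.card_range_of_injective hA, card_m, mul_add, orbits_count]
  ring
end

section
/- Let n, d, e, f be positive integers with d dividing n and gcd(e, n/d) = 1, and let ζ ∈ S_n be an n-cycle. Then I_{n,de} = I_{n,d} and I_{n,f} = I_{n,gcd(n,f)}. Moreover, I_{n,d} = Σ_{k=0}^{⌊d/2⌋} d!·(n/d)^k·c^{d−2k} / (2^k·k!·(d−2k)!), where c = 2 if n/d is even and c = 1 if n/d is odd. In particular, I_n = Σ_{k=0}^{⌊n/2⌋} n! / (2^k·k!·(n−2k)!). -/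
theorem aux_commute (n f : ℕ) (τ : Equiv.Perm (ZMod n)) :
    Commute τ (stdCycle n ^ f) ↔ Commute τ (stdCycle n ^ Nat.gcd n f) := by
  have hz : ∀ k : ℕ, ∀ x, (stdCycle n ^ k) x = x + k := by
    intro k
    induction k with
    | zero => simp
    | succ k ih => intro x; rw [pow_succ', Equiv.Perm.mul_apply, ih]; simp [stdCycle, add_assoc]
  have hn : stdCycle n ^ n = 1 := by ext x; simp [hz]
  constructor
  · intro h
    have : stdCycle n ^ Nat.gcd n f = (stdCycle n ^ f) ^ (Nat.gcdB n f) := by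
      rw [← zpow_natCast, Nat.gcd_eq_gcd_ab, zpow_add, zpow_mul, zpow_mul, zpow_natCast,
        zpow_natCast, hn, one_zpow, one_mul]
    rw [this]
    exact h.zpow_right _
  · intro h
    obtain ⟨c, hc⟩ := Nat.gcd_dvd_right n f
    rw [hc, pow_mul]
    exact h.pow_right _

theorem stdCycle_pow_apply (n k : ℕ) (x : ZMod n) : (stdCycle n ^ k) x = x + k := by
  induction k generalizing x with
  | zero => simp
  | succ k ih => rw [pow_succ', Equiv.Perm.mul_apply, ih]; simp [stdCycle, add_assoc]

theorem Icd_gcd (n f : ℕ) : Icd n f = Icd n (Nat.gcd n f) := by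
  unfold Icd
  exact Nat.card_congr (Equiv.subtypeEquivRight fun τ => by rw [aux_commute])

theorem exists_model (d m : ℕ) (hd : 0 < d) (hm : 0 < m) :
    ∃ E : Fin d × ZMod m ≃ ZMod (d * m), ∀ p, E (p.1, p.2 + 1) = E p + d := by
  have : NeZero m := ⟨hm.ne'⟩
  have : NeZero d := ⟨hd.ne'⟩
  have : NeZero (d * m) := ⟨(Nat.mul_pos hd hm).ne'⟩
  let g : Fin d × ZMod m → ZMod (d * m) := fun p => ((p.1.val + d * p.2.val : ℕ) : ZMod (d * m))
  have hg : Function.Bijective g := by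
    rw [Fintype.bijective_iff_surjective_and_card]
    constructor
    · intro y
      refine ⟨(⟨y.val % d, Nat.mod_lt _ hd⟩, ((y.val / d : ℕ) : ZMod m)), ?_⟩
      have h1 : y.val / d < m := by
        rw [Nat.div_lt_iff_lt_mul hd]; exact lt_of_lt_of_eq y.val_lt (mul_comm d m)
      simp only [g]
      rw [ZMod.val_natCast_of_lt h1, Nat.mod_add_div, ZMod.natCast_zmod_val]
    · simp [ZMod.card]
  refine ⟨Equiv.ofBijective g hg, ?_⟩
  rintro ⟨i, x⟩
  simp only [Equiv.ofBijective_apply, g]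
  rw [← Nat.cast_add, ZMod.natCast_eq_natCast_iff]
  have h : (x + 1).val ≡ x.val + 1 [MOD m] := by
    rw [← ZMod.natCast_eq_natCast_iff]; simp
  have := (h.mul_left' d).add_left i.val
  rw [mul_add, mul_one, ← add_assoc] at this
  exact this

theorem card_transfer (d m : ℕ) (hd : 0 < d) (hm : 0 < m) :
    Icd (d * m) d = Nat.card {τ : Equiv.Perm (Fin d × ZMod m) // (∀ p, τ (τ p) = p) ∧
      ∀ p, τ (p.1, p.2 + 1) = ((τ p).1, (τ p).2 + 1)} := by
  obtain ⟨E, hE⟩ := exists_model d m hd hm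
  unfold Icd
  symm
  refine Nat.card_congr (Equiv.subtypeEquiv E.permCongr fun τ => ?_)
  refine and_congr ?_ ?_
  · rw [Equiv.ext_iff]
    constructor
    · intro h x
      simp [pow_two, h]
    · intro h p
      have := h (E p)
      simpa [pow_two] using this
  · rw [Commute, SemiconjBy, Equiv.ext_iff]
    constructor
    · intro h x
      obtain ⟨p, rfl⟩ := E.surjective x
      simp [stdCycle_pow_apply, ← hE, h]
    · intro h p
      have := h (E p)
      simpa [stdCycle_pow_apply, ← hE] using this

theorem card_model (d m : ℕ) (hm : 0 < m) :
    Nat.card {τ : Equiv.Perm (Fin d × ZMod m) // (∀ p, τ (τ p) = p) ∧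
      ∀ p, τ (p.1, p.2 + 1) = ((τ p).1, (τ p).2 + 1)} =
    Nat.card (Σ σ : {σ : Equiv.Perm (Fin d) // ∀ i, σ (σ i) = i},
      {a : Fin d → ZMod m // ∀ i, a (σ.1 i) + a i = 0}) := by
  have : NeZero m := ⟨hm.ne'⟩
  symm
  have hinv : ∀ s : (Σ σ : {σ : Equiv.Perm (Fin d) // ∀ i, σ (σ i) = i},
      {a : Fin d → ZMod m // ∀ i, a (σ.1 i) + a i = 0}),
      Function.Involutive (fun p : Fin d × ZMod m => (s.1.1 p.1, s.2.1 p.1 + p.2)) := by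
    rintro ⟨⟨σ, hσ⟩, ⟨a, ha⟩⟩ ⟨i, x⟩
    simp only [hσ, ← add_assoc, ha, zero_add]
  refine Nat.card_congr (Equiv.ofBijective
    (fun s => ⟨(hinv s).toPerm, fun p => hinv s p, fun p => by
      simp [Function.Involutive.toPerm, add_assoc]⟩) ⟨?_, ?_⟩)
  · rintro ⟨⟨σ, hσ⟩, ⟨a, ha⟩⟩ ⟨⟨σ', hσ'⟩, ⟨a', ha'⟩⟩ h
    have h1 : ∀ p : Fin d × ZMod m, (σ p.1, a p.1 + p.2) = (σ' p.1, a' p.1 + p.2) := by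
      intro p
      exact congrArg (fun t => t.1 p) h
    have e1 : σ = σ' := Equiv.ext fun i => congrArg Prod.fst (h1 (i, 0))
    have e2 : a = a' := by
      funext i
      simpa using congrArg Prod.snd (h1 (i, 0))
    subst e1 e2
    rfl
  · rintro ⟨τ, h1, h2⟩
    have key : ∀ (k : ℕ) (i : Fin d) (x : ZMod m), τ (i, x + k) = ((τ (i, x)).1, (τ (i, x)).2 + k) := by
      intro k i x
      induction k with
      | zero => simp
      | succ k ih =>
        have := h2 (i, x + k)
        simp only [ih] at this
        rw [Nat.cast_succ, ← add_assoc, ← add_assoc, this]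
    have key' : ∀ i x, τ (i, x) = ((τ (i, 0)).1, (τ (i, 0)).2 + x) := by
      intro i x
      have := key x.val i 0
      rwa [ZMod.natCast_zmod_val, zero_add] at this
    have hh : ∀ i, ((τ ((τ (i, 0)).1, 0)).1, (τ ((τ (i, 0)).1, 0)).2 + (τ (i, 0)).2) = (i, (0 : ZMod m)) := by
      intro i
      rw [← key']
      exact h1 (i, 0)
    have hs : Function.Involutive (fun i => (τ (i, 0)).1) := fun i => congrArg Prod.fst (hh i)
    refine ⟨⟨⟨hs.toPerm, hs⟩, ⟨fun i => (τ (i, 0)).2, fun i => congrArg Prod.snd (hh i)⟩⟩, ?_⟩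
    apply Subtype.ext
    apply Equiv.ext
    rintro ⟨i, x⟩
    exact (key' i x).symm

theorem card_two_torsion (m : ℕ) (hm : 0 < m) :
    Nat.card {x : ZMod m // x + x = 0} = if m % 2 = 0 then 2 else 1 := by
  have : NeZero m := ⟨hm.ne'⟩
  split_ifs with h
  · obtain ⟨k, rfl⟩ : ∃ k, m = 2 * k := ⟨m / 2, by omega⟩
    have hk : 0 < k := by omega
    rw [Nat.card_eq_two_iff]
    have h2 : ((k : ℕ) : ZMod (2 * k)) ≠ 0 := by
      rw [Ne, ZMod.natCast_eq_zero_iff]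
      exact fun hh => by have := Nat.le_of_dvd hk hh; omega
    refine ⟨⟨0, by simp⟩, ⟨(k : ℕ), by rw [← Nat.cast_add, ← two_mul]; exact ZMod.natCast_self _⟩, ?_, ?_⟩
    · intro hh
      exact h2 (congrArg Subtype.val hh).symm
    · ext ⟨x, hx⟩
      simp only [Set.mem_insert_iff, Set.mem_singleton_iff, Set.mem_univ, iff_true, Subtype.mk.injEq]
      have h3 : ((x.val + x.val : ℕ) : ZMod (2 * k)) = 0 := by simpa using hx
      rw [ZMod.natCast_eq_zero_iff] at h3
      have h4 := x.val_lt
      obtain ⟨c, hc⟩ := h3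
      have h5 : x.val = k * c := by nlinarith
      have h6 : c < 2 := by
        by_contra hcon
        have : k * 2 ≤ k * c := Nat.mul_le_mul_left k (by omega)
        omega
      rw [← ZMod.natCast_zmod_val x, h5]
      interval_cases c <;> simp
  · rw [Nat.card_eq_one_iff_unique]
    refine ⟨⟨?_⟩, ⟨0, by simp⟩⟩
    have hz : ∀ x : ZMod m, x + x = 0 → x = 0 := by
      intro x hx
      have h3 : ((2 * x.val : ℕ) : ZMod m) = 0 := by simpa [two_mul] using hx
      rw [ZMod.natCast_eq_zero_iff] at h3
      have hc : Nat.Coprime m 2 := (Nat.coprime_two_right).2 (Nat.odd_iff.2 (by omega))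
      have := hc.dvd_of_dvd_mul_left h3
      rw [← ZMod.natCast_eq_zero_iff] at this
      simpa using this
    rintro ⟨x, hx⟩ ⟨y, hy⟩
    simp [hz x hx, hz y hy]

theorem fiber_equiv (d m : ℕ) (σ : Equiv.Perm (Fin d)) (hσ : ∀ i, σ (σ i) = i) :
    Nonempty ({a : Fin d → ZMod m // ∀ i, a (σ i) + a i = 0} ≃
      ({i // σ i = i} → {x : ZMod m // x + x = 0}) × ({i // i < σ i} → ZMod m)) := by
  refine ⟨Equiv.ofBijective (fun a => (fun i => ⟨a.1 i.1, by have := a.2 i.1; rwa [i.2] at this⟩,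
    fun i => a.1 i.1)) ⟨?_, ?_⟩⟩
  · rintro ⟨a, ha⟩ ⟨b, hb⟩ h
    simp only [Prod.mk.injEq, funext_iff, Subtype.forall, Subtype.mk.injEq] at h
    apply Subtype.ext
    funext i
    rcases lt_trichotomy i (σ i) with h1 | h1 | h1
    · exact h.2 i h1
    · exact h.1 i h1.symm
    · have := h.2 (σ i) (by rwa [hσ])
      have e1 := ha i
      have e2 := hb i
      rw [this] at e1
      exact add_left_cancel (e1.trans e2.symm)
  · rintro ⟨u, v⟩
    refine ⟨⟨fun i => if h : σ i = i then (u ⟨i, h⟩).1 else if h' : i < σ i then v ⟨i, h'⟩ else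
      if h'' : σ i < σ (σ i) then - v ⟨σ i, h''⟩ else 0, ?_⟩, ?_⟩
    · intro i
      rcases lt_trichotomy i (σ i) with h1 | h1 | h1
      · have a1 : ¬ σ i = i := h1.ne'
        have a2 : ¬ i = σ i := h1.ne
        simp [hσ, h1, a1, a2, h1.not_gt]
      · have := (u ⟨i, h1.symm⟩).2
        simpa [← h1] using this
      · have a1 : ¬ σ i = i := h1.ne
        have a2 : ¬ i = σ i := h1.ne'
        simp [hσ, h1, a1, a2, h1.not_gt]
    · apply Prod.ext
      · funext i
        apply Subtype.ext
        simp [i.2]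
      · funext i
        simp [i.2, i.2.ne']

theorem cards (d : ℕ) (σ : Equiv.Perm (Fin d)) (hσ : ∀ i, σ (σ i) = i) (k : ℕ)
    (hk : σ.support.card = 2 * k) :
    Nat.card {i // σ i = i} = d - 2 * k ∧ Nat.card {i // i < σ i} = k := by
  classical
  constructor
  · rw [Nat.card_eq_fintype_card, Fintype.card_subtype]
    have : (Finset.univ.filter fun i => σ i = i) = σ.supportᶜ := by ext; simp
    rw [this, Finset.card_compl, hk, Fintype.card_fin]
  · rw [Nat.card_eq_fintype_card, Fintype.card_subtype]
    have h1 : σ.support = (Finset.univ.filter fun i => i < σ i) ∪ (Finset.univ.filter fun i => σ i < i) := by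
      ext i; simp [lt_or_lt_iff_ne, eq_comm]
    have h2 : Disjoint (Finset.univ.filter fun i => i < σ i) (Finset.univ.filter fun i => σ i < i) := by
      rw [Finset.disjoint_filter]
      intro i _ h; exact h.not_gt
    have h3 : (Finset.univ.filter fun i => σ i < i) = (Finset.univ.filter fun i => i < σ i).map σ.toEmbedding := by
      ext i
      simp only [Finset.mem_filter, Finset.mem_univ, true_and, Finset.mem_map, Equiv.coe_toEmbedding]
      constructor
      · intro h; exact ⟨σ i, by rwa [hσ], hσ i⟩
      · rintro ⟨j, hj, rfl⟩; rwa [hσ]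
    rw [h1, Finset.card_union_of_disjoint h2, h3, Finset.card_map] at hk
    omega

theorem fiber_card (d m : ℕ) (hm : 0 < m) (σ : Equiv.Perm (Fin d)) (hσ : ∀ i, σ (σ i) = i) (k : ℕ)
    (hk : σ.cycleType = Multiset.replicate k 2) :
    Nat.card {a : Fin d → ZMod m // ∀ i, a (σ i) + a i = 0} =
      m ^ k * (if m % 2 = 0 then 2 else 1) ^ (d - 2 * k) := by
  have : NeZero m := ⟨hm.ne'⟩
  obtain ⟨E⟩ := fiber_equiv d m σ hσ
  have hs : σ.support.card = 2 * k := by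
    rw [← Equiv.Perm.sum_cycleType, hk]; simp [mul_comm]
  obtain ⟨c1, c2⟩ := cards d σ hσ k hs
  rw [Nat.card_congr E, Nat.card_prod, Nat.card_fun, Nat.card_fun, c1, c2, card_two_torsion m hm,
    Nat.card_zmod, mul_comm]

theorem inv_iff (d : ℕ) (σ : Equiv.Perm (Fin d)) (h : ∀ i, σ (σ i) = i) :
    ∃ k ∈ Finset.range (d / 2 + 1), σ.cycleType = Multiset.replicate k 2 := by
  have h1 : σ ^ 2 = 1 := by ext i; simp [pow_two, h]
  rw [Equiv.Perm.pow_prime_eq_one_iff] at h1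
  have h2 := Multiset.eq_replicate_card.2 h1
  refine ⟨_, ?_, h2⟩
  have h3 : σ.support.card = 2 * σ.cycleType.card := by
    rw [← Equiv.Perm.sum_cycleType, h2]; simp [mul_comm]
  have h4 := Finset.card_le_univ σ.support
  rw [Fintype.card_fin] at h4
  rw [Finset.mem_range]; omega

theorem main_formula (d m : ℕ) (hd : 0 < d) (hm : 0 < m) :
    Icd (d * m) d = ∑ k ∈ Finset.range (d / 2 + 1),
      d.factorial * m ^ k * (if m % 2 = 0 then 2 else 1) ^ (d - 2 * k) /
        (2 ^ k * k.factorial * (d - 2 * k).factorial) := by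
  classical
  have : NeZero m := ⟨hm.ne'⟩
  rw [card_transfer d m hd hm, card_model d m hm, Nat.card_sigma]
  rw [← Finset.sum_subtype (Finset.univ.filter fun σ : Equiv.Perm (Fin d) => ∀ i, σ (σ i) = i)
    (by simp) (fun σ => Nat.card {a : Fin d → ZMod m // ∀ i, a (σ i) + a i = 0})]
  have hU : (Finset.univ.filter fun σ : Equiv.Perm (Fin d) => ∀ i, σ (σ i) = i) =
      (Finset.range (d / 2 + 1)).biUnion fun k =>
        Finset.univ.filter fun σ : Equiv.Perm (Fin d) => σ.cycleType = Multiset.replicate k 2 := by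
    ext σ
    simp only [Finset.mem_filter, Finset.mem_univ, true_and, Finset.mem_biUnion]
    constructor
    · exact inv_iff d σ
    · rintro ⟨k, -, hk⟩
      have h1 : σ ^ 2 = 1 := by
        rw [Equiv.Perm.pow_prime_eq_one_iff, hk]
        intro c hc; exact Multiset.eq_of_mem_replicate hc
      intro i
      simpa [pow_two] using Equiv.ext_iff.1 h1 i
  have hinv : ∀ k ∈ Finset.range (d / 2 + 1), ∀ σ : Equiv.Perm (Fin d),
      σ.cycleType = Multiset.replicate k 2 → ∀ i, σ (σ i) = i := by
    intro k hk σ hσ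
    have : σ ∈ (Finset.univ.filter fun σ : Equiv.Perm (Fin d) => ∀ i, σ (σ i) = i) := by
      rw [hU]; simp only [Finset.mem_biUnion]; exact ⟨k, hk, by simpa using hσ⟩
    simpa using this
  rw [hU, Finset.sum_biUnion]
  · apply Finset.sum_congr rfl
    intro k hk
    rw [Finset.sum_congr rfl (g := fun _ => m ^ k * (if m % 2 = 0 then 2 else 1) ^ (d - 2 * k))]
    · rw [Finset.sum_const, smul_eq_mul]
      have hc := Equiv.Perm.card_of_cycleType_mul_eq (Fin d) (Multiset.replicate k 2)
      have hk' := Finset.mem_range.1 hk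
      rw [if_pos ⟨by simp; omega, fun a ha => (Multiset.eq_of_mem_replicate ha).ge⟩] at hc
      have hp : ∏ n ∈ (Multiset.replicate k 2).toFinset, ((Multiset.replicate k 2).count n).factorial = k.factorial := by
        rcases Nat.eq_zero_or_pos k with rfl | h0
        · simp
        · rw [Multiset.toFinset_replicate, if_neg h0.ne']; simp
      rw [hp] at hc
      simp only [Multiset.sum_replicate, Multiset.prod_replicate, Fintype.card_fin, smul_eq_mul] at hc
      symm
      apply Nat.div_eq_of_eq_mul_left (by positivity)
      rw [← hc, mul_comm k 2]
      ring
    · intro σ hσ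
      have hσ' : σ.cycleType = Multiset.replicate k 2 := by simpa using hσ
      exact fiber_card d m hm σ (hinv k hk σ hσ') k hσ'
  · intro k _ l _ hkl
    simp only [Function.onFun]
    rw [Finset.disjoint_filter]
    intro σ _ h1 h2
    exact hkl (Multiset.replicate_left_injective 2 (h1.symm.trans h2))

theorem stmt_5 (n d e f : ℕ) (hn : 0 < n) (hd : 0 < d) (he : 0 < e) (hf : 0 < f)
    (hdvd : d ∣ n) (hcop : Nat.gcd e (n / d) = 1) :
    Icd n (d * e) = Icd n d ∧
    Icd n f = Icd n (Nat.gcd n f) ∧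
    Icd n d = ∑ k ∈ Finset.range (d / 2 + 1),
      d.factorial * (n / d) ^ k * (if (n / d) % 2 = 0 then 2 else 1) ^ (d - 2 * k) /
        (2 ^ k * k.factorial * (d - 2 * k).factorial) ∧
    Icd n n = ∑ k ∈ Finset.range (n / 2 + 1),
      n.factorial / (2 ^ k * k.factorial * (n - 2 * k).factorial) := by
  refine ⟨?_, Icd_gcd n f, ?_, ?_⟩
  · obtain ⟨m, rfl⟩ := hdvd
    rw [Nat.mul_div_cancel_left _ hd] at hcop
    rw [Icd_gcd, Nat.gcd_mul_left, Nat.gcd_comm, hcop, mul_one]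
  · obtain ⟨m, rfl⟩ := hdvd
    rw [Nat.mul_div_cancel_left _ hd]
    exact main_formula d m hd (Nat.pos_of_mul_pos_left hn)
  · have := main_formula n 1 hn one_pos
    simpa using this
end

section
/- Let F be a finite field with q := |F| > 2, let G = GL(2, F), and let H be the subgroup of G consisting of all matrices with first row (α, 0) and second row (β, 1), where α ∈ Fˣ and β ∈ F. Then there exists an element t ∈ G of multiplicative order q² − 1 such that, setting T := {g⁻¹tg : g ∈ G} ∪ Z(G), the triple (G, H, T) is a faithful RCC loop folder of order q² − 1 with ⟨T⟩ = G. In other words, T contains the identity, has q² − 1 elements, is closed under conjugation by G, is a transversal for the right cosets of every conjugate of H in G, generates G, and the core of H in G is trivial; hence there is an RCC loop of order q² − 1 whose right multiplication group is isomorphic to GL(2, q). -/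
/-- A loop folder `(G, H, T)`: `T` contains `1` and is a transversal for the right cosets
of every conjugate `H^g = g⁻¹Hg` of `H` in `G` (note `H^g x = H^g t ↔ g*(x*t⁻¹)*g⁻¹ ∈ H`). -/
def IsLoopFolder {G : Type*} [Group G] (H : Subgroup G) (T : Set G) : Prop :=
  (1 : G) ∈ T ∧ ∀ g x : G, ∃! t, t ∈ T ∧ g * (x * t⁻¹) * g⁻¹ ∈ H

/-- The loop folder is right conjugacy closed: `T` is invariant under conjugation by `G`. -/
def IsRCC {G : Type*} [Group G] (T : Set G) : Prop :=
  ∀ t ∈ T, ∀ g : G, g⁻¹ * t * g ∈ T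

/-- The loop folder is faithful: the core `⋂_{g ∈ G} g⁻¹Hg` of `H` in `G` is trivial. -/
def IsFaithfulFolder {G : Type*} [Group G] (H : Subgroup G) : Prop :=
  ∀ x : G, (∀ g : G, g * x * g⁻¹ ∈ H) → x = 1

open Matrix

/-- The subgroup of `GL(2, F)` of matrices with first row `(α, 0)` and second row
`(β, 1)`, `α ∈ Fˣ`, `β ∈ F` (the conditions "`(0,1)`-entry `0`" and "`(1,1)`-entry `1`"
suffice, invertibility forcing `α ≠ 0`). -/
def lowerTriangularH (F : Type*) [Field F] : Subgroup (GL (Fin 2) F) where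
  carrier := {g | (g : Matrix (Fin 2) (Fin 2) F) 0 1 = 0 ∧
    (g : Matrix (Fin 2) (Fin 2) F) 1 1 = 1}
  one_mem' := by
    constructor <;> simp [Matrix.one_apply]
  mul_mem' := by
    rintro A B ⟨hA1, hA2⟩ ⟨hB1, hB2⟩
    constructor
    · show ((A : Matrix (Fin 2) (Fin 2) F) * (B : Matrix (Fin 2) (Fin 2) F)) 0 1 = 0
      rw [Matrix.mul_apply, Fin.sum_univ_two, hA1, hB1]
      ring
    · show ((A : Matrix (Fin 2) (Fin 2) F) * (B : Matrix (Fin 2) (Fin 2) F)) 1 1 = 1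
      rw [Matrix.mul_apply, Fin.sum_univ_two, hB1, hB2, hA2]
      ring
  inv_mem' := by
    rintro A ⟨hA1, hA2⟩
    have h : ((A⁻¹ : GL (Fin 2) F) : Matrix (Fin 2) (Fin 2) F) *
        (A : Matrix (Fin 2) (Fin 2) F) = 1 := by
      rw [← Units.val_mul, inv_mul_cancel, Units.val_one]
    have e1 : (((A⁻¹ : GL (Fin 2) F) : Matrix (Fin 2) (Fin 2) F) *
        (A : Matrix (Fin 2) (Fin 2) F)) 0 1 = (1 : Matrix (Fin 2) (Fin 2) F) 0 1 := by
      rw [h]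
    have e2 : (((A⁻¹ : GL (Fin 2) F) : Matrix (Fin 2) (Fin 2) F) *
        (A : Matrix (Fin 2) (Fin 2) F)) 1 1 = (1 : Matrix (Fin 2) (Fin 2) F) 1 1 := by
      rw [h]
    rw [Matrix.mul_apply, Fin.sum_univ_two, hA1, hA2, mul_zero, mul_one, zero_add,
      Matrix.one_apply_ne (by decide : (0 : Fin 2) ≠ 1)] at e1
    rw [Matrix.mul_apply, Fin.sum_univ_two, hA1, hA2, mul_zero, mul_one, zero_add,
      Matrix.one_apply_eq] at e2
    exact ⟨e1, e2⟩


section helpers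
variable {F : Type*} [Field F]

lemma singer_exists (F : Type*) [Field F] [Fintype F] :
    ∃ t : GL (Fin 2) F, orderOf t = Fintype.card F ^ 2 - 1 ∧
      (∀ c : F, (t.1 0 0 - c) * (t.1 1 1 - c) - t.1 0 1 * t.1 1 0 ≠ 0) ∧
      (∀ a : F, a ≠ 0 → ∃ k : ℕ, (t ^ k).1.det = a) := by
  classical
  obtain ⟨p, hp⟩ := CharP.exists F
  have : Fact p.Prime := ⟨CharP.char_is_prime F p⟩
  let K := FiniteField.Extension F p 2
  have hfr : Module.finrank F K = 2 := FiniteField.finrank_extension F p 2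
  have hcard : Nat.card K = Fintype.card F ^ 2 := by
    rw [FiniteField.natCard_extension, Nat.card_eq_fintype_card]
  let b : Module.Basis (Fin 2) F K := Module.finBasisOfFinrankEq F K hfr
  obtain ⟨z, hz⟩ := IsCyclic.exists_generator (α := Kˣ)
  let φ : Kˣ →* GL (Fin 2) F := Units.map (Algebra.leftMulMatrix b : K →* Matrix (Fin 2) (Fin 2) F)
  have hφ : Function.Injective φ := Units.map_injective (Algebra.leftMulMatrix_injective b)
  have hord : orderOf z = Fintype.card F ^ 2 - 1 := by
    rw [orderOf_eq_card_of_forall_mem_zpowers hz, Nat.card_units, hcard]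
  refine ⟨φ z, ?_, ?_, ?_⟩
  · rw [orderOf_injective φ hφ, hord]
  · intro c hc
    have h1 : (Algebra.leftMulMatrix b ((z : K) - algebraMap F K c)).det = 0 := by
      rw [map_sub, AlgHom.commutes, Matrix.det_fin_two]
      have hc' : ((Algebra.leftMulMatrix b) (z : K) 0 0 - c) * ((Algebra.leftMulMatrix b) (z : K) 1 1 - c) -
        (Algebra.leftMulMatrix b) (z : K) 0 1 * (Algebra.leftMulMatrix b) (z : K) 1 0 = 0 := hc
      simpa [Matrix.algebraMap_matrix_apply] using hc'
    rw [← Algebra.norm_eq_matrix_det, Algebra.norm_eq_zero_iff, sub_eq_zero] at h1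
    have hc0 : c ≠ 0 := by
      rintro rfl
      simp at h1
    have h2 : z ^ (Fintype.card F - 1) = 1 := by
      ext
      rw [Units.val_pow_eq_pow_val, h1, ← map_pow, FiniteField.pow_card_sub_one_eq_one c hc0]
      simp
    have h3 := orderOf_dvd_of_pow_eq_one h2
    rw [hord] at h3
    have h4 := Fintype.one_lt_card (α := F)
    have h5 := Nat.le_of_dvd (by omega) h3
    have h6 : Fintype.card F * 2 ≤ Fintype.card F ^ 2 := by nlinarith
    omega
  · intro a ha
    obtain ⟨y, hy⟩ := FiniteField.unitsMap_norm_surjective F K (Units.mk0 a ha)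
    obtain ⟨k, hk⟩ := (mem_powers_iff_mem_zpowers.mpr (hz y) : y ∈ Submonoid.powers z)
    refine ⟨k, ?_⟩
    rw [← map_pow]
    have : z ^ k = y := hk
    rw [this]
    have h := congrArg Units.val hy
    simp only [Units.coe_map, Units.val_mk0] at h
    rw [← h]
    exact (Algebra.norm_eq_matrix_det b _).symm

lemma mem_center_fin_two (s : GL (Fin 2) F) : s ∈ Subgroup.center (GL (Fin 2) F) ↔
    s.1 0 1 = 0 ∧ s.1 1 0 = 0 ∧ s.1 0 0 = s.1 1 1 := by
  rw [Matrix.GeneralLinearGroup.mem_center_iff_val_mem_range_scalar]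
  constructor
  · rintro ⟨a, h⟩
    rw [← h]; simp
  · rintro ⟨h1, h2, h3⟩
    refine ⟨s.1 0 0, ?_⟩
    ext i j
    fin_cases i <;> fin_cases j <;> simp [h1, h2, h3]

lemma det_ne (s : GL (Fin 2) F) : s.1 0 0 * s.1 1 1 - s.1 0 1 * s.1 1 0 ≠ 0 := by
  have := s.det_ne_zero
  rwa [Matrix.det_fin_two] at this

lemma conj_companion (s : GL (Fin 2) F) (h : s.1 1 0 ≠ 0) (C : GL (Fin 2) F)
    (hC : C.1 = !![0, -s.1.det; 1, s.1.trace]) : ∃ P : GL (Fin 2) F, s = P * C * P⁻¹ := by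
  refine ⟨Matrix.GeneralLinearGroup.mkOfDetNeZero !![1, s.1 0 0; 0, s.1 1 0] (by simpa using h), ?_⟩
  rw [eq_mul_inv_iff_mul_eq]
  apply Units.ext
  rw [Units.val_mul, Units.val_mul, hC]
  ext i j
  fin_cases i <;> fin_cases j <;>
    simp [Matrix.GeneralLinearGroup.mkOfDetNeZero, Matrix.mul_apply, Fin.sum_univ_two,
      Matrix.trace_fin_two, Matrix.det_fin_two] <;> ring

lemma mem_class_iff (t : GL (Fin 2) F)
    (ht : ∀ c : F, (t.1 0 0 - c) * (t.1 1 1 - c) - t.1 0 1 * t.1 1 0 ≠ 0) (s : GL (Fin 2) F) :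
    s ∈ (Set.range fun g : GL (Fin 2) F => g⁻¹ * t * g) ↔
      s.1.trace = t.1.trace ∧ s.1.det = t.1.det := by
  constructor
  · rintro ⟨g, rfl⟩
    constructor
    · simpa using Matrix.trace_units_conj' g t.1
    · simpa using Matrix.det_units_conj' g t.1
  · rintro ⟨h1, h2⟩
    have a1 : t.1 1 0 ≠ 0 := fun h => ht (t.1 0 0) (by rw [h]; ring)
    have a2 : s.1 1 0 ≠ 0 := fun h => ht (s.1 0 0) (by
      rw [Matrix.trace_fin_two, Matrix.trace_fin_two] at h1
      rw [Matrix.det_fin_two, Matrix.det_fin_two, h] at h2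
      linear_combination -h2 + (s.1 0 0) * h1)
    let C : GL (Fin 2) F := Matrix.GeneralLinearGroup.mkOfDetNeZero !![0, -t.1.det; 1, t.1.trace]
      (by simpa using t.det_ne_zero)
    obtain ⟨P, hP⟩ := conj_companion t a1 C rfl
    obtain ⟨Q, hQ⟩ := conj_companion s a2 C (by rw [h1, h2]; rfl)
    refine ⟨P * Q⁻¹, ?_⟩
    simp only [hP, hQ]
    group

lemma key_unique (t : GL (Fin 2) F)
    (ht : ∀ c : F, (t.1 0 0 - c) * (t.1 1 1 - c) - t.1 0 1 * t.1 1 0 ≠ 0) (a b : F)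
    (hab : a ≠ 0 ∨ b ≠ 0) :
    ∃! s, s ∈ ((Set.range fun g : GL (Fin 2) F => g⁻¹ * t * g) ∪
          (Subgroup.center (GL (Fin 2) F) : Set (GL (Fin 2) F))) ∧
      s.1 0 0 * a + s.1 0 1 * b = 0 ∧ s.1 1 0 * a + s.1 1 1 * b = 1 := by
  simp only [Set.mem_union, mem_class_iff t ht, SetLike.mem_coe, mem_center_fin_two,
    Matrix.trace_fin_two, Matrix.det_fin_two]
  have hd := det_ne t
  set p := t.1 0 0
  set q := t.1 0 1
  set r := t.1 1 0
  set w := t.1 1 1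
  by_cases ha : a = 0
  · subst ha
    have hb : b ≠ 0 := by simpa using hab
    refine ⟨Matrix.GeneralLinearGroup.mkOfDetNeZero !![b⁻¹, 0; 0, b⁻¹] (by simpa using hb), ?_, ?_⟩
    · simp [Matrix.GeneralLinearGroup.mkOfDetNeZero, hb]
    · rintro s ⟨h1, h2, h3⟩
      have e1 : s.1 0 1 = 0 := by simpa [hb] using h2
      have e2 : s.1 1 1 = b⁻¹ := by
        rw [mul_zero, zero_add] at h3
        exact eq_inv_of_mul_eq_one_left h3
      have e3 : s.1 1 0 = 0 ∧ s.1 0 0 = s.1 1 1 := by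
        rcases h1 with ⟨h4, h5⟩ | h
        · exfalso
          apply ht (s.1 0 0)
          rw [e1] at h5
          linear_combination -h5 + (s.1 0 0) * h4
        · exact h.2
      apply Units.ext
      ext i j
      fin_cases i <;> fin_cases j <;>
        simp [Matrix.GeneralLinearGroup.mkOfDetNeZero, e1, e2, e3.1, e3.2]
  · obtain ⟨M, hM⟩ : ∃ M : GL (Fin 2) F, M.1 =
      !![(p*w-q*r) * b, -(p*w-q*r) * a; (1 - (p + w - (p*w-q*r) * b) * b) / a,
        p + w - (p*w-q*r) * b] := by
      refine ⟨Matrix.GeneralLinearGroup.mkOfDetNeZero _ ?_, rfl⟩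
      rw [Matrix.det_fin_two]
      simp only [Matrix.of_apply, Matrix.cons_val', Matrix.cons_val_zero, Matrix.cons_val_one,
        Matrix.cons_val_fin_one]
      convert hd using 1
      field_simp
      ring
    refine ⟨M, ?_, ?_⟩
    · simp only [hM, Matrix.of_apply, Matrix.cons_val', Matrix.cons_val_zero, Matrix.cons_val_one,
        Matrix.cons_val_fin_one]
      refine ⟨Or.inl ⟨by ring, by field_simp; ring⟩, by ring, by field_simp; ring⟩
    · rintro s ⟨h1, h2, h3⟩
      rcases h1 with ⟨h4, h5⟩ | ⟨h4, h5, h6⟩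
      · have e1 : s.1 0 1 = -(p*w-q*r) * a := by
          linear_combination -a * h5 + s.1 1 1 * h2 - s.1 0 1 * h3
        have e2 : s.1 0 0 = (p*w-q*r) * b := by
          apply mul_right_cancel₀ ha
          rw [e1] at h2
          linear_combination h2
        have e3 : s.1 1 1 = p + w - (p*w-q*r) * b := by
          linear_combination h4 - e2
        have e4 : s.1 1 0 = (1 - (p + w - (p*w-q*r) * b) * b) / a := by
          rw [eq_div_iff ha, ← e3]
          linear_combination h3
        apply Units.ext
        ext i j
        fin_cases i <;> fin_cases j <;>
          simp [hM, e1, e2, e3, e4]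
      · exfalso
        rw [h4] at h2
        rw [h5, ← h6] at h3
        have : s.1 0 0 = 0 := by simpa [ha] using h2
        simp [this] at h3

lemma mem_H_iff (A B : GL (Fin 2) F) : A * B⁻¹ ∈ lowerTriangularH F ↔
    B.1 0 0 * (A⁻¹).1 0 1 + B.1 0 1 * (A⁻¹).1 1 1 = 0 ∧
    B.1 1 0 * (A⁻¹).1 0 1 + B.1 1 1 * (A⁻¹).1 1 1 = 1 := by
  rw [← inv_mem_iff, _root_.mul_inv_rev, inv_inv]
  change (B.1 * (A⁻¹).1) 0 1 = 0 ∧ (B.1 * (A⁻¹).1) 1 1 = 1 ↔ _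
  simp only [Matrix.mul_apply, Fin.sum_univ_two]

lemma col_ne (A : GL (Fin 2) F) : A.1 0 1 ≠ 0 ∨ A.1 1 1 ≠ 0 := by
  have := det_ne A
  by_contra! h
  rw [h.1, h.2] at this
  simp at this

lemma rcc (t : GL (Fin 2) F) : IsRCC ((Set.range fun g : GL (Fin 2) F => g⁻¹ * t * g) ∪
          (Subgroup.center (GL (Fin 2) F) : Set (GL (Fin 2) F))) := by
  rintro s (⟨h, rfl⟩ | hs) g
  · left
    exact ⟨h * g, by group⟩
  · right
    have : g⁻¹ * s * g = s := by
      rw [mul_assoc, ← Subgroup.mem_center_iff.1 hs g]; group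
    rwa [this]

lemma folder (t : GL (Fin 2) F)
    (ht : ∀ c : F, (t.1 0 0 - c) * (t.1 1 1 - c) - t.1 0 1 * t.1 1 0 ≠ 0) :
    IsLoopFolder (lowerTriangularH F) ((Set.range fun g : GL (Fin 2) F => g⁻¹ * t * g) ∪
          (Subgroup.center (GL (Fin 2) F) : Set (GL (Fin 2) F))) := by
  refine ⟨Or.inr (one_mem _), fun g x => ?_⟩
  obtain ⟨s, ⟨hs, h1⟩, h2⟩ := key_unique t ht ((g * x * g⁻¹)⁻¹.1 0 1) ((g * x * g⁻¹)⁻¹.1 1 1)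
    (col_ne _)
  refine ⟨g⁻¹ * s * g, ⟨rcc t s hs g, ?_⟩, ?_⟩
  · rw [← mem_H_iff] at h1
    convert h1 using 1
    group
  · rintro u ⟨hu, h3⟩
    have := h2 (g * u * g⁻¹) ⟨by simpa using rcc t u hu g⁻¹, by
      rw [← mem_H_iff]
      convert h3 using 1
      group⟩
    rw [← this]
    group

lemma card_T [Fintype F] (t : GL (Fin 2) F)
    (ht : ∀ c : F, (t.1 0 0 - c) * (t.1 1 1 - c) - t.1 0 1 * t.1 1 0 ≠ 0) :
    Nat.card ((Set.range fun g : GL (Fin 2) F => g⁻¹ * t * g) ∪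
          (Subgroup.center (GL (Fin 2) F) : Set (GL (Fin 2) F)) : Set (GL (Fin 2) F)) =
        Fintype.card F ^ 2 - 1 := by
  classical
  have hc : Nat.card {v : F × F // v ≠ 0} = Fintype.card F ^ 2 - 1 := by
    rw [Nat.card_eq_fintype_card, Fintype.card_subtype_compl, Fintype.card_prod,
      Fintype.card_subtype_eq, sq]
  rw [← hc]
  have key : ∀ s : GL (Fin 2) F, ∀ a b : F, (s.1 0 0 * a + s.1 0 1 * b = 0 ∧
      s.1 1 0 * a + s.1 1 1 * b = 1) → (s⁻¹).1 0 1 = a ∧ (s⁻¹).1 1 1 = b := by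
    intro s a b ⟨h1, h2⟩
    have h : (s⁻¹).1 * s.1 = 1 := by rw [← Units.val_mul]; simp
    have e : ∀ i j, ((s⁻¹).1 * s.1) i j = (1 : Matrix (Fin 2) (Fin 2) F) i j := fun i j => by rw [h]
    simp only [Matrix.mul_apply, Fin.sum_univ_two] at e
    have e00 := e 0 0
    have e01 := e 0 1
    have e10 := e 1 0
    have e11 := e 1 1
    simp only [Matrix.one_apply_eq, ne_eq, zero_ne_one, one_ne_zero, not_false_eq_true, Matrix.one_apply_ne] at e00 e01 e10 e11
    constructor
    · linear_combination -(s⁻¹).1 0 0 * h1 - (s⁻¹).1 0 1 * h2 + a * e00 + b * e01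
    · linear_combination -(s⁻¹).1 1 0 * h1 - (s⁻¹).1 1 1 * h2 + a * e10 + b * e11
  have key2 : ∀ s : GL (Fin 2) F, s.1 0 0 * (s⁻¹).1 0 1 + s.1 0 1 * (s⁻¹).1 1 1 = 0 ∧
      s.1 1 0 * (s⁻¹).1 0 1 + s.1 1 1 * (s⁻¹).1 1 1 = 1 := by
    intro s
    rw [← mem_H_iff]; simp [one_mem]
  refine Nat.card_eq_of_bijective (fun s => ⟨((s.1⁻¹).1 0 1, (s.1⁻¹).1 1 1), ?_⟩) ⟨?_, ?_⟩
  · have := col_ne s.1⁻¹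
    intro h
    simp only [Prod.mk_eq_zero] at h
    tauto
  · rintro ⟨s, hs⟩ ⟨u, hu⟩ h
    simp only [Subtype.mk.injEq, Prod.mk.injEq] at h
    have := (key_unique t ht _ _ (col_ne s⁻¹)).unique ⟨hs, key2 s⟩
      ⟨hu, by rw [h.1, h.2]; exact key2 u⟩
    exact Subtype.ext this
  · rintro ⟨⟨a, b⟩, hv⟩
    have hv' : a ≠ 0 ∨ b ≠ 0 := by
      by_contra! h
      exact hv (by simp [h.1, h.2])
    obtain ⟨s, ⟨hs, h⟩, -⟩ := key_unique t ht a b hv'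
    refine ⟨⟨s, hs⟩, ?_⟩
    obtain ⟨h1, h2⟩ := key s a b h
    simp only [h1, h2]

/-- elementary lower -/
def lo (x : F) : GL (Fin 2) F := Matrix.GeneralLinearGroup.mkOfDetNeZero !![1, 0; x, 1] (by simp)
/-- elementary upper -/
def up (x : F) : GL (Fin 2) F := Matrix.GeneralLinearGroup.mkOfDetNeZero !![1, x; 0, 1] (by simp)
/-- swap -/
def sw : GL (Fin 2) F := Matrix.GeneralLinearGroup.mkOfDetNeZero !![0, 1; 1, 0] (by simp)
/-- diagonal -/
def dg (x : F) (hx : x ≠ 0) : GL (Fin 2) F :=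
  Matrix.GeneralLinearGroup.mkOfDetNeZero !![x, 0; 0, 1] (by simpa)

lemma lo_val (x : F) : (lo x).1 = !![1, 0; x, 1] := rfl
lemma up_val (x : F) : (up x).1 = !![1, x; 0, 1] := rfl
lemma sw_val : (sw : GL (Fin 2) F).1 = !![0, 1; 1, 0] := rfl
lemma dg_val (x : F) (hx : x ≠ 0) : (dg x hx).1 = !![x, 0; 0, 1] := rfl

lemma faithful : IsFaithfulFolder (lowerTriangularH F) := by
  intro x hx
  have h1 := hx 1
  have h2 := hx sw
  have e : (sw : GL (Fin 2) F)⁻¹ = sw := by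
    rw [inv_eq_iff_mul_eq_one]
    apply Units.ext
    rw [Units.val_mul, sw_val, Units.val_one, Matrix.mul_fin_two, Matrix.one_fin_two]
    simp
  rw [e] at h2
  change ((1 * x * 1⁻¹ : GL (Fin 2) F).1 0 1 = 0 ∧ (1 * x * 1⁻¹ : GL (Fin 2) F).1 1 1 = 1) at h1
  change ((sw * x * sw : GL (Fin 2) F).1 0 1 = 0 ∧ (sw * x * sw : GL (Fin 2) F).1 1 1 = 1) at h2
  rw [Units.val_mul, Units.val_mul, sw_val] at h2
  simp only [Matrix.mul_apply, Fin.sum_univ_two] at h2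
  simp at h1 h2
  apply Units.ext
  ext i j
  fin_cases i <;> fin_cases j <;> simp [h1, h2]

lemma lo_all (N : Subgroup (GL (Fin 2) F)) [hN : N.Normal] (h : GL (Fin 2) F) (hh : h ∈ N)
    (hH : h ∈ lowerTriangularH F) (h1 : h ≠ 1) (x : F) : lo x ∈ N := by
  obtain ⟨e01, e11⟩ : h.1 0 1 = 0 ∧ h.1 1 1 = 1 := hH
  have hd := det_ne h
  rw [e01, e11] at hd
  have ha : h.1 0 0 ≠ 0 := by simpa using hd
  obtain ⟨y, hy0, hy⟩ : ∃ y : F, y ≠ 0 ∧ lo y ∈ N := by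
    by_cases h00 : h.1 0 0 = 1
    · refine ⟨h.1 1 0, ?_, ?_⟩
      · intro h10
        apply h1
        apply Units.ext
        ext i j
        fin_cases i <;> fin_cases j <;> simp [*]
      · convert hh
        apply Units.ext
        rw [lo_val]
        ext i j
        fin_cases i <;> fin_cases j <;> simp [*]
    · refine ⟨(h.1 0 0)⁻¹ - 1, ?_, ?_⟩
      · intro h2
        apply h00
        rw [sub_eq_zero, inv_eq_one] at h2
        exact h2
      · have e1 : h * lo 1 = lo ((h.1 0 0)⁻¹) * h := by
          apply Units.ext
          rw [Units.val_mul, Units.val_mul, lo_val, lo_val]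
          ext i j
          fin_cases i <;> fin_cases j <;> simp [Matrix.mul_apply, Fin.sum_univ_two, e01, e11, ha]
          ring
        have e2 : lo ((h.1 0 0)⁻¹ - 1) * lo 1 = lo ((h.1 0 0)⁻¹) := by
          apply Units.ext
          rw [Units.val_mul, lo_val, lo_val, lo_val]
          ext i j
          fin_cases i <;> fin_cases j <;> simp [Matrix.mul_apply, Fin.sum_univ_two]
        have e3 : lo ((h.1 0 0)⁻¹ - 1) = h * (lo 1 * h⁻¹ * (lo 1)⁻¹) := by
          rw [eq_mul_inv_of_mul_eq e2, eq_mul_inv_of_mul_eq e1.symm]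
          group
        rw [e3]
        exact mul_mem hh (hN.conj_mem _ (inv_mem hh) _)
  by_cases hx : x = 0
  · subst hx
    have : lo (0 : F) = 1 := by
      apply Units.ext
      rw [lo_val, Units.val_one, Matrix.one_fin_two]
    rw [this]
    exact one_mem _
  · have hc : y / x ≠ 0 := div_ne_zero hy0 hx
    have e : dg (y / x) hc * lo y = lo x * dg (y / x) hc := by
      apply Units.ext
      rw [Units.val_mul, Units.val_mul, lo_val, lo_val, dg_val, Matrix.mul_fin_two,
        Matrix.mul_fin_two]
      congr 1
      simp
      field_simp
    rw [eq_mul_inv_of_mul_eq e.symm]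
    exact hN.conj_mem _ hy _

lemma sl_mem (N : Subgroup (GL (Fin 2) F)) [hN : N.Normal] (hlo : ∀ x : F, lo x ∈ N)
    (g : GL (Fin 2) F) (hg : g.1.det = 1) : g ∈ N := by
  have hup : ∀ x : F, up x ∈ N := by
    intro x
    have e : sw * lo x = up x * sw := by
      apply Units.ext
      rw [Units.val_mul, Units.val_mul, lo_val, up_val, sw_val, Matrix.mul_fin_two,
        Matrix.mul_fin_two]
      simp
    rw [eq_mul_inv_of_mul_eq e.symm]
    exact hN.conj_mem _ (hlo x) _
  have main : ∀ g : GL (Fin 2) F, g.1.det = 1 → g.1 1 0 ≠ 0 → g ∈ N := by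
    intro g hg hc
    rw [Matrix.det_fin_two] at hg
    have : g = up ((g.1 0 0 - 1) / g.1 1 0) * lo (g.1 1 0) * up ((g.1 1 1 - 1) / g.1 1 0) := by
      apply Units.ext
      rw [Units.val_mul, Units.val_mul, lo_val, up_val, up_val, Matrix.mul_fin_two,
        Matrix.mul_fin_two]
      ext i j
      fin_cases i <;> fin_cases j <;> simp <;> field_simp <;> try ring
      linear_combination -hg
    rw [this]
    exact mul_mem (mul_mem (hup _) (hlo _)) (hup _)
  by_cases hc : g.1 1 0 = 0
  · have h0 : g.1 0 0 ≠ 0 := by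
      have := det_ne g
      rw [hc] at this
      intro h
      rw [h] at this
      simp at this
    have : lo 1 * g ∈ N := by
      apply main
      · rw [Units.val_mul, Matrix.det_mul, hg, lo_val]; simp
      · rw [Units.val_mul, lo_val]
        simpa [Matrix.mul_apply, Fin.sum_univ_two, hc] using h0
    exact (Subgroup.mul_mem_cancel_left _ (hlo 1)).1 this
  · exact main g hg hc

lemma generates [Fintype F] (hq : 2 < Fintype.card F) (t : GL (Fin 2) F)
    (hord : orderOf t = Fintype.card F ^ 2 - 1)
    (ht : ∀ c : F, (t.1 0 0 - c) * (t.1 1 1 - c) - t.1 0 1 * t.1 1 0 ≠ 0)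
    (hdet : ∀ a : F, a ≠ 0 → ∃ k : ℕ, (t ^ k).1.det = a) :
    Subgroup.closure ((Set.range fun g : GL (Fin 2) F => g⁻¹ * t * g) ∪
          (Subgroup.center (GL (Fin 2) F) : Set (GL (Fin 2) F))) = ⊤ := by
  classical
  set T := ((Set.range fun g : GL (Fin 2) F => g⁻¹ * t * g) ∪
          (Subgroup.center (GL (Fin 2) F) : Set (GL (Fin 2) F))) with hT
  have hrcc : IsRCC T := rcc t
  have hN : (Subgroup.closure T).Normal := by
    have : Subgroup.closure T = Subgroup.normalClosure T := by
      refine le_antisymm Subgroup.closure_le_normalClosure (Subgroup.closure_mono ?_)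
      intro x hx
      rw [Group.mem_conjugatesOfSet_iff] at hx
      obtain ⟨s, hs, hc⟩ := hx
      obtain ⟨g, rfl⟩ := isConj_iff.1 hc
      simpa using hrcc s hs g⁻¹
    rw [this]
    infer_instance
  have htN : t ∈ Subgroup.closure T := Subgroup.subset_closure (Or.inl ⟨1, by simp⟩)
  obtain ⟨c, hc0, hc1⟩ : ∃ c : F, c ≠ 0 ∧ c ≠ 1 := by
    have h := Finset.exists_mem_notMem_of_card_lt_card (s := ({0, 1} : Finset F))
      (t := Finset.univ) (lt_of_le_of_lt Finset.card_le_two (by simpa using hq))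
    obtain ⟨c, -, hc⟩ := h
    simp at hc
    exact ⟨c, hc.1, hc.2⟩
  obtain ⟨z, hz⟩ : ∃ z : GL (Fin 2) F, z.1 = !![c, 0; 0, c] :=
    ⟨Matrix.GeneralLinearGroup.mkOfDetNeZero _ (by simpa using hc0), rfl⟩
  have hzc : z ∈ Subgroup.center (GL (Fin 2) F) := by
    rw [mem_center_fin_two, hz]; simp
  have hzN : z ∈ Subgroup.closure T := Subgroup.subset_closure (Or.inr hzc)
  obtain ⟨s, ⟨hs, hs2⟩, -⟩ := (folder t ht).2 1 (z * t)
  have hs3 : z * t * s⁻¹ ∈ lowerTriangularH F := by simpa using hs2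
  have hsN : z * t * s⁻¹ ∈ Subgroup.closure T :=
    mul_mem (mul_mem hzN htN) (inv_mem (Subgroup.subset_closure hs))
  have hne : z * t * s⁻¹ ≠ 1 := by
    intro h
    rw [mul_inv_eq_one] at h
    subst h
    rcases hs with hs | hs
    · rw [mem_class_iff t ht] at hs
      obtain ⟨h1, h2⟩ := hs
      rw [Units.val_mul, hz, Matrix.trace_fin_two, Matrix.trace_fin_two] at h1
      simp [Matrix.mul_apply, Fin.sum_univ_two] at h1
      have h3 : t.1 0 0 + t.1 1 1 = 0 := by
        have : (c - 1) * (t.1 0 0 + t.1 1 1) = 0 := by linear_combination h1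
        exact (mul_eq_zero.1 this).resolve_left (sub_ne_zero.2 hc1)
      have h4 : t ^ 2 ∈ Subgroup.center (GL (Fin 2) F) := by
        rw [mem_center_fin_two, sq, Units.val_mul]
        simp only [Matrix.mul_apply, Fin.sum_univ_two]
        refine ⟨?_, ?_, ?_⟩
        · linear_combination t.1 0 1 * h3
        · linear_combination t.1 1 0 * h3
        · linear_combination (t.1 0 0 - t.1 1 1) * h3
      rw [Matrix.GeneralLinearGroup.center_eq_range_scalar] at h4
      obtain ⟨a, ha⟩ := h4
      have ha1 : a ^ (Fintype.card F - 1) = 1 := by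
        apply Units.ext
        rw [Units.val_pow_eq_pow_val, FiniteField.pow_card_sub_one_eq_one _ a.ne_zero]
        rfl
      have h5 : t ^ (2 * (Fintype.card F - 1)) = 1 := by
        rw [pow_mul, ← ha, ← map_pow, ha1, map_one]
      have h6 := orderOf_dvd_of_pow_eq_one h5
      rw [hord] at h6
      have h7 := Nat.le_of_dvd (by omega) h6
      have h8 : Fintype.card F * 3 ≤ Fintype.card F ^ 2 := by nlinarith
      omega
    · have h1 : t ∈ Subgroup.center (GL (Fin 2) F) := (Subgroup.mul_mem_cancel_left _ hzc).1 hs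
      rw [mem_center_fin_two] at h1
      apply ht (t.1 0 0)
      rw [h1.1]; ring
  have hlo := lo_all _ _ hsN hs3 hne
  rw [eq_top_iff]
  intro g _
  obtain ⟨k, hk⟩ := hdet g.1.det g.det_ne_zero
  have : (t ^ k)⁻¹ * g ∈ Subgroup.closure T := by
    apply sl_mem _ hlo
    have h : (t ^ k).1.det * ((t ^ k)⁻¹ * g).1.det = g.1.det := by
      rw [← Matrix.det_mul, ← Units.val_mul, mul_inv_cancel_left]
    rw [hk] at h
    exact mul_left_cancel₀ g.det_ne_zero (by rw [h, mul_one])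
  exact (Subgroup.mul_mem_cancel_left _ (inv_mem (pow_mem htN k))).1 this

end helpers

/-- There is an RCC loop of order `q² - 1` with right multiplication group `GL(2, q)`:
taking `t` a Singer cycle and `T` its conjugacy class together with the scalar matrices,
`(GL(2, F), H, T)` is a faithful RCC loop folder of order `q² - 1` with `⟨T⟩ = G`. -/
theorem stmt_6 (F : Type*) [Field F] [Fintype F] (hq : 2 < Fintype.card F) :
    ∃ t : GL (Fin 2) F, orderOf t = Fintype.card F ^ 2 - 1 ∧
      (1 : GL (Fin 2) F) ∈
        ((Set.range fun g : GL (Fin 2) F => g⁻¹ * t * g) ∪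
          (Subgroup.center (GL (Fin 2) F) : Set (GL (Fin 2) F))) ∧
      Nat.card ((Set.range fun g : GL (Fin 2) F => g⁻¹ * t * g) ∪
          (Subgroup.center (GL (Fin 2) F) : Set (GL (Fin 2) F)) : Set (GL (Fin 2) F)) =
        Fintype.card F ^ 2 - 1 ∧
      IsRCC ((Set.range fun g : GL (Fin 2) F => g⁻¹ * t * g) ∪
          (Subgroup.center (GL (Fin 2) F) : Set (GL (Fin 2) F))) ∧
      IsLoopFolder (lowerTriangularH F)
        ((Set.range fun g : GL (Fin 2) F => g⁻¹ * t * g) ∪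
          (Subgroup.center (GL (Fin 2) F) : Set (GL (Fin 2) F))) ∧
      Subgroup.closure ((Set.range fun g : GL (Fin 2) F => g⁻¹ * t * g) ∪
          (Subgroup.center (GL (Fin 2) F) : Set (GL (Fin 2) F))) = ⊤ ∧
      IsFaithfulFolder (lowerTriangularH F) := by

  obtain ⟨t, h1, h2, h3⟩ := singer_exists F
  exact ⟨t, h1, Or.inr (one_mem _), card_T t h2, rcc t, folder t h2, generates hq t h1 h2 h3,
    faithful⟩
end

section
/- Let (G, H, T) be a loop folder such that T is invariant under conjugation by H (i.e., h⁻¹th ∈ T for all t ∈ T and h ∈ H). Suppose t ∈ T is such that the right coset Ht is also a left coset of H in G, i.e., there exists g ∈ G with Ht = gH as subsets of G (this holds in particular if t normalizes H). Then t commutes with every element of H. -/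
open Pointwise

/-- If `T` is invariant under conjugation by `H` and `t ∈ T` is such that the right coset
`Ht` is also a left coset `gH`, then `t` commutes with every element of `H`. -/
theorem stmt_7 {G : Type*} [Group G] [Finite G] (H : Subgroup G) (T : Set G)
    (hLF : IsLoopFolder H T)
    (hHinv : ∀ t ∈ T, ∀ h ∈ H, h⁻¹ * t * h ∈ T)
    (t : G) (ht : t ∈ T) (g : G)
    (hcoset : (H : Set G) * {t} = {g} * (H : Set G)) :
    ∀ h ∈ H, t * h = h * t := by
  intro h hh
  have h1 : t ∈ {g} * (H : Set G) := by
    rw [← hcoset]; exact ⟨1, H.one_mem, t, rfl, one_mul t⟩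
  obtain ⟨g', hg', k, hk, hgk⟩ := h1
  have hgk' : g * k = t := by
    rw [← Set.mem_singleton_iff.mp hg']; exact hgk
  have h2 : t * h ∈ (H : Set G) * {t} := by
    rw [hcoset]
    exact ⟨_, rfl, k * h, H.mul_mem hk hh, by simp [← hgk', mul_assoc]⟩
  obtain ⟨m, hm, t', ht', hmt⟩ := h2
  have hmt' : m * t = t * h := by
    rw [Set.mem_singleton_iff.mp ht'] at hmt; exact hmt
  have h3 : h⁻¹ * t * h = t := by
    refine (hLF.2 1 t).unique ⟨hHinv t ht h hh, ?_⟩ ⟨ht, by simp⟩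
    have e : (1 : G) * (t * (h⁻¹ * t * h)⁻¹) * 1⁻¹ = m⁻¹ * h := by
      rw [mul_assoc h⁻¹ t h, ← hmt']; group
    rw [e]
    exact H.mul_mem (H.inv_mem hm) hh
  calc t * h = h * (h⁻¹ * t * h) := by group
    _ = h * t := by rw [h3]
end

section
/- Let (G, H, T) be an RCC loop folder and let K be a subgroup of G containing both H and the commutator subgroup G' of G (i.e., HG' ≤ K). Then for every t ∈ T the conjugacy class of t in G has at most |K : H| elements; that is, |G : C_G(t)| ≤ |K : H| for all t ∈ T. -/
open scoped commutatorElement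

theorem rcc_aux {G : Type*} [Group G] (x y t : G) (h : x * t * x⁻¹ = y * t * y⁻¹) :
    x⁻¹ * y * t = t * (x⁻¹ * y) := by
  have h4 : x⁻¹ * (x * t * x⁻¹) * y = x⁻¹ * (y * t * y⁻¹) * y := by rw [h]
  have h5 : x⁻¹ * (x * t * x⁻¹) * y = t * (x⁻¹ * y) := by group
  have h6 : x⁻¹ * (y * t * y⁻¹) * y = x⁻¹ * y * t := by group
  rw [← h5, ← h6, h4]

/-- In an RCC loop folder, if `HG' ≤ K`, then the conjugacy classes of elements of `T`
have length at most `|K : H|`. -/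
theorem stmt_8 {G : Type*} [Group G] [Finite G] (H K : Subgroup G) (T : Set G)
    (hLF : IsLoopFolder H T) (hRCC : IsRCC T)
    (hHK : H ≤ K) (hGK : commutator G ≤ K) :
    ∀ t ∈ T, (Subgroup.centralizer {t}).index ≤ H.relIndex K := by
  intro t ht
  have hmem : ∀ g : G, t * (g * t * g⁻¹)⁻¹ ∈ K := by
    intro g
    apply hGK
    have h : ⁅t, g⁆ ∈ commutator G :=
      Subgroup.commutator_mem_commutator (Subgroup.mem_top t) (Subgroup.mem_top g)
    have e : t * (g * t * g⁻¹)⁻¹ = ⁅t, g⁆ := by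
      rw [commutatorElement_def]; group
    rw [e]; exact h
  have hT : ∀ g : G, g * t * g⁻¹ ∈ T := by
    intro g
    have := hRCC t ht g⁻¹
    simpa using this
  let f : G ⧸ Subgroup.centralizer {t} → K ⧸ H.subgroupOf K :=
    fun q => QuotientGroup.mk ⟨t * (q.out * t * q.out⁻¹)⁻¹, hmem q.out⟩
  have hf : Function.Injective f := by
    intro a b hab
    have h1 := QuotientGroup.eq.1 hab
    rw [Subgroup.mem_subgroupOf] at h1
    have h2 : (a.out * t * a.out⁻¹) * (b.out * t * b.out⁻¹)⁻¹ ∈ H := by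
      have e : (a.out * t * a.out⁻¹) * (b.out * t * b.out⁻¹)⁻¹ =
        (t * (a.out * t * a.out⁻¹)⁻¹)⁻¹ * (t * (b.out * t * b.out⁻¹)⁻¹) := by group
      rw [e]; exact h1
    have h3 : a.out * t * a.out⁻¹ = b.out * t * b.out⁻¹ := by
      refine (hLF.2 1 (a.out * t * a.out⁻¹)).unique ⟨hT _, ?_⟩ ⟨hT _, ?_⟩
      · simp [H.one_mem]
      · simpa using h2
    rw [← a.out_eq', ← b.out_eq']
    refine QuotientGroup.eq.2 ?_
    rw [Subgroup.mem_centralizer_singleton_iff]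
    first | exact rcc_aux _ _ _ h3 | exact (rcc_aux _ _ _ h3).symm
  exact Nat.card_le_card_of_injective f hf
end

section
/- Let p be a prime and let G be a subgroup of the symmetric group S_p on p points such that p divides |G|. Let g ∈ G with g ≠ 1. Then: (a) if p does not divide the order of g, then p divides the index |G : C_G(g)| of the centralizer of g in G; (b) if p divides the order of g, then |C_G(g)| = p. -/
theorem aux_comm {X : Type*} [Fintype X] (hp : (Fintype.card X).Prime)
    (G : Subgroup (Equiv.Perm X)) (s t : G) (hs : orderOf s = Fintype.card X)
    (hst : s * t = t * s) : t ∈ Subgroup.zpowers s := by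
  classical
  have hs' : orderOf (s : Equiv.Perm X) = Fintype.card X := by
    rw [Subgroup.orderOf_coe, hs]
  have hc : (s : Equiv.Perm X).IsCycle := Equiv.Perm.isCycle_of_prime_order'' hp hs'
  have hu : (s : Equiv.Perm X).support = Finset.univ := by
    rw [← Finset.card_eq_iff_eq_univ, ← hc.orderOf, hs']
  have hm : ∀ x, (s : Equiv.Perm X) x ≠ x := fun x => by
    rw [← Equiv.Perm.mem_support, hu]; exact Finset.mem_univ x
  have hne : Nonempty X := Fintype.card_pos_iff.mp hp.pos
  obtain ⟨x⟩ := hne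
  obtain ⟨k, hk⟩ := hc.exists_zpow_eq (hm x) (hm ((t : Equiv.Perm X) x))
  refine ⟨k, ?_⟩
  apply Subtype.ext
  ext y
  obtain ⟨i, rfl⟩ := hc.exists_zpow_eq (hm x) (hm y)
  have hcomm : Commute (s : Equiv.Perm X) (t : Equiv.Perm X) := congrArg Subtype.val hst
  have h1 := congrArg (fun f : Equiv.Perm X => f x) (hcomm.zpow_left i).eq
  simp only [Equiv.Perm.mul_apply] at h1
  rw [← h1, ← hk]
  simp only [Subgroup.coe_zpow, ← Equiv.Perm.mul_apply, ← zpow_add, add_comm]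

/-- For `G ≤ S_p` with `p ∣ |G|` and `1 ≠ g ∈ G`: (a) if `p ∤ |g|` then
`p ∣ |G : C_G(g)|`; (b) if `p ∣ |g|` then `|C_G(g)| = p`. -/
theorem stmt_9 (p : ℕ) (hp : p.Prime) (X : Type*) [Fintype X] (hX : Fintype.card X = p)
    (G : Subgroup (Equiv.Perm X)) (hpG : p ∣ Nat.card G)
    (g : G) (hg : g ≠ 1) :
    (¬ p ∣ orderOf g → p ∣ (Subgroup.centralizer ({g} : Set G)).index) ∧
    (p ∣ orderOf g → Nat.card (Subgroup.centralizer ({g} : Set G)) = p) := by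
  subst hX
  have key : ∀ c : G, orderOf c = Fintype.card X → c * g = g * c →
      orderOf g = Fintype.card X := by
    intro c hc hcg
    have h := orderOf_dvd_of_mem_zpowers (aux_comm hp G c g hc hcg)
    rw [hc] at h
    exact (hp.eq_one_or_self_of_dvd _ h).resolve_left (by rwa [orderOf_eq_one_iff])
  constructor
  · intro h
    by_contra hi
    rw [← Subgroup.card_mul_index (Subgroup.centralizer ({g} : Set G))] at hpG
    have h2 := (hp.dvd_mul.mp hpG).resolve_right hi
    haveI := Fact.mk hp
    obtain ⟨c, hc⟩ := exists_prime_orderOf_dvd_card' _ h2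
    apply h
    rw [key c (by rw [Subgroup.orderOf_coe, hc])
      (Subgroup.mem_centralizer_singleton_iff.mp c.2)]
  · intro h
    have ho : orderOf g = Fintype.card X := by
      obtain ⟨m, hm⟩ := h
      have hpos := orderOf_pos g
      refine key (g ^ m) ?_ ((Commute.refl g).pow_left m).eq
      have hm0 : m ≠ 0 := by rintro rfl; rw [mul_zero] at hm; omega
      rw [orderOf_pow_of_dvd hm0 ⟨_, by rw [hm, mul_comm]⟩, hm,
        Nat.mul_div_cancel _ (Nat.pos_of_ne_zero hm0)]
    have he : Subgroup.centralizer ({g} : Set G) = Subgroup.zpowers g := by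
      apply le_antisymm
      · intro t ht
        exact aux_comm hp G g t ho (Subgroup.mem_centralizer_singleton_iff.mp ht).symm
      · rw [Subgroup.zpowers_le, Subgroup.mem_centralizer_singleton_iff]
    rw [he, Nat.card_zpowers, ho]
end

section
/- Let p and q be distinct primes, let (G, H, T) be a faithful RCC loop folder of order pq with ⟨T⟩ = G, and let K be a subgroup of G with H ≤ K ≤ G, |G : K| = q and |K : H| = p. Set T₁ := T ∩ K, K₁ := ⟨T₁⟩ and H₁ := H ∩ K₁. Then: (K₁, H₁, T₁) is an RCC loop folder of order p (in particular |T₁| = p, T₁ is invariant under conjugation by K₁, and T₁ is a transversal for the right cosets of every K₁-conjugate of H₁ in K₁); K₁ is abelian; K₁ is a normal subgroup of K; K = HK₁; and H₁ is a normal subgroup of K. -/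
open Pointwise

theorem aux_index {G : Type*} [Group G] (H K L : Subgroup G) (T : Set G)
    (hLF : IsLoopFolder H T) (hHK : H ≤ K) (hLK : L ≤ K) (hTL : T ∩ (K : Set G) ⊆ L) :
    H.relIndex L = Nat.card (T ∩ (K : Set G) : Set G) := by
  have hc : Subgroup.IsComplement ((H.subgroupOf L : Subgroup L) : Set L)
      ((Subtype.val : L → G) ⁻¹' (T ∩ (K : Set G))) := by
    rw [Subgroup.isComplement_iff_existsUnique_mul_inv_mem]
    intro x
    obtain ⟨t, ⟨ht, h1⟩, hu⟩ := hLF.2 1 (x : G)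
    simp only [one_mul, inv_one, mul_one] at h1 hu
    have htK : t ∈ K := by
      have := K.mul_mem (K.inv_mem (hHK h1)) (hLK x.2)
      simpa using this
    refine ⟨⟨⟨t, hTL ⟨ht, htK⟩⟩, ⟨ht, htK⟩⟩, ?_, ?_⟩
    · simpa [Subgroup.mem_subgroupOf] using h1
    · rintro ⟨⟨s, hsL⟩, hs⟩ h
      have := hu s ⟨hs.1, by simpa [Subgroup.mem_subgroupOf] using h⟩
      subst this
      rfl
  have h1 := hc.card_right
  rw [Subgroup.relIndex, ← h1]
  exact Nat.card_preimage_of_injective Subtype.val_injective (by simpa using hTL)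

theorem aux_comm_s11 {A : Type*} [Group A] [Finite A] (p : ℕ) (hp : p.Prime) (B : Subgroup A)
    (hB : B.index = p) (S : Set A) (hS : Nat.card S = p) (h1 : (1 : A) ∈ S)
    (hconj : ∀ t ∈ S, ∀ g : A, g * t * g⁻¹ ∈ S) (hgen : Subgroup.closure S = ⊤)
    (hinj : ∀ s ∈ S, ∀ t ∈ S, s * t⁻¹ ∈ B → s = t) : ∀ a b : A, a * b = b * a := by
  haveI : Fact p.Prime := ⟨hp⟩
  have hcent : ∀ z : A, (∀ s ∈ S, z * s = s * z) → z ∈ Subgroup.center A := by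
    intro z hz
    have : Subgroup.closure S ≤ Subgroup.centralizer {z} := by
      rw [Subgroup.closure_le]
      intro s hs
      rw [SetLike.mem_coe, Subgroup.mem_centralizer_singleton_iff]
      exact (hz s hs).symm
    rw [hgen] at this
    rw [Subgroup.mem_center_iff]
    intro g
    exact Subgroup.mem_centralizer_singleton_iff.1 (this (Subgroup.mem_top g))
  obtain ⟨P⟩ : Nonempty (Sylow p A) := inferInstance
  letI act : MulAction P S :=
    { smul := fun g s => ⟨g * s * (g : A)⁻¹, hconj s s.2 g⟩
      one_smul := fun s => Subtype.ext (by
        change ((1 : P) : A) * s * ((1 : P) : A)⁻¹ = s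
        simp)
      mul_smul := fun g h s => Subtype.ext (by
        change ((g * h : P) : A) * s * ((g * h : P) : A)⁻¹ = g * (h * s * (h : A)⁻¹) * (g : A)⁻¹
        simp [mul_assoc]) }
  have hsm : ∀ (g : P) (s : S), ((g • s : S) : A) = g * s * (g : A)⁻¹ := fun _ _ => rfl
  have hmod := P.isPGroup'.card_modEq_card_fixedPoints S
  have hfin : (MulAction.fixedPoints P S) = Set.univ := by
    have hpos : 0 < Nat.card (MulAction.fixedPoints P S) := by
      haveI : Nonempty (MulAction.fixedPoints P S) :=
        ⟨⟨⟨1, h1⟩, fun g => Subtype.ext (by rw [hsm]; simp)⟩⟩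
      exact Nat.card_pos
    have hdvd : p ∣ Nat.card (MulAction.fixedPoints P S) := by
      rw [hS] at hmod
      exact (Nat.modEq_zero_iff_dvd).1 (hmod.symm.trans (by simp [Nat.ModEq]))
    have hle := Nat.le_of_dvd hpos hdvd
    apply Set.eq_of_subset_of_ncard_le (Set.subset_univ _)
    rw [Set.ncard_univ, hS]
    exact hle
  have hPc : (P : Subgroup A) ≤ Subgroup.center A := by
    intro z hz
    apply hcent
    intro s hs
    have hm : (⟨s, hs⟩ : S) ∈ MulAction.fixedPoints P S := by rw [hfin]; trivial
    have := congrArg Subtype.val (hm ⟨z, hz⟩)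
    rw [hsm] at this
    exact mul_inv_eq_iff_eq_mul.1 this
  have hsup : B ⊔ P = ⊤ := by
    have hd : (B ⊔ (P : Subgroup A)).index ∣ p := (Subgroup.index_dvd_of_le le_sup_left).trans hB.dvd
    rcases (Nat.dvd_prime hp).1 hd with h | h
    · exact Subgroup.index_eq_one.1 h
    · exfalso
      apply P.not_dvd_index
      exact h.symm.dvd.trans (Subgroup.index_dvd_of_le le_sup_right)
  have hnorm : B.Normal := by
    rw [← Subgroup.normalizer_eq_top_iff, eq_top_iff, ← hsup, sup_le_iff]
    exact ⟨Subgroup.le_normalizer, hPc.trans (Subgroup.center_le_normalizer _)⟩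
  have hBc : B ≤ Subgroup.center A := by
    intro b hb
    apply hcent
    intro s hs
    have := hinj (b * s * b⁻¹) (hconj s hs b) s hs (by
      have := B.mul_mem hb (hnorm.conj_mem _ (B.inv_mem hb) s)
      simpa [mul_assoc] using this)
    exact mul_inv_eq_iff_eq_mul.1 this
  have htop : (⊤ : Subgroup A) ≤ Subgroup.center A := by
    rw [← hsup]; exact sup_le hBc hPc
  intro a b
  exact (Subgroup.mem_center_iff.1 (htop (Subgroup.mem_top b)) a)

/-- First properties: with `T₁ := T ∩ K`, `K₁ := ⟨T₁⟩` and `H₁ := H ⊓ K₁`, the triple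
`(K₁, H₁, T₁)` is an RCC loop folder of order `p`, `K₁` is abelian and normal in `K`,
`K = HK₁`, and `H₁` is normal in `K`. -/
theorem stmt_11 {G : Type*} [Group G] [Finite G] (p q : ℕ) (hp : p.Prime) (hq : q.Prime)
    (hpq : p ≠ q) (H K : Subgroup G) (T : Set G)
    (hLF : IsLoopFolder H T) (hRCC : IsRCC T) (hFaith : IsFaithfulFolder H)
    (hord : Nat.card T = p * q) (hgen : Subgroup.closure T = ⊤)
    (hHK : H ≤ K) (hGK : K.index = q) (hKH : H.relIndex K = p) :
    Nat.card (T ∩ (K : Set G) : Set G) = p ∧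
    (1 : G) ∈ T ∩ (K : Set G) ∧
    (∀ t ∈ T ∩ (K : Set G), ∀ k ∈ Subgroup.closure (T ∩ (K : Set G)),
      k⁻¹ * t * k ∈ T ∩ (K : Set G)) ∧
    (∀ k ∈ Subgroup.closure (T ∩ (K : Set G)), ∀ x ∈ Subgroup.closure (T ∩ (K : Set G)),
      ∃! t, t ∈ T ∩ (K : Set G) ∧
        k * (x * t⁻¹) * k⁻¹ ∈ H ⊓ Subgroup.closure (T ∩ (K : Set G))) ∧
    (∀ a ∈ Subgroup.closure (T ∩ (K : Set G)), ∀ b ∈ Subgroup.closure (T ∩ (K : Set G)),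
      a * b = b * a) ∧
    (∀ k ∈ K, ∀ x ∈ Subgroup.closure (T ∩ (K : Set G)),
      k⁻¹ * x * k ∈ Subgroup.closure (T ∩ (K : Set G))) ∧
    (H : Set G) * (Subgroup.closure (T ∩ (K : Set G)) : Set G) = (K : Set G) ∧
    (∀ k ∈ K, ∀ x ∈ H ⊓ Subgroup.closure (T ∩ (K : Set G)),
      k⁻¹ * x * k ∈ H ⊓ Subgroup.closure (T ∩ (K : Set G))) := by
  have hLK : Subgroup.closure (T ∩ (K : Set G)) ≤ K :=
    (Subgroup.closure_le K).2 Set.inter_subset_right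
  have hTL : T ∩ (K : Set G) ⊆ Subgroup.closure (T ∩ (K : Set G)) := Subgroup.subset_closure
  have hcard : Nat.card (T ∩ (K : Set G) : Set G) = p := by
    rw [← aux_index H K K T hLF hHK le_rfl Set.inter_subset_right, hKH]
  have hidx := aux_index H K _ T hLF hHK hLK hTL
  have hone : (1 : G) ∈ T ∩ (K : Set G) := ⟨hLF.1, K.one_mem⟩
  have hconj : ∀ t ∈ T ∩ (K : Set G), ∀ k ∈ K, k⁻¹ * t * k ∈ T ∩ (K : Set G) :=
    fun t ht k hk => ⟨hRCC t ht.1 k, K.mul_mem (K.mul_mem (K.inv_mem hk) ht.2) hk⟩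
  have hnorm : ∀ k ∈ K, ∀ x ∈ Subgroup.closure (T ∩ (K : Set G)),
      k⁻¹ * x * k ∈ Subgroup.closure (T ∩ (K : Set G)) := by
    intro k hk x hx
    induction hx using Subgroup.closure_induction with
    | mem x hx => exact hTL (hconj x hx k hk)
    | one => simp
    | mul x y _ _ h1 h2 =>
      have := Subgroup.mul_mem _ h1 h2
      simpa [mul_assoc] using this
    | inv x _ h =>
      have := Subgroup.inv_mem _ h
      simpa [mul_assoc] using this
  have hfac : ∀ x ∈ K, ∃ t ∈ T ∩ (K : Set G), x * t⁻¹ ∈ H := by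
    intro x hx
    obtain ⟨t, ⟨ht, h1⟩, -⟩ := hLF.2 1 x
    simp only [one_mul, inv_one, mul_one] at h1
    have := K.mul_mem (K.inv_mem (hHK h1)) hx
    exact ⟨t, ⟨ht, by simpa using this⟩, h1⟩
  have hcomm : ∀ a ∈ Subgroup.closure (T ∩ (K : Set G)),
      ∀ b ∈ Subgroup.closure (T ∩ (K : Set G)), a * b = b * a := by
    have := aux_comm_s11 p hp (H.subgroupOf (Subgroup.closure (T ∩ (K : Set G))))
      (hidx.trans hcard) (Subtype.val ⁻¹' (T ∩ (K : Set G)))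
      (by rw [Nat.card_preimage_of_injective Subtype.val_injective (by simpa using hTL), hcard])
      hone
      (fun t ht g => by
        have := hconj t ht (g : G)⁻¹ (K.inv_mem (hLK g.2))
        simpa using this)
      (Subgroup.closure_closure_coe_preimage)
      (fun s hs t ht h => by
        rw [Subgroup.mem_subgroupOf] at h
        obtain ⟨u, -, hu⟩ := hLF.2 1 (s : G)
        apply Subtype.ext
        rw [hu s ⟨hs.1, by simp⟩, hu t ⟨ht.1, by simpa using h⟩])
    intro a ha b hb
    exact congrArg Subtype.val (this ⟨a, ha⟩ ⟨b, hb⟩)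
  refine ⟨hcard, hone, fun t ht k hk => hconj t ht k (hLK hk), ?_, hcomm, hnorm, ?_, ?_⟩
  · intro k hk x hx
    obtain ⟨t, ⟨ht, h1⟩, hu⟩ := hLF.2 k x
    have htK : t ∈ K := by
      have h2 := hHK h1
      have h3 := K.mul_mem (K.mul_mem (K.inv_mem (hLK hk)) h2) (hLK hk)
      have h4 := K.mul_mem (K.inv_mem h3) (hLK hx)
      simpa [mul_assoc] using h4
    have hk1 := hTL ⟨ht, htK⟩
    refine ⟨t, ⟨⟨ht, htK⟩, h1, ?_⟩, fun s hs => hu s ⟨hs.1.1, hs.2.1⟩⟩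
    exact Subgroup.mul_mem _ (Subgroup.mul_mem _ hk
      (Subgroup.mul_mem _ hx (Subgroup.inv_mem _ hk1))) (Subgroup.inv_mem _ hk)
  · ext x
    constructor
    · rintro ⟨h, hh, y, hy, rfl⟩
      exact K.mul_mem (hHK hh) (hLK hy)
    · intro hx
      obtain ⟨t, ht, h⟩ := hfac x hx
      exact ⟨x * t⁻¹, h, t, hTL ht, by simp⟩
  · intro k hk x hx
    refine ⟨?_, hnorm k hk x hx.2⟩
    obtain ⟨t, ht, h⟩ := hfac k hk
    have hy : (k * t⁻¹)⁻¹ * x * (k * t⁻¹) ∈ H := H.mul_mem (H.mul_mem (H.inv_mem h) hx.1) h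
    have hy2 := hnorm _ (hHK h) x hx.2
    have hc := hcomm _ hy2 t (hTL ht)
    have e : k⁻¹ * x * k = t⁻¹ * (((k * t⁻¹)⁻¹ * x * (k * t⁻¹)) * t) := by group
    rw [e, hc, inv_mul_cancel_left]
    exact hy
end
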